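/- Let Γ be a non-elementary hyperbolic group, (X,d) ∈ D(Γ), d_ε a visual metric on ∂X, and μ a symmetric probability measure with an exponential moment whose support generates Γ, such that d_G ∈ D(Γ). Let ν be the harmonic measure and ρ a quasiconformal measure on (∂X,d_ε). If h = ℓv — where h is the asymptotic entropy, ℓ the rate of escape with respect to d, and v the logarithmic volume growth of (X,d) — then ρ and ν are equivalent measures. -/

import Mathlib

open Filter MeasureTheory Topology Metric Set
open scoped ENNReal

noncomputable section

namespace GHM

/-! ### Coarse geometry of distance functions -/

/-- The Gromov product `(x|y)_w` of `x` and `y` seen from `w`, for a distance function `d`. -/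
def gromov {X : Type*} (d : X → X → ℝ) (w x y : X) : ℝ :=
  (d x w + d y w - d x y) / 2

/-- `d` is `δ`-hyperbolic (four point condition on Gromov products). -/
def IsHyperbolicWith {X : Type*} (d : X → X → ℝ) (δ : ℝ) : Prop :=
  ∀ w x y z : X, min (gromov d w x y) (gromov d w x z) - δ ≤ gromov d w y z

/-- `d` is Gromov hyperbolic. -/
def IsHyperbolic {X : Type*} (d : X → X → ℝ) : Prop :=
  ∃ δ : ℝ, 0 ≤ δ ∧ IsHyperbolicWith d δ

/-- `d` is a genuine metric. -/
structure IsMetricFun {X : Type*} (d : X → X → ℝ) : Prop where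
  refl : ∀ x, d x x = 0
  pos : ∀ x y, x ≠ y → 0 < d x y
  symm : ∀ x y, d x y = d y x
  triangle : ∀ x y z, d x z ≤ d x y + d y z

/-- `f` is a `(Λ,c)`-quasi-isometric embedding from `(X,dX)` to `(Y,dY)`. -/
def QIEmbed {X Y : Type*} (dX : X → X → ℝ) (dY : Y → Y → ℝ)
    (f : X → Y) (Λ c : ℝ) : Prop :=
  ∀ x x' : X, dX x x' / Λ - c ≤ dY (f x) (f x') ∧ dY (f x) (f x') ≤ Λ * dX x x' + c

/-- `(X,dX)` and `(Y,dY)` are quasi-isometric. -/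
def QuasiIsometric {X Y : Type*} (dX : X → X → ℝ) (dY : Y → Y → ℝ) : Prop :=
  ∃ (f : X → Y) (Λ c C : ℝ), 1 ≤ Λ ∧ 0 ≤ c ∧ 0 ≤ C ∧
    QIEmbed dX dY f Λ c ∧ ∀ y : Y, ∃ x : X, dY (f x) y ≤ C

variable {G : Type*} [Group G]

/-- Word length of `g` with respect to the (symmetrized) finite set `S`. -/
def wordLength (S : Finset G) (g : G) : ℕ :=
  sInf {n : ℕ | ∃ l : List G, l.length = n ∧ (∀ a ∈ l, a ∈ S ∨ a⁻¹ ∈ S) ∧ l.prod = g}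

/-- The word metric associated with a finite generating set `S`. -/
def wordDist (S : Finset G) (x y : G) : ℝ := wordLength S (x⁻¹ * y)

/-- `S` generates the group. -/
def Generates (S : Finset G) : Prop := Subgroup.closure (S : Set G) = ⊤

/-- The standard metric on `ℤ`. -/
def intDist (m n : ℤ) : ℝ := |(m : ℝ) - (n : ℝ)|

/-- `G` is a non-elementary hyperbolic group: finitely generated, its word metrics are
Gromov hyperbolic, it is infinite, and it is not quasi-isometric to `ℤ`. -/
def NonElemHyperbolic (G : Type*) [Group G] : Prop :=
  Infinite G ∧ (∃ S : Finset G, Generates S) ∧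
    ∀ S : Finset G, Generates S →
      IsHyperbolic (wordDist S) ∧ ¬ QuasiIsometric (wordDist S) intDist

/-- `d` is invariant under left translations. -/
def LeftInvariant (d : G → G → ℝ) : Prop := ∀ g x y : G, d (g * x) (g * y) = d x y

/-- `d` belongs to the class `𝒟(Γ)`: it is a left-invariant Gromov hyperbolic metric on the
group, quasi-isometric to a word metric of a finite generating set. -/
def MemD (d : G → G → ℝ) : Prop :=
  IsMetricFun d ∧ LeftInvariant d ∧ IsHyperbolic d ∧
    ∃ S : Finset G, Generates S ∧ QuasiIsometric d (wordDist S)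

/-! ### Random walks -/

/-- `μ` is (the density of) a probability measure on the (countable) group. -/
def IsProbDensity (μ : G → ℝ) : Prop := (∀ g, 0 ≤ μ g) ∧ HasSum μ 1

/-- `μ` is symmetric. -/
def IsSymmetric (μ : G → ℝ) : Prop := ∀ g : G, μ g⁻¹ = μ g

/-- The support of `μ` generates `G`. -/
def GeneratesSupp (μ : G → ℝ) : Prop := Subgroup.closure {g : G | μ g ≠ 0} = ⊤

open scoped Classical in
/-- Convolution powers `μ^n` of `μ`. -/
def convPow (μ : G → ℝ) : ℕ → G → ℝ
  | 0 => fun g => if g = 1 then 1 else 0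
  | n + 1 => fun g => ∑' y : G, convPow μ n y * μ (y⁻¹ * g)

/-- The Green function `G(x,y) = ∑_n μ^n(x⁻¹y)`. -/
def greenFn (μ : G → ℝ) (x y : G) : ℝ := ∑' n : ℕ, convPow μ n (x⁻¹ * y)

/-- The random walk is transient, i.e. `G(e,e) = ∑_n μ^n(e) < ∞`. -/
def Transient (μ : G → ℝ) : Prop := Summable fun n : ℕ => convPow μ n (1 : G)

/-- Successive positions of a walk started at `x` with increments `l`. -/
def walkPositions (x : G) (l : List G) : List G := l.scanl (fun p a => p * a) x

/-- The increments `l` describe a trajectory from `x` which hits `y` for the first time at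
its final position. -/
def IsFirstHitPath (x y : G) (l : List G) : Prop :=
  (walkPositions x l).getLast? = some y ∧ y ∉ (walkPositions x l).dropLast

/-- `F(x,y)`: the probability that the `μ`-random walk started at `x` ever hits `y`. -/
def hitProb (μ : G → ℝ) (x y : G) : ℝ :=
  ∑' l : {l : List G // IsFirstHitPath x y l}, ((l : List G).map μ).prod

/-- The Green metric `d_G(x,y) = - log F(x,y)`. -/
def greenDist (μ : G → ℝ) (x y : G) : ℝ := - Real.log (hitProb μ x y)

/-- `μ` has a finite first moment with respect to `d`. -/
def FiniteFirstMoment (d : G → G → ℝ) (μ : G → ℝ) : Prop :=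
  Summable fun g : G => d 1 g * μ g

/-- `μ` has an exponential moment with respect to `d`. -/
def HasExpMoment (d : G → G → ℝ) (μ : G → ℝ) : Prop :=
  ∃ lam : ℝ, 0 < lam ∧ Summable fun g : G => Real.exp (lam * d 1 g) * μ g

/-- The entropy `H(μ^n) = -∑_γ μ^n(γ) log μ^n(γ)` of the `n`-th convolution power. -/
def entropyAt (μ : G → ℝ) (n : ℕ) : ℝ :=
  - ∑' g : G, convPow μ n g * Real.log (convPow μ n g)

/-- `h` is the asymptotic entropy of the walk. -/
def HasEntropy (μ : G → ℝ) (h : ℝ) : Prop :=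
  Tendsto (fun n : ℕ => entropyAt μ n / n) atTop (𝓝 h)

/-- `v` is the logarithmic volume growth of `(G,d)` (seen from the identity). -/
def HasGrowth (d : G → G → ℝ) (v : ℝ) : Prop :=
  Filter.limsup (fun R : ℝ => Real.log (Nat.card {g : G // d 1 g ≤ R}) / R) atTop = v

/-- The position `Z_n = ω_0 ω_1 ⋯ ω_{n-1}` of the random walk at time `n`, given the
sequence of increments `ω`. -/
def walkPos (n : ℕ) (ω : ℕ → G) : G := ((List.range n).map ω).prod

/-- `P` is the law on the space of increment sequences of an i.i.d. sequence of law `μ`: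
cylinders have product measure.  (This characterizes the path measure of the random walk.) -/
def IsWalkMeasure [MeasurableSpace G] (μ : G → ℝ) (P : Measure (ℕ → G)) : Prop :=
  IsProbabilityMeasure P ∧
    ∀ (n : ℕ) (g : Fin n → G),
      P {ω : ℕ → G | ∀ i : Fin n, ω (i : ℕ) = g i} = ∏ i : Fin n, ENNReal.ofReal (μ (g i))

/-! ### The Gromov boundary, visual metrics, harmonic and quasiconformal measures -/

/-- A sequence tends to infinity if Gromov products (at the base point `1`) go to `∞`. -/
def TendstoInfinity (d : G → G → ℝ) (u : ℕ → G) : Prop :=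
  Tendsto (fun p : ℕ × ℕ => gromov d 1 (u p.1) (u p.2)) atTop atTop

/-- A realization of the Gromov boundary of `(G,d)` as an abstract type `B`:
`conv u b` means that the sequence `u` converges at infinity to the boundary point `b`.
The group acts on its boundary by `smul`. -/
structure BoundaryData (G : Type*) [Group G] (d : G → G → ℝ) (B : Type*) where
  conv : (ℕ → G) → B → Prop
  smul : G → B → B
  conv_unique : ∀ u b b', conv u b → conv u b' → b = b'
  exists_conv : ∀ u, TendstoInfinity d u → ∃ b, conv u b
  conv_tendstoInfinity : ∀ u b, conv u b → TendstoInfinity d u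
  conv_iff : ∀ u v b, conv u b →
    (conv v b ↔ Tendsto (fun n => gromov d 1 (u n) (v n)) atTop atTop)
  conv_surj : ∀ b, ∃ u, conv u b
  smul_conv : ∀ (γ : G) (u) (b), conv u b → conv (fun n => γ * u n) (smul γ b)

/-- Asymptotic Gromov product of two sequences. -/
def seqGromov (d : G → G → ℝ) (u v : ℕ → G) : ℝ :=
  Filter.liminf (fun n => gromov d 1 (u n) (v n)) atTop

/-- The metric of `B` is a visual metric of parameter `ε` (with comparison constant `C`)
for the hyperbolic distance `d` on the group:  `dist(a,b) ≍ exp(-ε (a|b))`. -/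
def IsVisualMetric {B : Type*} [MetricSpace B] (d : G → G → ℝ)
    (bd : BoundaryData G d B) (ε C : ℝ) : Prop :=
  0 < ε ∧ 0 < C ∧
    ∀ u v b b', bd.conv u b → bd.conv v b' → b ≠ b' →
      dist b b' ≤ C * Real.exp (-ε * seqGromov d u v) ∧
      Real.exp (-ε * seqGromov d u v) ≤ C * dist b b'

/-- `ν` is the harmonic measure of the random walk of law `μ` on the boundary `B`:
it is the law of the almost sure limit `Z_∞` of the walk on the boundary. -/
def IsHarmonicMeasure {B : Type*} [MeasurableSpace G] [MeasurableSpace B]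
    (d : G → G → ℝ) (bd : BoundaryData G d B) (μ : G → ℝ)
    (P : Measure (ℕ → G)) (ν : Measure B) : Prop :=
  IsWalkMeasure μ P ∧
    ∃ Zinf : (ℕ → G) → B, Measurable Zinf ∧
      (∀ᵐ ω ∂P, bd.conv (fun n => walkPos n ω) (Zinf ω)) ∧ ν = P.map Zinf

/-- Busemann function `β_b(x,y)` of the boundary point `b`. -/
def busemann {B : Type*} (d : G → G → ℝ) (bd : BoundaryData G d B)
    (x y : G) (b : B) : ℝ :=
  sSup {t : ℝ | ∃ u, bd.conv u b ∧
    t = Filter.limsup (fun n => d x (u n) - d y (u n)) atTop}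

/-- The image measure `γ^*ρ`, `γ^*ρ(A) = ρ(γA)`. -/
def actPush {B : Type*} [MeasurableSpace B] {d : G → G → ℝ}
    (bd : BoundaryData G d B) (γ : G) (ρ : Measure B) : Measure B :=
  ρ.map (bd.smul γ⁻¹)

/-- `ρ` is a quasiconformal measure on the boundary for `(G,d)` of logarithmic growth
parameter `v`: `γ^*ρ` and `ρ` are mutually absolutely continuous, with density
`dγ^*ρ/dρ ≍ exp (v β_b(1,γ⁻¹))` (uniformly in `γ`). -/
def IsQuasiconformalMeasure {B : Type*} [MeasurableSpace B] {d : G → G → ℝ}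
    (bd : BoundaryData G d B) (ρ : Measure B) (v : ℝ) : Prop :=
  ∃ C : ℝ, 0 < C ∧ ∀ γ : G,
    actPush bd γ ρ ≪ ρ ∧ ρ ≪ actPush bd γ ρ ∧
      ∀ᵐ b ∂ρ,
        (actPush bd γ ρ).rnDeriv ρ b
            ≤ ENNReal.ofReal (C * Real.exp (v * busemann d bd 1 γ⁻¹ b)) ∧
        ENNReal.ofReal (C⁻¹ * Real.exp (v * busemann d bd 1 γ⁻¹ b))
            ≤ (actPush bd γ ρ).rnDeriv ρ b

/-- `ν` is Ahlfors regular of dimension `α`: `ν(B(b,r)) ≍ r^α`. -/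
def AhlforsRegularOfDim {B : Type*} [MetricSpace B] [MeasurableSpace B]
    (ν : Measure B) (α : ℝ) : Prop :=
  ∃ C : ℝ, 0 < C ∧ ∀ (b : B) (r : ℝ), 0 < r → r ≤ Metric.diam (Set.univ : Set B) →
    ENNReal.ofReal (C⁻¹ * r ^ α) ≤ ν (Metric.ball b r) ∧
      ν (Metric.ball b r) ≤ ENNReal.ofReal (C * r ^ α)

/-- The Hausdorff dimension of a measure: the infimum of the Hausdorff dimensions of sets of
full measure. -/
def measureDim {B : Type*} [EMetricSpace B] [MeasurableSpace B] (ν : Measure B) : ℝ≥0∞ :=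
  ⨅ (A : Set B) (_ : ν Aᶜ = 0), dimH A

/-! ### Word geodesics -/

/-- `p 0, …, p n` is a geodesic segment for the word metric of `S`. -/
def IsWordGeodesic (S : Finset G) (n : ℕ) (p : ℕ → G) : Prop :=
  ∀ i j : ℕ, i ≤ n → j ≤ n → wordDist S (p i) (p j) = |(i : ℝ) - (j : ℝ)|

/-- `v` lies within distance `r` of some word geodesic segment from `x` to `y`. -/
def NearWordGeodesic (S : Finset G) (x y v : G) (r : ℝ) : Prop :=
  ∃ (n : ℕ) (p : ℕ → G), IsWordGeodesic S n p ∧ p 0 = x ∧ p n = y ∧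
    ∃ i ≤ n, wordDist S v (p i) ≤ r

/-! ### Martin boundary -/

/-- The Martin kernel `K(x,y) = G(x,y)/G(e,y)`. -/
def martinKernel (μ : G → ℝ) (x y : G) : ℝ := greenFn μ x y / greenFn μ 1 y

/-- The embedding `y ↦ K(·,y)` of the group in `C(G)` (pointwise topology). -/
def martinMap (μ : G → ℝ) (y : G) : G → ℝ := fun x => martinKernel μ x y

/-- The Martin boundary: the boundary of the image of the group under the Martin embedding
in the space of functions with the topology of pointwise convergence. -/
def martinBoundary (μ : G → ℝ) : Set (G → ℝ) :=
  closure (Set.range (martinMap μ)) \ Set.range (martinMap μ)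

/-- `h` is a `μ`-harmonic function. -/
def IsHarmonicFn (μ : G → ℝ) (h : G → ℝ) : Prop :=
  ∀ x : G, h x = ∑' y : G, h y * μ (x⁻¹ * y)

/-- `h` is a minimal positive harmonic function. -/
def IsMinimalHarmonic (μ : G → ℝ) (h : G → ℝ) : Prop :=
  IsHarmonicFn μ h ∧ (∀ x, 0 < h x) ∧
    ∀ u : G → ℝ, IsHarmonicFn μ u → (∀ x, 0 ≤ u x) → (∀ x, u x ≤ h x) →
      ∃ c : ℝ, u = fun x => c * h x

/-! ### Metric space versions (geodesic and quasiruled spaces) -/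

/-- A geodesic metric space. -/
def IsGeodesicSpace (X : Type*) [MetricSpace X] : Prop :=
  ∀ x y : X, ∃ f : ℝ → X, f 0 = x ∧ f (dist x y) = y ∧
    ∀ s ∈ Set.Icc (0:ℝ) (dist x y), ∀ t ∈ Set.Icc (0:ℝ) (dist x y),
      dist (f s) (f t) = |s - t|

/-- `f : [a,b] → Y` is a `(Λ,c)`-quasigeodesic segment. -/
def IsQuasigeodesicOn {Y : Type*} [MetricSpace Y] (f : ℝ → Y) (a b Λ c : ℝ) : Prop :=
  ∀ s ∈ Set.Icc a b, ∀ t ∈ Set.Icc a b,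
    |s - t| / Λ - c ≤ dist (f s) (f t) ∧ dist (f s) (f t) ≤ Λ * |s - t| + c

/-- `f : [a,b] → Y` is a `τ`-quasiruler: Gromov products of triples along it are `≤ τ`. -/
def IsQuasirulerOn {Y : Type*} [MetricSpace Y] (f : ℝ → Y) (a b τ : ℝ) : Prop :=
  ∀ s t u : ℝ, s ∈ Set.Icc a b → t ∈ Set.Icc a b → u ∈ Set.Icc a b → s ≤ t → t ≤ u →
    dist (f s) (f t) + dist (f t) (f u) ≤ dist (f s) (f u) + 2 * τ

/-- A quasiruled metric space: for some constants `(Λ,c,τ)` every pair of points is joined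
by a `(Λ,c)`-quasigeodesic, and every `(Λ,c)`-quasigeodesic is a `τ`-quasiruler. -/
def Quasiruled (Y : Type*) [MetricSpace Y] : Prop :=
  ∃ Λ c τ : ℝ, 1 ≤ Λ ∧ 0 ≤ c ∧ 0 ≤ τ ∧
    (∀ x y : Y, ∃ (a b : ℝ) (f : ℝ → Y), a ≤ b ∧ f a = x ∧ f b = y ∧
      IsQuasigeodesicOn f a b Λ c) ∧
    ∀ (f : ℝ → Y) (a b : ℝ), IsQuasigeodesicOn f a b Λ c → IsQuasirulerOn f a b τ

/-- A metric space is hyperbolic. -/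
def HypSpace (Y : Type*) [MetricSpace Y] : Prop :=
  IsHyperbolic (fun x y : Y => dist x y)

/-- `f` is a quasi-isometry between metric spaces. -/
def MetricQI {X Y : Type*} [MetricSpace X] [MetricSpace Y] (f : X → Y) : Prop :=
  ∃ Λ c C : ℝ, 1 ≤ Λ ∧ 0 ≤ c ∧ 0 ≤ C ∧
    QIEmbed (fun a b : X => dist a b) (fun a b : Y => dist a b) f Λ c ∧
    ∀ y : Y, ∃ x : X, dist (f x) y ≤ C

/-!
Put `φ(x) = v d(1,x) - d_G(1,x)`. The walk hits `x` with probability `exp (-d_G(1,x))`, while `ρ`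
gives the shadow of `x` a mass comparable to `exp (-v d(1,x))`. By a covering argument, a set of
points `x` with `φ(x) ≤ M`, whose shadows lie in `U`, is hit with probability `O(exp M) ρ(U)`.

The entropy `h` is positive and is the rate of escape of the walk in the metric `d_G`, so that
`n h ≤ E d_G(1,Zₙ)` by subadditivity; conversely `E d(1,Zₙ) ≤ n ℓ + O(1)` because the walk hardly
backtracks. Hence `h = ℓ v` bounds `E φ(Zₙ)` from above. The hitting estimate with the whole
boundary for `U` bounds the negative part of `φ(Zₙ)` in mean, so `φ(Zₙ)` is bounded above with large
probability, uniformly in `n`. If moreover `ρ(N) = 0`, let `U` be a neighbourhood of `N` of small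
`ρ`-mass: when `Z_∞` belongs to `N`, the shadow of `Zₙ` is contained in `U` for large `n` up to a
small probability, and the hitting estimate gives `ν(N) = 0`. Thus `ν ≪ ρ`, and the converse follows
from the ergodicity of `ρ` under the action of the group on the boundary.

A finite first moment comes from the hyperbolicity of `d_G`: a step from `y` to `z` crosses about
`|y⁻¹z|` points and has a positive probability of being the last one to cross any given one of them,
whereas there is only one last crossing of each point.
-/

/-! ### The Morse lemma -/

section HyperbolicGeometry

variable {X : Type*} {d : X → X → ℝ} {δ : ℝ}

namespace IsMetricFun

lemma nonneg (hm : IsMetricFun d) (x y : X) : 0 ≤ d x y := by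
  linarith [hm.triangle x y x, hm.refl x, hm.symm x y]

lemma gromov_comm (hm : IsMetricFun d) (w x y : X) : gromov d w x y = gromov d w y x := by
  unfold gromov
  linarith [hm.symm x y]

lemma gromov_nonneg (hm : IsMetricFun d) (w x y : X) : 0 ≤ gromov d w x y := by
  unfold gromov
  linarith [hm.triangle x w y, hm.symm w y]

lemma gromov_le_right (hm : IsMetricFun d) (w x y : X) : gromov d w x y ≤ d w y := by
  unfold gromov
  linarith [hm.triangle x y w, hm.symm w y]

lemma gromov_add_gromov (hm : IsMetricFun d) (w x y : X) :
    gromov d w x y + gromov d x w y = d w x := by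
  unfold gromov
  linarith [hm.symm w x, hm.symm w y, hm.symm x y]

end IsMetricFun

lemma IsHyperbolicWith.four_point (h : IsHyperbolicWith d δ) (hm : IsMetricFun d) (u v w z : X) :
    d u w + d v z ≤ max (d u v + d w z) (d v w + d u z) + 2 * δ := by
  have hmin := h z v u w
  unfold gromov at hmin
  have hsymm := hm.symm v u
  rcases min_choice ((d v z + d u z - d v u) / 2) ((d v z + d w z - d v w) / 2) with h' | h' <;>
    rw [h'] at hmin
  · linarith [le_max_left (d u v + d w z) (d v w + d u z)]
  · linarith [le_max_right (d u v + d w z) (d v w + d u z)]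

lemma sub_mul_le_of_dyadic_chain {q : X → X → ℝ} {c m : ℝ} {p : ℕ → X} (hc : 0 ≤ c)
    (hq : ∀ u v w, min (q u v) (q v w) - c ≤ q u w) (k : ℕ) :
    ∀ i j : ℕ, i ≤ j → j ≤ i + 2 ^ k → (∀ a, i ≤ a → a ≤ j → m ≤ q (p a) (p a)) →
      (∀ a, i ≤ a → a < j → m ≤ q (p a) (p (a + 1))) → m - c * k ≤ q (p i) (p j) := by
  induction k with
  | zero =>
    intro i j hij hj hdiag hsucc
    obtain rfl | rfl : j = i ∨ j = i + 1 := by rw [pow_zero] at hj; omega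
    · simpa using hdiag j le_rfl le_rfl
    · simpa using hsucc i le_rfl (by omega)
  | succ k ih =>
    intro i j hij hj hdiag hsucc
    rw [pow_succ] at hj
    push_cast
    by_cases hshort : j ≤ i + 2 ^ k
    · linarith [ih i j hij hshort hdiag hsucc]
    · have hfst := ih i (i + 2 ^ k) (by omega) le_rfl (fun a h h' ↦ hdiag a h (by omega))
        (fun a h h' ↦ hsucc a h (by omega))
      have hsnd := ih (i + 2 ^ k) j (by omega) (by omega) (fun a h h' ↦ hdiag a (by omega) h')
        (fun a h h' ↦ hsucc a (by omega) h')
      linarith [hq (p i) (p (i + 2 ^ k)) (p j), le_min hfst hsnd]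

/-- The distance from `u` to a virtual point lying on a segment from `x` to `y`, at distance `t`
from `x`; the formula is the distance from `u` to that point up to a bounded error when `d` is
hyperbolic and geodesic, and makes sense without geodesics. -/
def virtualDist (d : X → X → ℝ) (x y : X) (t : ℝ) (u : X) : ℝ :=
  max (d x u - t) (d y u - (d x y - t))

/-- The Gromov product of `u` and `w` based at the virtual point of `virtualDist d x y t`. -/
def virtualGromov (d : X → X → ℝ) (x y : X) (t : ℝ) (u w : X) : ℝ :=
  (virtualDist d x y t u + virtualDist d x y t w - d u w) / 2

lemma continuous_virtualDist (x y u : X) : Continuous fun t ↦ virtualDist d x y t u := by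
  unfold virtualDist
  fun_prop

lemma virtualDist_swap (hm : IsMetricFun d) (x y : X) (t : ℝ) :
    virtualDist d y x (d x y - t) = virtualDist d x y t := by
  ext u
  unfold virtualDist
  rw [hm.symm y x, max_comm, sub_sub_cancel]

lemma virtualGromov_comm (hm : IsMetricFun d) (x y : X) (t : ℝ) (u w : X) :
    virtualGromov d x y t u w = virtualGromov d x y t w u := by
  unfold virtualGromov
  rw [hm.symm u w, add_comm]

lemma min_virtualGromov_sub_le (hm : IsMetricFun d) (h : IsHyperbolicWith d δ) (x y : X) (t : ℝ)
    (u v w : X) :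
    min (virtualGromov d x y t u v) (virtualGromov d x y t v w) - δ ≤
      virtualGromov d x y t u w := by
  have key (a : X) (s : ℝ) (hle : ∀ b, d a b - s ≤ virtualDist d x y t b)
      (heq : virtualDist d x y t v = d a v - s) :
      min (virtualGromov d x y t u v) (virtualGromov d x y t v w) - δ ≤
        virtualGromov d x y t u w := by
    have hfour := h.four_point hm u v w a
    unfold virtualGromov
    rcases max_choice (d u v + d w a) (d v w + d u a) with h' | h' <;> rw [h'] at hfour
    · linarith [hle w, hm.symm v a, hm.symm w a, hm.symm u a,
        min_le_left ((virtualDist d x y t u + virtualDist d x y t v - d u v) / 2)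
          ((virtualDist d x y t v + virtualDist d x y t w - d v w) / 2)]
    · linarith [hle u, hm.symm v a, hm.symm w a, hm.symm u a,
        min_le_right ((virtualDist d x y t u + virtualDist d x y t v - d u v) / 2)
          ((virtualDist d x y t v + virtualDist d x y t w - d v w) / 2)]
  rcases max_choice (d x v - t) (d y v - (d x y - t)) with h' | h'
  · exact key x t (fun b ↦ le_max_left _ _) h'
  · exact key y (d x y - t) (fun b ↦ le_max_right _ _) h'

lemma dist_le_virtualDist_add_virtualDist (hm : IsMetricFun d) (h : IsHyperbolicWith d δ)
    (x y : X) (t : ℝ) (u w : X) :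
    d u w ≤ virtualDist d x y t u + virtualDist d x y t w + 2 * δ := by
  have hfour := h.four_point hm u x w y
  have hx (z : X) : d x z - t ≤ virtualDist d x y t z := le_max_left _ _
  have hy (z : X) : d y z - (d x y - t) ≤ virtualDist d x y t z := le_max_right _ _
  rcases max_choice (d u x + d w y) (d x w + d u y) with h' | h' <;> rw [h'] at hfour <;>
    linarith [hx u, hx w, hy u, hy w, hm.symm u x, hm.symm u y, hm.symm w y]

/-- A discrete quasigeodesic path `p 0, …, p n`, with steps of length at most `L`, along which
elapsed time is at most an affine function (of slope `Q`) of the distance travelled. -/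
structure IsCoarsePath (d : X → X → ℝ) (L Q : ℝ) (n : ℕ) (p : ℕ → X) : Prop where
  step : ∀ i < n, d (p i) (p (i + 1)) ≤ L
  sub_le : ∀ i j, i ≤ j → j ≤ n → (j : ℝ) - i ≤ Q * (d (p i) (p j) + 1)

/-- `u` lies on the `x`-side of the virtual point at distance `t` from `x` towards `y`: it is at
distance at least `D` and at most about `3 * D` from that point, except that it may be `x`. -/
def IsFlank (d : X → X → ℝ) (x y : X) (t D : ℝ) (u : X) : Prop :=
  d y u ≤ d x y - t + 3 * D ∧ (d x u ≤ t - D ∨ u = x)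

section Flank

variable {x y u w : X} {t D : ℝ}

lemma exists_isFlank {P : X → Prop} (hm : IsMetricFun d) (hD : 0 ≤ D) (ht : t ≤ d x y) (hx : P x)
    (hmax : ∀ s, 0 ≤ s → s ≤ d x y → ∃ u, P u ∧ virtualDist d x y s u ≤ D) :
    ∃ u, P u ∧ IsFlank d x y t D u := by
  by_cases hc : 2 * D ≤ t
  · obtain ⟨u, hu, hdist⟩ := hmax (t - 2 * D) (by linarith) (by linarith)
    have hxu := (le_max_left _ _).trans hdist
    have hyu := (le_max_right _ _).trans hdist
    exact ⟨u, hu, by linarith, Or.inl (by linarith)⟩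
  · refine ⟨x, hx, ?_, Or.inr rfl⟩
    linarith [hm.symm y x]

lemma IsFlank.dist_le (hu : IsFlank d x y t D u) (hm : IsMetricFun d) (ht : 0 ≤ t) (hD : 0 ≤ D) :
    d x u ≤ t := by
  rcases hu.2 with h | rfl
  · linarith
  · rwa [hm.refl]

lemma IsFlank.virtualDist_eq (hu : IsFlank d x y t D u) (hm : IsMetricFun d) (ht : 0 ≤ t)
    (hD : 0 ≤ D) : virtualDist d x y t u = d y u - (d x y - t) := by
  refine max_eq_right ?_
  linarith [hm.triangle x u y, hm.symm u y, hu.dist_le hm ht hD]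

lemma IsFlank.virtualDist_le (hu : IsFlank d x y t D u) (hm : IsMetricFun d) (ht : 0 ≤ t)
    (hD : 0 ≤ D) : virtualDist d x y t u ≤ 3 * D := by
  rw [hu.virtualDist_eq hm ht hD]
  linarith [hu.1]

lemma virtualGromov_le_of_isFlank (hm : IsMetricFun d) (h : IsHyperbolicWith d δ)
    (hu : IsFlank d x y t D u) (hw : IsFlank d y x (d x y - t) D w)
    (ht0 : 0 ≤ t) (ht1 : t ≤ d x y) (hD : δ < D) (hδ : 0 ≤ δ) :
    virtualGromov d x y t u w ≤ δ := by
  have hw' := hw.virtualDist_eq hm (by linarith) (hδ.trans hD.le)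
  rw [virtualDist_swap hm, hm.symm y x] at hw'
  unfold virtualGromov
  rw [hu.virtualDist_eq hm ht0 (hδ.trans hD.le), hw']
  have huy := hm.symm u y
  rcases hu.2 with hxu | rfl
  · rcases hw.2 with hyw | rfl
    · have hfour := h.four_point hm y x u w
      rcases max_choice (d y x + d u w) (d x u + d y w) with h' | h' <;> rw [h'] at hfour <;>
        linarith [hm.symm x y, hm.nonneg u w]
    · linarith
  · linarith [hm.symm u y]

end Flank

lemma IsCoarsePath.le_of_virtualDist_maximal {L Q D t : ℝ} {n k : ℕ} {p : ℕ → X}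
    (hm : IsMetricFun d) (h : IsHyperbolicWith d δ) (hδ : 0 ≤ δ) (hQ : 0 ≤ Q)
    (hp : IsCoarsePath d L Q n p) (hD : δ < D) (ht0 : 0 ≤ t) (ht1 : t ≤ d (p 0) (p n))
    (hmax : ∀ s, 0 ≤ s → s ≤ d (p 0) (p n) → ∃ i ≤ n, virtualDist d (p 0) (p n) s (p i) ≤ D)
    (hmin : ∀ i ≤ n, D ≤ virtualDist d (p 0) (p n) t (p i))
    (hL : 0 ≤ L) (hk : Q * (6 * D + 2 * δ + 1) ≤ 2 ^ k) : D ≤ L / 2 + δ + δ * k := by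
  have hD0 : 0 ≤ D := hδ.trans hD.le
  obtain ⟨-, ⟨i, hi, rfl⟩, hflank_i⟩ := exists_isFlank (t := t) (P := fun u ↦ ∃ i ≤ n, p i = u) hm
    hD0 ht1 ⟨0, n.zero_le, rfl⟩ fun s hs0 hs1 ↦
      let ⟨i, hi, hle⟩ := hmax s hs0 hs1; ⟨p i, ⟨i, hi, rfl⟩, hle⟩
  obtain ⟨-, ⟨j, hj, rfl⟩, hflank_j⟩ := exists_isFlank (x := p n) (y := p 0)
    (t := d (p 0) (p n) - t) (P := fun u ↦ ∃ i ≤ n, p i = u) hm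
    hD0 (by rw [hm.symm (p n)]; linarith) ⟨n, le_rfl, rfl⟩ fun s hs0 hs1 ↦ by
      rw [hm.symm] at hs1
      obtain ⟨i, hi, hle⟩ := hmax (d (p 0) (p n) - s) (by linarith) (by linarith)
      refine ⟨p i, ⟨i, hi, rfl⟩, ?_⟩
      rwa [← virtualDist_swap hm, sub_sub_cancel] at hle
  have hfar : virtualGromov d (p 0) (p n) t (p i) (p j) ≤ δ :=
    virtualGromov_le_of_isFlank hm h hflank_i hflank_j ht0 ht1 hD hδ
  have hdist : d (p i) (p j) ≤ 6 * D + 2 * δ := by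
    have hle_j := hflank_j.virtualDist_le hm (by linarith) hD0
    rw [virtualDist_swap hm] at hle_j
    linarith [dist_le_virtualDist_add_virtualDist hm h (p 0) (p n) t (p i) (p j),
      hflank_i.virtualDist_le hm ht0 hD0]
  suffices hnear : D - L / 2 - δ * k ≤ virtualGromov d (p 0) (p n) t (p i) (p j) by linarith
  clear hfar hflank_i hflank_j
  wlog hij : i ≤ j generalizing i j
  · rw [virtualGromov_comm hm]
    exact this j hj i hi (hm.symm (p i) (p j) ▸ hdist) (le_of_not_ge hij)
  have hlen : j ≤ i + 2 ^ k := by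
    have : (j : ℝ) ≤ (i + 2 ^ k : ℕ) := by
      push_cast
      nlinarith [hp.sub_le i j hij hj]
    exact_mod_cast this
  refine sub_mul_le_of_dyadic_chain hδ (min_virtualGromov_sub_le hm h (p 0) (p n) t) k i j hij hlen
    (fun a _ ha ↦ ?_) (fun a _ ha ↦ ?_) <;> unfold virtualGromov
  · linarith [hmin a (by omega), hm.refl (p a)]
  · linarith [hmin a (by omega), hmin (a + 1) (by omega), hp.step a (by omega)]

lemma eventually_exists_le_two_pow_and_lt (δ L : ℝ) {Q : ℝ} (hδ : 0 ≤ δ) (hQ : 0 ≤ Q) :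
    ∀ᶠ D : ℝ in atTop, ∃ k : ℕ, Q * (6 * D + 2 * δ + 1) ≤ 2 ^ k ∧ L / 2 + δ + δ * k < D := by
  have hpos : 0 < 2 * δ + 2 := by linarith
  have hlin : ∀ᶠ k : ℕ in atTop,
      Q * (6 * ((2 * δ + 2) * (k + 1)) + 2 * δ + 1) ≤ (2 : ℝ) ^ k := by
    have hlittle := ((isLittleO_coe_const_pow_of_one_lt (R := ℝ) (r := (2 : ℝ)) one_lt_two
      ).const_mul_left (Q * (6 * (2 * δ + 2)))).add
        ((isLittleO_pow_const_const_pow_of_one_lt (R := ℝ) 0 (one_lt_two (α := ℝ))).const_mul_left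
          (Q * (6 * (2 * δ + 2) + 2 * δ + 1)))
    filter_upwards [hlittle.bound one_pos] with k hk
    simp only [pow_zero, mul_one, one_mul, Real.norm_eq_abs] at hk
    rw [abs_of_pos (by positivity : (0 : ℝ) < 2 ^ k)] at hk
    linarith [le_abs_self (Q * (6 * (2 * δ + 2)) * k + Q * (6 * (2 * δ + 2) + 2 * δ + 1))]
  have hfloor : Tendsto (fun D : ℝ ↦ ⌊D / (2 * δ + 2)⌋₊) atTop atTop :=
    tendsto_nat_floor_atTop.comp (tendsto_id.atTop_div_const hpos)
  filter_upwards [hfloor.eventually hlin, eventually_gt_atTop (L + 2 * δ),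
    eventually_ge_atTop 0] with D hk hDL hD
  refine ⟨⌊D / (2 * δ + 2)⌋₊, le_trans ?_ hk, ?_⟩
  · have hlt := (div_lt_iff₀ hpos).1 (Nat.lt_floor_add_one (D / (2 * δ + 2)))
    exact mul_le_mul_of_nonneg_left (by linarith) hQ
  · have hle := (le_div_iff₀ hpos).1 (Nat.floor_le (div_nonneg hD hpos.le))
    linarith [Nat.cast_nonneg (α := ℝ) ⌊D / (2 * δ + 2)⌋₊]

lemma exists_forall_virtualDist_le (hm : IsMetricFun d) (h : IsHyperbolicWith d δ) (hδ : 0 ≤ δ)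
    {L Q : ℝ} (hL : 0 ≤ L) (hQ : 0 ≤ Q) :
    ∃ D₀ : ℝ, 0 ≤ D₀ ∧ ∀ (n : ℕ) (p : ℕ → X), IsCoarsePath d L Q n p →
      ∀ s, 0 ≤ s → s ≤ d (p 0) (p n) → ∃ i ≤ n, virtualDist d (p 0) (p n) s (p i) ≤ D₀ := by
  obtain ⟨D₁, hD₁⟩ := eventually_atTop.1 (eventually_exists_le_two_pow_and_lt δ L hδ hQ)
  refine ⟨max D₁ δ, le_max_of_le_right hδ, fun n p hp s hs0 hs1 ↦ ?_⟩
  have hne : (Finset.range (n + 1)).Nonempty := ⟨0, by simp⟩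
  obtain ⟨t, ht, htmax⟩ := (isCompact_Icc (a := (0 : ℝ)) (b := d (p 0) (p n))).exists_isMaxOn
    ⟨0, by simp [hm.nonneg]⟩ (Continuous.finset_inf'_apply hne fun i _ ↦
      continuous_virtualDist (d := d) (p 0) (p n) (p i)).continuousOn
  set D := (Finset.range (n + 1)).inf' hne fun i ↦ virtualDist d (p 0) (p n) t (p i)
  have hmax : ∀ s, 0 ≤ s → s ≤ d (p 0) (p n) →
      ∃ i ≤ n, virtualDist d (p 0) (p n) s (p i) ≤ D := by
    intro s hs0 hs1
    obtain ⟨i, hi, heq⟩ := Finset.exists_mem_eq_inf' hne fun i ↦ virtualDist d (p 0) (p n) s (p i)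
    exact ⟨i, by simpa [Nat.lt_succ_iff] using hi, heq ▸ htmax ⟨hs0, hs1⟩⟩
  have hD : D ≤ max D₁ δ := by
    by_contra! hlt
    obtain ⟨hlt₁, hltδ⟩ := max_lt_iff.1 hlt
    obtain ⟨k, hk, hkD⟩ := hD₁ D hlt₁.le
    exact hkD.not_ge (hp.le_of_virtualDist_maximal hm h hδ hQ hltδ ht.1 ht.2 hmax
      (fun i hi ↦ Finset.inf'_le _ (by simp; omega)) hL hk)
  obtain ⟨i, hi, hle⟩ := hmax s hs0 hs1
  exact ⟨i, hi, hle.trans hD⟩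

lemma isClosed_setOf_exists_virtualDist_le (x y : X) (p : ℕ → X) (F : Finset ℕ) (D : ℝ) :
    IsClosed {t | ∃ i ∈ F, virtualDist d x y t (p i) ≤ D} := by
  convert F.finite_toSet.isClosed_biUnion fun i _ ↦
    isClosed_le (continuous_virtualDist (d := d) x y (p i)) (continuous_const (y := D)) using 1
  ext t
  simp

lemma exists_virtualDist_le_both_sides (hm : IsMetricFun d) {D : ℝ} {n k : ℕ} {p : ℕ → X}
    (hD : 0 ≤ D) (hk : k ≤ n)
    (hnear : ∀ s, 0 ≤ s → s ≤ d (p 0) (p n) → ∃ i ≤ n, virtualDist d (p 0) (p n) s (p i) ≤ D) :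
    ∃ t, ∃ i ≤ k, ∃ j, k ≤ j ∧ j ≤ n ∧
      virtualDist d (p 0) (p n) t (p i) ≤ D ∧ virtualDist d (p 0) (p n) t (p j) ≤ D := by
  have hℓ := hm.nonneg (p 0) (p n)
  suffices h : (Icc 0 (d (p 0) (p n)) ∩
      ({t | ∃ i ∈ Finset.Icc 0 k, virtualDist d (p 0) (p n) t (p i) ≤ D} ∩
        {t | ∃ j ∈ Finset.Icc k n, virtualDist d (p 0) (p n) t (p j) ≤ D})).Nonempty by
    obtain ⟨t, -, ⟨i, hi, hti⟩, ⟨j, hj, htj⟩⟩ := h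
    exact ⟨t, i, (Finset.mem_Icc.1 hi).2, j, (Finset.mem_Icc.1 hj).1, (Finset.mem_Icc.1 hj).2,
      hti, htj⟩
  refine isPreconnected_closed_iff.1
    (isPreconnected_Icc (a := (0 : ℝ)) (b := d (p 0) (p n))) _ _
    (isClosed_setOf_exists_virtualDist_le (d := d) (p 0) (p n) p (Finset.Icc 0 k) D)
    (isClosed_setOf_exists_virtualDist_le (d := d) (p 0) (p n) p (Finset.Icc k n) D)
    ?_ ?_ ?_
  · intro s hs
    obtain ⟨i, hi, hsi⟩ := hnear s hs.1 hs.2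
    rcases le_total i k with hik | hik
    · exact Or.inl ⟨i, Finset.mem_Icc.2 ⟨i.zero_le, hik⟩, hsi⟩
    · exact Or.inr ⟨i, Finset.mem_Icc.2 ⟨hik, hi⟩, hsi⟩
  · refine ⟨0, ⟨le_rfl, hℓ⟩, 0, Finset.mem_Icc.2 ⟨le_rfl, k.zero_le⟩, ?_⟩
    simp [virtualDist, hm.refl, hm.symm (p n), hD]
  · refine ⟨d (p 0) (p n), ⟨hℓ, le_rfl⟩, n, Finset.mem_Icc.2 ⟨hk, le_rfl⟩, ?_⟩
    simp [virtualDist, hm.refl, hD]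

lemma IsCoarsePath.dist_le_mul {L Q : ℝ} {n : ℕ} {p : ℕ → X} (hp : IsCoarsePath d L Q n p)
    (hm : IsMetricFun d) (i m : ℕ) (him : i + m ≤ n) : d (p i) (p (i + m)) ≤ L * m := by
  induction m with
  | zero => simp [hm.refl]
  | succ m ih =>
    have htri := hm.triangle (p i) (p (i + m)) (p (i + m + 1))
    push_cast
    rw [← add_assoc]
    linarith [ih (by omega), hp.step (i + m) (by omega)]

/-- The Morse lemma. -/
theorem exists_gromov_le_of_isCoarsePath (hm : IsMetricFun d) (h : IsHyperbolicWith d δ)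
    (hδ : 0 ≤ δ) {L Q : ℝ} (hL : 0 ≤ L) (hQ : 0 ≤ Q) :
    ∃ τ : ℝ, 0 ≤ τ ∧ ∀ (n : ℕ) (p : ℕ → X), IsCoarsePath d L Q n p →
      ∀ k ≤ n, gromov d (p k) (p 0) (p n) ≤ τ := by
  obtain ⟨D, hD, hnear⟩ := exists_forall_virtualDist_le hm h hδ hL hQ
  refine ⟨L * (Q * (2 * D + 2 * δ + 1)) + D, by positivity, fun n p hp k hk ↦ ?_⟩
  obtain ⟨t, i, hik, j, hkj, hjn, hi, hj⟩ :=
    exists_virtualDist_le_both_sides hm hD hk (hnear n p hp)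
  have hij : d (p i) (p j) ≤ 2 * D + 2 * δ := by
    linarith [dist_le_virtualDist_add_virtualDist hm h (p 0) (p n) t (p i) (p j)]
  have htime : ((k - i : ℕ) : ℝ) ≤ Q * (2 * D + 2 * δ + 1) := by
    have hkj' : (k : ℝ) ≤ j := by exact_mod_cast hkj
    rw [Nat.cast_sub hik]
    nlinarith [hp.sub_le i j (by omega) hjn]
  have hik' : d (p i) (p k) ≤ L * (Q * (2 * D + 2 * δ + 1)) := by
    have hle := hp.dist_le_mul hm i (k - i) (by omega)
    rw [Nat.add_sub_cancel' hik] at hle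
    exact hle.trans (mul_le_mul_of_nonneg_left htime hL)
  have hx := (le_max_left _ _).trans hi
  have hy := (le_max_right _ _).trans hi
  unfold gromov
  linarith [hm.triangle (p 0) (p i) (p k), hm.triangle (p n) (p i) (p k)]

end HyperbolicGeometry

/-! ### Word metrics and the Švarc–Milnor lemma -/

section WordMetric

variable {S : Finset G}

lemma exists_list_length_eq_wordLength (hS : Generates S) (x : G) :
    ∃ l : List G, l.length = wordLength S x ∧ (∀ a ∈ l, a ∈ S ∨ a⁻¹ ∈ S) ∧ l.prod = x := by
  have hx : x ∈ Subgroup.closure (S : Set G) := by rw [hS]; trivial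
  rw [← Subgroup.mem_toSubmonoid, Subgroup.closure_toSubmonoid] at hx
  obtain ⟨l, hl, hprod⟩ := Submonoid.exists_list_of_mem_closure hx
  exact Nat.sInf_mem (s := {n | ∃ l : List G, l.length = n ∧ (∀ a ∈ l, a ∈ S ∨ a⁻¹ ∈ S) ∧
    l.prod = x}) ⟨l.length, l, rfl, by simpa using hl, hprod⟩

lemma wordLength_prod_le (l : List G) (h : ∀ a ∈ l, a ∈ S ∨ a⁻¹ ∈ S) :
    wordLength S l.prod ≤ l.length :=
  Nat.sInf_le ⟨l, rfl, h, rfl⟩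

lemma wordLength_one : wordLength S (1 : G) = 0 := by
  simpa using wordLength_prod_le (S := S) [] (by simp)

lemma wordLength_mul_le (hS : Generates S) (x y : G) :
    wordLength S (x * y) ≤ wordLength S x + wordLength S y := by
  obtain ⟨l, hl, hlS, rfl⟩ := exists_list_length_eq_wordLength hS x
  obtain ⟨m, hm, hmS, rfl⟩ := exists_list_length_eq_wordLength hS y
  rw [← hl, ← hm, ← List.prod_append, ← List.length_append]
  exact wordLength_prod_le _ fun a ha ↦ (List.mem_append.1 ha).elim (hlS a) (hmS a)

lemma wordLength_inv_le (hS : Generates S) (x : G) : wordLength S x⁻¹ ≤ wordLength S x := by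
  obtain ⟨l, hl, hlS, rfl⟩ := exists_list_length_eq_wordLength hS x
  rw [← hl, List.prod_inv_reverse]
  refine (wordLength_prod_le _ fun a ha ↦ ?_).trans (by simp)
  obtain ⟨b, hb, rfl⟩ := List.mem_map.1 (List.mem_reverse.1 ha)
  simpa using (hlS b hb).symm

lemma wordDist_nonneg (x y : G) : 0 ≤ wordDist S x y := Nat.cast_nonneg _

lemma wordDist_self (x : G) : wordDist S x x = 0 := by
  simp [wordDist, wordLength_one]

lemma wordDist_triangle (hS : Generates S) (x y z : G) :
    wordDist S x z ≤ wordDist S x y + wordDist S y z := by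
  have h := wordLength_mul_le hS (x⁻¹ * y) (y⁻¹ * z)
  rw [show x⁻¹ * y * (y⁻¹ * z) = x⁻¹ * z by group] at h
  unfold wordDist
  exact_mod_cast h

lemma wordDist_comm (hS : Generates S) (x y : G) : wordDist S x y = wordDist S y x := by
  have h : ∀ x y, wordDist S x y ≤ wordDist S y x := fun x y ↦ by
    have := wordLength_inv_le hS (y⁻¹ * x)
    rw [mul_inv_rev, inv_inv] at this
    unfold wordDist
    exact_mod_cast this
  exact le_antisymm (h x y) (h y x)

lemma wordDist_mul_prod_take_le {l : List G} (hl : ∀ a ∈ l, a ∈ S ∨ a⁻¹ ∈ S) (x : G) {i j : ℕ}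
    (hij : i ≤ j) :
    wordDist S (x * (l.take i).prod) (x * (l.take j).prod) ≤ (j : ℝ) - i := by
  have hsplit : (x * (l.take i).prod)⁻¹ * (x * (l.take j).prod) = ((l.take j).drop i).prod := by
    have h := List.take_append_drop i (l.take j)
    rw [List.take_take, min_eq_left hij] at h
    rw [mul_inv_rev, mul_assoc, inv_mul_cancel_left, inv_mul_eq_iff_eq_mul, ← List.prod_append, h]
  have hlen : wordLength S ((l.take j).drop i).prod ≤ j - i :=
    (wordLength_prod_le _ fun a ha ↦ hl a (List.mem_of_mem_take (List.mem_of_mem_drop ha))).trans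
      (by simp only [List.length_drop, List.length_take]; omega)
  rw [← Nat.cast_sub hij, wordDist, hsplit]
  exact_mod_cast hlen

lemma exists_isWordGeodesic (hS : Generates S) (x y : G) :
    ∃ n p, IsWordGeodesic S n p ∧ p 0 = x ∧ p n = y := by
  obtain ⟨l, hl, hlS, hprod⟩ := exists_list_length_eq_wordLength hS (x⁻¹ * y)
  set p : ℕ → G := fun k ↦ x * (l.take k).prod with hp
  have hp0 : p 0 = x := by simp [hp]
  have hpn : p l.length = y := by simp [hp, hprod]
  have hle : ∀ {i j}, i ≤ j → wordDist S (p i) (p j) ≤ (j : ℝ) - i :=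
    wordDist_mul_prod_take_le hlS x
  have heq : ∀ i j, i ≤ j → j ≤ l.length → wordDist S (p i) (p j) = (j : ℝ) - i := by
    intro i j hij hj
    have hlength : wordDist S (p 0) (p l.length) = l.length := by
      rw [hp0, hpn, wordDist, hl]
    have h0i := hle i.zero_le
    rw [Nat.cast_zero, sub_zero] at h0i
    linarith [hle hij, hle hj, wordDist_triangle hS (p 0) (p i) (p l.length),
      wordDist_triangle hS (p i) (p j) (p l.length)]
  refine ⟨l.length, p, fun i j hi hj ↦ ?_, hp0, hpn⟩
  rcases le_total i j with hij | hij
  · rw [heq i j hij hj, abs_sub_comm, abs_of_nonneg (by simpa using hij)]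
  · rw [wordDist_comm hS, heq j i hij hi, abs_of_nonneg (by simpa using hij)]

lemma IsWordGeodesic.wordDist_succ {n : ℕ} {p : ℕ → G} (hp : IsWordGeodesic S n p) {i : ℕ}
    (hi : i < n) : wordDist S (p i) (p (i + 1)) = 1 := by
  simp [hp i (i + 1) hi.le hi]

lemma IsMetricFun.dist_one_prod_le {d : G → G → ℝ} (hm : IsMetricFun d) (hli : LeftInvariant d)
    (l : List G) : d 1 l.prod ≤ (l.map (d 1)).sum := by
  induction l with
  | nil => simp [hm.refl]
  | cons a l ih =>
    have hshift := hli a 1 l.prod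
    rw [mul_one] at hshift
    rw [List.prod_cons, List.map_cons, List.sum_cons]
    linarith [hm.triangle 1 a (a * l.prod)]

end WordMetric

lemma LeftInvariant.eq_one_inv_mul {d : G → G → ℝ} (hli : LeftInvariant d) (x y : G) :
    d x y = d 1 (x⁻¹ * y) := by
  simpa using (hli x⁻¹ x y).symm

lemma LeftInvariant.one_inv_eq {d : G → G → ℝ} (hli : LeftInvariant d) (hm : IsMetricFun d)
    (x : G) : d 1 x⁻¹ = d 1 x := by
  rw [hm.symm 1 x, hli.eq_one_inv_mul x, mul_one]

lemma LeftInvariant.gromov_mul {d : G → G → ℝ} (hli : LeftInvariant d) (g w x y : G) :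
    gromov d (g * w) (g * x) (g * y) = gromov d w x y := by
  simp only [gromov, hli g]

/-- A left-invariant hyperbolic metric which is quasi-isometric to the word metric of `S` through
the identity map. The Švarc–Milnor lemma `MemD.exists_wordComparable` puts every proper metric of
the class `𝒟(G)` in this form. -/
structure WordComparable (S : Finset G) (d : G → G → ℝ) (δ A : ℝ) : Prop where
  generates : Generates S
  isMetricFun : IsMetricFun d
  leftInvariant : LeftInvariant d
  isHyperbolicWith : IsHyperbolicWith d δ
  delta_nonneg : 0 ≤ δ
  one_le : 1 ≤ A
  dist_le : ∀ x y, d x y ≤ A * wordDist S x y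
  wordDist_le : ∀ x y, wordDist S x y ≤ A * d x y + A

namespace WordComparable

variable {S : Finset G} {d g : G → G → ℝ} {δ A δ' A' : ℝ}

lemma dist_succ_le (hd : WordComparable S d δ A) {n : ℕ} {p : ℕ → G} (hp : IsWordGeodesic S n p)
    {i : ℕ} (hi : i < n) : d (p i) (p (i + 1)) ≤ A := by
  simpa [hp.wordDist_succ hi] using hd.dist_le (p i) (p (i + 1))

lemma isCoarsePath (hd : WordComparable S d δ A) {n : ℕ} {p : ℕ → G} (hp : IsWordGeodesic S n p) :
    IsCoarsePath d A A n p where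
  step _ hi := hd.dist_succ_le hp hi
  sub_le i j hij hj := by
    have h := hd.wordDist_le (p i) (p j)
    rw [hp i j (hij.trans hj) hj, abs_sub_comm] at h
    linarith [le_abs_self ((j : ℝ) - i)]

lemma exists_gromov_le_of_isWordGeodesic (hd : WordComparable S d δ A) :
    ∃ τ : ℝ, 0 ≤ τ ∧ ∀ n p, IsWordGeodesic S n p → ∀ k ≤ n, gromov d (p k) (p 0) (p n) ≤ τ := by
  have hA := zero_le_one.trans hd.one_le
  obtain ⟨τ, hτ, h⟩ :=
    exists_gromov_le_of_isCoarsePath hd.isMetricFun hd.isHyperbolicWith hd.delta_nonneg hA hA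
  exact ⟨τ, hτ, fun n p hp ↦ h n p (hd.isCoarsePath hp)⟩

lemma exists_between (hd : WordComparable S d δ A) :
    ∃ τ : ℝ, 0 ≤ τ ∧ ∀ x y s, 0 ≤ s → s ≤ d x y →
      ∃ z, s ≤ d x z ∧ d x z ≤ s + A ∧ gromov d z x y ≤ τ := by
  classical
  obtain ⟨τ, hτ, h⟩ := hd.exists_gromov_le_of_isWordGeodesic
  refine ⟨τ, hτ, fun x y s hs hsxy ↦ ?_⟩
  obtain ⟨n, p, hp, rfl, rfl⟩ := exists_isWordGeodesic hd.generates x y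
  have hex : ∃ k, s ≤ d (p 0) (p k) := ⟨n, hsxy⟩
  have hkn : Nat.find hex ≤ n := Nat.find_min' hex hsxy
  refine ⟨p (Nat.find hex), Nat.find_spec hex, ?_, h n p hp _ hkn⟩
  rcases hk : Nat.find hex with _ | k
  · linarith [hd.isMetricFun.refl (p 0), hd.one_le]
  · have hmin : d (p 0) (p k) < s := not_le.1 (Nat.find_min hex (by omega))
    linarith [hd.dist_succ_le hp (i := k) (by omega),
      hd.isMetricFun.triangle (p 0) (p k) (p (k + 1))]

/-- Travelling along `p`, one leaves the region close to the side `[z, p 0]` of the triangle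
`z, p 0, p n` and enters the region close to the side `[z, p n]`. -/
lemma exists_gromov_le_both_sides (hg : WordComparable S g δ' A') {τ : ℝ} {n : ℕ} {p : ℕ → G}
    (hp : IsWordGeodesic S n p) (hτ : ∀ k ≤ n, gromov g (p k) (p 0) (p n) ≤ τ) (z : G) :
    ∃ k ≤ n, gromov g (p k) z (p 0) ≤ τ + δ' + A' ∧ gromov g (p k) z (p n) ≤ τ + δ' := by
  classical
  have hm := hg.isMetricFun
  have hτ0 : 0 ≤ τ := (hm.gromov_nonneg _ _ _).trans (hτ 0 n.zero_le)
  have hend : ∀ i, gromov g (p i) z (p i) ≤ τ + δ' := fun i ↦ by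
    linarith [hm.gromov_le_right (p i) z (p i), hm.refl (p i), hg.delta_nonneg]
  have hex : ∃ k, gromov g (p k) z (p n) ≤ τ + δ' := ⟨n, hend n⟩
  have hkn : Nat.find hex ≤ n := Nat.find_min' hex (hend n)
  refine ⟨Nat.find hex, hkn, ?_, Nat.find_spec hex⟩
  rcases hk : Nat.find hex with _ | k
  · linarith [hend 0, hg.one_le]
  · have hfar : τ + δ' < gromov g (p k) z (p n) := not_le.1 (Nat.find_min hex (by omega))
    have hnear : gromov g (p k) z (p 0) ≤ τ + δ' := by
      by_contra! hc
      linarith [lt_min hc hfar, hg.isHyperbolicWith (p k) z (p 0) (p n), hτ k (by omega)]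
    have hstep := hg.dist_succ_le hp (i := k) (by omega)
    have hz := hm.triangle z (p k) (p (k + 1))
    have h0 := hm.triangle (p 0) (p k) (p (k + 1))
    unfold gromov at hnear ⊢
    linarith

lemma exists_center (hd : WordComparable S d δ A) (hg : WordComparable S g δ' A') :
    ∃ K : ℝ, 0 ≤ K ∧ ∀ x y z, ∃ p, gromov d p x y ≤ K ∧ g z p ≤ gromov g z x y + K := by
  obtain ⟨τ, hτ, hruler⟩ := hd.exists_gromov_le_of_isWordGeodesic
  obtain ⟨τ', hτ', hruler'⟩ := hg.exists_gromov_le_of_isWordGeodesic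
  have hA := hg.one_le
  have hδ := hg.delta_nonneg
  refine ⟨τ + 2 * (τ' + δ' + A'), by positivity, fun x y z ↦ ?_⟩
  obtain ⟨n, p, hp, rfl, rfl⟩ := exists_isWordGeodesic hd.generates x y
  obtain ⟨k, hk, hleft, hright⟩ := hg.exists_gromov_le_both_sides hp (hruler' n p hp) z
  have hm := hg.isMetricFun
  refine ⟨p k, by linarith [hruler n p hp k hk], ?_⟩
  have hnonneg := hm.gromov_nonneg (p k) (p 0) (p n)
  unfold gromov at hleft hright hnonneg ⊢
  linarith [hm.symm z (p k), hm.symm (p 0) z, hm.symm (p n) z]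

lemma exists_gromov_le_mul_gromov (hd : WordComparable S d δ A) (hg : WordComparable S g δ' A') :
    ∃ K : ℝ, 1 ≤ K ∧ ∀ x y z, gromov d z x y ≤ K * gromov g z x y + K := by
  obtain ⟨K, hK, h⟩ := hd.exists_center hg
  have hA := zero_le_one.trans hd.one_le
  have hA' := zero_le_one.trans hg.one_le
  have hAA : 0 ≤ A * A' := mul_nonneg hA hA'
  refine ⟨1 + A * A' * (K + 1) + K, by nlinarith, fun x y z ↦ ?_⟩
  obtain ⟨p, hpK, hzp⟩ := h x y z
  have hm := hd.isMetricFun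
  have hdzp : gromov d z x y ≤ d z p + gromov d p x y := by
    unfold gromov
    linarith [hm.triangle x p z, hm.triangle y p z, hm.symm p z]
  have hzp' : d z p ≤ A * A' * (gromov g z x y + K + 1) := calc
    d z p ≤ A * wordDist S z p := hd.dist_le z p
    _ ≤ A * (A' * g z p + A') := by gcongr; exact hg.wordDist_le z p
    _ = A * A' * (g z p + 1) := by ring
    _ ≤ A * A' * (gromov g z x y + K + 1) := by gcongr
  have hpos : 0 ≤ (1 + A * A' * K + K) * gromov g z x y :=
    mul_nonneg (by positivity) (hg.isMetricFun.gromov_nonneg z x y)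
  nlinarith

end WordComparable

section SvarcMilnor

variable {S S₀ : Finset G} {d : G → G → ℝ}

lemma exists_forall_dist_le_mul_wordDist (hS : Generates S) (hm : IsMetricFun d)
    (hli : LeftInvariant d) : ∃ D : ℝ, 0 ≤ D ∧ ∀ x y, d x y ≤ D * wordDist S x y := by
  refine ⟨∑ s ∈ S, d 1 s, Finset.sum_nonneg fun s _ ↦ hm.nonneg _ _, fun x y ↦ ?_⟩
  have hgen : ∀ s ∈ S, d 1 s ≤ ∑ s ∈ S, d 1 s := fun s hs ↦
    Finset.single_le_sum (f := fun s ↦ d 1 s) (fun s _ ↦ hm.nonneg _ _) hs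
  obtain ⟨l, hlen, hl, hprod⟩ := exists_list_length_eq_wordLength hS (x⁻¹ * y)
  rw [hli.eq_one_inv_mul, wordDist, ← hlen, ← hprod]
  refine (hm.dist_one_prod_le hli l).trans ?_
  rw [← List.length_map (as := l) (d 1), mul_comm, ← nsmul_eq_mul]
  refine List.sum_le_card_nsmul _ _ (List.forall_mem_map.2 fun a ha ↦
    (hl a ha).elim (hgen a) fun ha' ↦ ?_)
  rw [hm.symm, hli.eq_one_inv_mul, mul_one]
  exact hgen _ ha'

/-- Follows a chain `q` of unit steps in the target, lifting each step through `f`. -/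
lemma wordDist_le_of_chain (hS : Generates S) (hS₀ : Generates S₀) {f : G → G} {C M : ℝ}
    (hdense : ∀ y, ∃ x, wordDist S₀ (f x) y ≤ C)
    (hM : ∀ x y, wordDist S₀ (f x) (f y) ≤ 2 * C + 1 → wordDist S x y ≤ M) (n : ℕ) :
    ∀ (x y : G) (q : ℕ → G), (∀ i < n, wordDist S₀ (q i) (q (i + 1)) ≤ 1) →
      wordDist S₀ (f x) (q 0) ≤ C → wordDist S₀ (f y) (q n) ≤ C →
      wordDist S x y ≤ M * (n + 1) := by
  induction n with
  | zero =>
    intro x y q _ hx hy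
    rw [Nat.cast_zero, zero_add, mul_one]
    refine hM x y ?_
    linarith [wordDist_triangle hS₀ (f x) (q 0) (f y), wordDist_comm hS₀ (q 0) (f y)]
  | succ n ih =>
    intro x y q hq hx hy
    obtain ⟨x', hx'⟩ := hdense (q 1)
    have htail := ih x' y (fun i ↦ q (i + 1)) (fun i hi ↦ hq (i + 1) (by omega)) hx' hy
    have hhead : wordDist S x x' ≤ M := hM x x' <| by
      linarith [wordDist_triangle hS₀ (f x) (q 0) (f x'), wordDist_triangle hS₀ (q 0) (q 1) (f x'),
        wordDist_comm hS₀ (q 1) (f x'), hq 0 (by omega)]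
    push_cast
    linarith [wordDist_triangle hS x x' y]

lemma exists_forall_wordDist_le (hS : Generates S) (hS₀ : Generates S₀)
    (hqi : QuasiIsometric d (wordDist S₀)) (hm : IsMetricFun d) (hli : LeftInvariant d)
    (hfin : ∀ R, {x | d 1 x ≤ R}.Finite) :
    ∃ M : ℝ, 0 ≤ M ∧ ∀ x y, wordDist S x y ≤ M * d x y + M := by
  obtain ⟨f, Λ, c, C, hΛ, hc, hC, hf, hdense⟩ := hqi
  obtain ⟨M, hM⟩ := ((hfin (Λ * (2 * C + 1 + c))).image (wordLength S)).bddAbove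
  have hlift : ∀ x y, wordDist S₀ (f x) (f y) ≤ 2 * C + 1 → wordDist S x y ≤ M := by
    intro x y hxy
    have hdiv : d x y / Λ ≤ 2 * C + 1 + c := by linarith [(hf x y).1]
    rw [div_le_iff₀' (by linarith), hli.eq_one_inv_mul] at hdiv
    exact Nat.cast_le.2 (hM ⟨_, hdiv, rfl⟩)
  refine ⟨M * (Λ + c + 1), by positivity, fun x y ↦ ?_⟩
  obtain ⟨n, q, hq, hq0, hqn⟩ := exists_isWordGeodesic hS₀ (f x) (f y)
  have hn : (n : ℝ) = wordDist S₀ (f x) (f y) := by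
    rw [← hq0, ← hqn, hq 0 n n.zero_le le_rfl]; simp
  have hd := hm.nonneg x y
  calc wordDist S x y ≤ M * (n + 1) := wordDist_le_of_chain hS hS₀ hdense hlift n x y q
        (fun i hi ↦ (hq.wordDist_succ hi).le) (by rwa [hq0, wordDist_self])
        (by rwa [hqn, wordDist_self])
    _ ≤ M * (Λ * d x y + c + 1) := by rw [hn]; gcongr; exact (hf x y).2
    _ ≤ M * (Λ + c + 1) * d x y + M * (Λ + c + 1) := by
        rw [← mul_add_one, mul_assoc]
        gcongr
        nlinarith

/-- The Švarc–Milnor lemma. -/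
theorem MemD.exists_wordComparable (hd : MemD d) (hS : Generates S)
    (hfin : ∀ R, {x | d 1 x ≤ R}.Finite) : ∃ δ A, WordComparable S d δ A := by
  obtain ⟨hm, hli, ⟨δ, hδ, hyp⟩, S₀, hS₀, hqi⟩ := hd
  obtain ⟨D, hD, hle⟩ := exists_forall_dist_le_mul_wordDist hS hm hli
  obtain ⟨M, hM, hge⟩ := exists_forall_wordDist_le hS hS₀ hqi hm hli hfin
  refine ⟨δ, 1 + D + M, hS, hm, hli, hyp, hδ, by linarith, fun x y ↦ ?_, fun x y ↦ ?_⟩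
  · nlinarith [hle x y, wordDist_nonneg (S := S) x y]
  · nlinarith [hge x y, hm.nonneg x y]

end SvarcMilnor

/-! ### The path space of a random walk -/

section Sequences

variable {α : Type*}

/-- The increments after time `n`. -/
def shift (n : ℕ) (ω : ℕ → α) : ℕ → α := fun k ↦ ω (n + k)

lemma shift_shift (n m : ℕ) (ω : ℕ → α) : shift m (shift n ω) = shift (n + m) ω := by
  funext k
  simp [shift, add_assoc]

/-- The list of the first `n` increments. -/
def firstIncrements (n : ℕ) (ω : ℕ → α) : List α := (List.range n).map ω

/-- The event that the first `n` increments are `g 0, …, g (n - 1)`. -/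
def incrementCylinder (n : ℕ) (g : Fin n → α) : Set (ℕ → α) := {ω | ∀ i : Fin n, ω i = g i}

lemma isPiSystem_incrementCylinder :
    IsPiSystem {s | ∃ n g, s = incrementCylinder (α := α) n g} := by
  have hinter : ∀ n m (g : Fin n → α) (k : Fin m → α), n ≤ m →
      (incrementCylinder n g ∩ incrementCylinder m k).Nonempty →
      incrementCylinder n g ∩ incrementCylinder m k = incrementCylinder m k := by
    rintro n m g k hnm ⟨ω, hg, hk⟩
    refine inter_eq_right.2 fun ω' hω' i ↦ ?_
    exact (hω' ⟨i, i.2.trans_le hnm⟩).trans ((hk ⟨i, i.2.trans_le hnm⟩).symm.trans (hg i))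
  rintro s ⟨n, g, rfl⟩ t ⟨m, k, rfl⟩ hne
  rcases le_total n m with h | h
  · exact ⟨m, k, hinter _ _ _ _ h hne⟩
  · rw [inter_comm] at hne ⊢
    exact ⟨n, g, hinter _ _ _ _ h hne⟩

lemma shift_preimage_inter_incrementCylinder {n m : ℕ} (g : Fin n → α) (k : Fin m → α) :
    shift n ⁻¹' incrementCylinder m k ∩ incrementCylinder n g =
      incrementCylinder (n + m) (Fin.append g k) := by
  ext ω
  refine ⟨fun ⟨hk, hg⟩ i ↦ ?_, fun h ↦ ⟨fun i ↦ ?_, fun i ↦ ?_⟩⟩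
  · refine Fin.addCases (fun i ↦ ?_) (fun i ↦ ?_) i
    · rw [Fin.append_left]; exact hg i
    · rw [Fin.append_right]; exact hk i
  · exact (h (Fin.natAdd n i)).trans (Fin.append_right g k i)
  · exact (h (Fin.castAdd m i)).trans (Fin.append_left g k i)

lemma firstIncrements_length_eq_iff {l : List α} {ω : ℕ → α} :
    firstIncrements l.length ω = l ↔ ω ∈ incrementCylinder l.length l.get := by
  refine ⟨fun h i ↦ ?_, fun h ↦ List.ext_getElem (by simp [firstIncrements]) fun i _ hi ↦ ?_⟩
  · have hi := congrArg (·[(i : ℕ)]?) h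
    simpa [firstIncrements] using hi
  · simpa [firstIncrements] using h ⟨i, hi⟩

variable [MeasurableSpace α]

lemma measurable_shift (n : ℕ) : Measurable (shift (α := α) n) :=
  measurable_pi_lambda _ fun _ ↦ measurable_pi_apply _

lemma IsWalkMeasure.measure_incrementCylinder {μ : α → ℝ} {P : Measure (ℕ → α)}
    (hP : IsWalkMeasure μ P) (n : ℕ) (g : Fin n → α) :
    P (incrementCylinder n g) = ∏ i, ENNReal.ofReal (μ (g i)) :=
  hP.2 n g

variable [MeasurableSingletonClass α]

lemma measurableSet_incrementCylinder (n : ℕ) (g : Fin n → α) :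
    MeasurableSet (incrementCylinder n g) := by
  unfold incrementCylinder
  rw [ofPred_forall]
  exact MeasurableSet.iInter fun i ↦
    (measurable_pi_apply (i : ℕ) : Measurable fun ω : ℕ → α ↦ ω i) (measurableSet_singleton (g i))

lemma generateFrom_incrementCylinder [Countable α] :
    (MeasurableSpace.pi : MeasurableSpace (ℕ → α)) =
      MeasurableSpace.generateFrom {s | ∃ n g, s = incrementCylinder (α := α) n g} := by
  refine le_antisymm (iSup_le fun k ↦ ?_) (MeasurableSpace.generateFrom_le ?_)
  · rw [← measurable_iff_comap_le]
    refine @measurable_to_countable' _ _ _ _ (_) _ fun a ↦ ?_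
    have hunion : (fun ω : ℕ → α ↦ ω k) ⁻¹' {a} =
        ⋃ g : {g : Fin (k + 1) → α // g (Fin.last k) = a}, incrementCylinder (k + 1) g.1 := by
      ext ω
      simp only [mem_preimage, mem_singleton_iff, mem_iUnion]
      refine ⟨fun h ↦ ⟨⟨fun i ↦ ω i, by simpa using h⟩, fun i ↦ rfl⟩, ?_⟩
      rintro ⟨⟨g, hg⟩, h⟩
      simpa [hg] using h (Fin.last k)
    rw [hunion]
    exact @MeasurableSet.iUnion _ _ (_) _ _ fun g ↦
      MeasurableSpace.measurableSet_generateFrom ⟨_, _, rfl⟩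
  · rintro s ⟨n, g, rfl⟩
    exact measurableSet_incrementCylinder n g

variable [Countable α]

namespace IsWalkMeasure

variable {μ : α → ℝ} {P : Measure (ℕ → α)}

lemma map_shift_restrict_incrementCylinder (hP : IsWalkMeasure μ P) (n : ℕ) (g : Fin n → α) :
    (P.restrict (incrementCylinder n g)).map (shift n) = P (incrementCylinder n g) • P := by
  have := hP.1
  refine ext_of_generate_finite _ generateFrom_incrementCylinder isPiSystem_incrementCylinder
    ?_ ?_
  · rintro s ⟨m, k, rfl⟩
    have hm := measurableSet_incrementCylinder m k
    rw [Measure.map_apply (measurable_shift n) hm, Measure.restrict_apply (measurable_shift n hm),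
      shift_preimage_inter_incrementCylinder, Measure.smul_apply, smul_eq_mul]
    simp only [hP.measure_incrementCylinder, Fin.prod_univ_add, Fin.append_left, Fin.append_right]
  · rw [Measure.map_apply (measurable_shift n) MeasurableSet.univ, preimage_univ]
    simp

lemma map_increments_shift (hP : IsWalkMeasure μ P) (n : ℕ) :
    P.map (fun ω ↦ ((fun i : Fin n ↦ ω i), shift n ω)) =
      (P.map fun ω (i : Fin n) ↦ ω i).prod P := by
  have := hP.1
  have hfst : Measurable fun (ω : ℕ → α) (i : Fin n) ↦ ω i :=
    measurable_pi_lambda _ fun _ ↦ measurable_pi_apply _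
  have := Measure.isProbabilityMeasure_map (μ := P) hfst.aemeasurable
  refine (Measure.prod_eq fun s t hs ht ↦ ?_).symm
  have hshift := measurable_shift n ht
  rw [Measure.map_apply (hfst.prodMk (measurable_shift n)) (hs.prod ht), mk_preimage_prod]
  have hmap : (P.restrict (shift n ⁻¹' t)).map (fun ω (i : Fin n) ↦ ω i) =
      P t • P.map fun ω (i : Fin n) ↦ ω i := by
    refine Measure.ext_of_singleton fun g ↦ ?_
    have hpre : (fun (ω : ℕ → α) (i : Fin n) ↦ ω i) ⁻¹' {g} = incrementCylinder n g := by
      ext ω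
      exact funext_iff
    have hcyl := congrArg (· t) (hP.map_shift_restrict_incrementCylinder n g)
    simp only [Measure.map_apply (measurable_shift n) ht, Measure.restrict_apply hshift,
      Measure.smul_apply, smul_eq_mul] at hcyl
    rw [Measure.map_apply hfst (measurableSet_singleton g), Measure.smul_apply,
      Measure.map_apply hfst (measurableSet_singleton g), hpre,
      Measure.restrict_apply (measurableSet_incrementCylinder n g), inter_comm, hcyl, smul_eq_mul,
      mul_comm]
  have hs' := congrArg (· s) hmap
  simpa only [Measure.map_apply hfst hs, Measure.restrict_apply (hfst hs), Measure.smul_apply,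
    smul_eq_mul, mul_comm (P t)] using hs'

end IsWalkMeasure

end Sequences

section Walk

lemma walkPos_zero (ω : ℕ → G) : walkPos 0 ω = 1 := by simp [walkPos]

lemma walkPos_one (ω : ℕ → G) : walkPos 1 ω = ω 0 := by simp [walkPos]

lemma walkPos_succ (n : ℕ) (ω : ℕ → G) : walkPos (n + 1) ω = walkPos n ω * ω n := by
  simp [walkPos, List.range_succ]

lemma walkPos_add (n m : ℕ) (ω : ℕ → G) :
    walkPos (n + m) ω = walkPos n ω * walkPos m (shift n ω) := by
  induction m with
  | zero => simp [walkPos_zero]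
  | succ m ih => rw [← add_assoc, walkPos_succ, ih, walkPos_succ, mul_assoc]; rfl

lemma walkPos_eq_prod_ofFn (n : ℕ) (ω : ℕ → G) :
    walkPos n ω = (List.ofFn fun i : Fin n ↦ ω i).prod := by
  rw [walkPos, List.ofFn_eq_map, ← List.map_coe_finRange_eq_range, List.map_map]
  rfl

lemma walkPositions_firstIncrements (x : G) (n : ℕ) (ω : ℕ → G) :
    walkPositions x (firstIncrements n ω) =
      (List.range (n + 1)).map fun k ↦ x * walkPos k ω := by
  have hfoldl : ∀ (l : List G) (z : G), l.foldl (fun p a ↦ p * a) z = z * l.prod := by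
    intro l
    induction l with
    | nil => simp
    | cons a l ih => intro z; simp [ih, mul_assoc]
  induction n with
  | zero => simp [walkPositions, firstIncrements, walkPos_zero]
  | succ n ih =>
    have hsplit : firstIncrements (n + 1) ω = firstIncrements n ω ++ [ω n] := by
      simp [firstIncrements, List.range_succ]
    rw [walkPositions] at ih ⊢
    rw [hsplit, List.scanl_append, ih, List.range_succ (n := n + 1), List.map_append]
    simp [hfoldl, firstIncrements, walkPos, List.range_succ, mul_assoc]

lemma isFirstHitPath_firstIncrements_iff {x y : G} {n : ℕ} {ω : ℕ → G} :
    IsFirstHitPath x y (firstIncrements n ω) ↔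
      x * walkPos n ω = y ∧ ∀ k < n, x * walkPos k ω ≠ y := by
  rw [IsFirstHitPath, walkPositions_firstIncrements, List.range_succ, List.map_append]
  simp

lemma setOf_exists_walkPos_eq_iUnion (x y : G) :
    {ω : ℕ → G | ∃ n, x * walkPos n ω = y} =
      ⋃ l : {l : List G // IsFirstHitPath x y l}, incrementCylinder l.1.length l.1.get := by
  classical
  ext ω
  simp only [mem_iUnion, ← firstIncrements_length_eq_iff]
  constructor
  · intro h
    refine ⟨⟨firstIncrements (Nat.find h) ω, isFirstHitPath_firstIncrements_iff.2
      ⟨Nat.find_spec h, fun k ↦ Nat.find_min h⟩⟩, ?_⟩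
    simp [firstIncrements]
  · rintro ⟨⟨l, hl⟩, h⟩
    rw [← show firstIncrements l.length ω = l from h] at hl
    exact ⟨_, (isFirstHitPath_firstIncrements_iff.1 hl).1⟩

lemma pairwise_disjoint_incrementCylinder_isFirstHitPath (x y : G) :
    Pairwise (Function.onFun Disjoint fun l : {l : List G // IsFirstHitPath x y l} ↦
      incrementCylinder l.1.length l.1.get) := by
  intro l l' hne
  refine disjoint_left.2 fun ω hl hl' ↦ hne (Subtype.ext ?_)
  rw [← firstIncrements_length_eq_iff] at hl hl'
  have hhit := isFirstHitPath_firstIncrements_iff.1 (hl.symm ▸ l.2)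
  have hhit' := isFirstHitPath_firstIncrements_iff.1 (hl'.symm ▸ l'.2)
  have hlen : l.1.length = l'.1.length := by
    rcases lt_trichotomy l.1.length l'.1.length with h | h | h
    · exact absurd hhit.1 (hhit'.2 _ h)
    · exact h
    · exact absurd hhit'.1 (hhit.2 _ h)
  rw [← hl, ← hl', hlen]

lemma IsWalkMeasure.measure_walkPos_one_eq [MeasurableSpace G] {μ : G → ℝ} {P : Measure (ℕ → G)}
    (hP : IsWalkMeasure μ P) (x : G) :
    P {ω | walkPos 1 ω = x} = ENNReal.ofReal (μ x) := by
  simpa [walkPos_one, Fin.forall_fin_one] using hP.2 1 fun _ ↦ x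

variable [Countable G] [MeasurableSpace G] [MeasurableSingletonClass G]

lemma measurable_walkPos (n : ℕ) : Measurable (walkPos (G := G) n) := by
  simp only [funext (walkPos_eq_prod_ofFn (G := G) n)]
  exact (Measurable.of_discrete (f := fun g : Fin n → G ↦ (List.ofFn g).prod)).comp
    (measurable_pi_lambda _ fun _ ↦ measurable_pi_apply _)

lemma measurableSet_walkPos (n : ℕ) (Q : G → Prop) :
    MeasurableSet {ω : ℕ → G | Q (walkPos n ω)} :=
  measurable_walkPos n (MeasurableSet.of_discrete (s := {x | Q x}))

lemma measurableSet_exists_walkPos (Q : ℕ → G → Prop) :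
    MeasurableSet {ω : ℕ → G | ∃ n, Q n (walkPos n ω)} := by
  rw [ofPred_exists]
  exact MeasurableSet.iUnion fun n ↦ measurableSet_walkPos n _

lemma measurableSet_forall_walkPos (Q : ℕ → G → Prop) :
    MeasurableSet {ω : ℕ → G | ∀ n, Q n (walkPos n ω)} := by
  rw [ofPred_forall]
  exact MeasurableSet.iInter fun n ↦ measurableSet_walkPos n _

lemma measurableSet_shift_mem (n : ℕ) {E : G → Set (ℕ → G)} (hE : ∀ x, MeasurableSet (E x)) :
    MeasurableSet {ω : ℕ → G | shift n ω ∈ E (walkPos n ω)} := by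
  have hunion : {ω : ℕ → G | shift n ω ∈ E (walkPos n ω)} =
      ⋃ x, ({ω | walkPos n ω = x} ∩ shift n ⁻¹' E x) := by
    ext ω
    simp
  rw [hunion]
  exact MeasurableSet.iUnion fun x ↦
    (measurableSet_walkPos n (· = x)).inter (measurable_shift n (hE x))

namespace IsWalkMeasure

variable {μ : G → ℝ} {P : Measure (ℕ → G)}

/-- The Markov property: after time `n` the walk is a fresh copy of itself, independent of its
position at time `n`. -/
theorem map_walkPos_shift (hP : IsWalkMeasure μ P) (n : ℕ) :
    P.map (fun ω ↦ (walkPos n ω, shift n ω)) = (P.map (walkPos n)).prod P := by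
  have := hP.1
  have hfst : Measurable fun (ω : ℕ → G) (i : Fin n) ↦ ω i :=
    measurable_pi_lambda _ fun _ ↦ measurable_pi_apply _
  have hprod : Measurable fun g : Fin n → G ↦ (List.ofFn g).prod := Measurable.of_discrete
  have hpos : walkPos (G := G) n = (fun g ↦ (List.ofFn g).prod) ∘ fun ω (i : Fin n) ↦ ω i :=
    funext (walkPos_eq_prod_ofFn n)
  conv_rhs => rw [hpos, ← Measure.map_map hprod hfst, ← Measure.map_id (μ := P)]
  rw [Measure.map_prod_map _ _ hprod measurable_id, Measure.map_id, ← hP.map_increments_shift,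
    Measure.map_map (hprod.prodMap measurable_id) (hfst.prodMk (measurable_shift n)), hpos]
  rfl

lemma lintegral_walkPos (P : Measure (ℕ → G)) (n : ℕ) (f : G → ℝ≥0∞) :
    ∫⁻ ω, f (walkPos n ω) ∂P = ∑' x, P {ω | walkPos n ω = x} * f x := by
  rw [← lintegral_map Measurable.of_discrete (measurable_walkPos n), lintegral_countable']
  refine tsum_congr fun x ↦ ?_
  rw [Measure.map_apply (measurable_walkPos n) (measurableSet_singleton x), mul_comm]
  rfl

lemma tsum_measure_walkPos_eq (P : Measure (ℕ → G)) [IsProbabilityMeasure P] (n : ℕ) :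
    ∑' x, P {ω | walkPos n ω = x} = 1 := by
  simpa using (lintegral_walkPos P n fun _ ↦ 1).symm

lemma lintegral_walkPos_shift (hP : IsWalkMeasure μ P) (n : ℕ) {f : G → (ℕ → G) → ℝ≥0∞}
    (hf : ∀ x, Measurable (f x)) :
    ∫⁻ ω, f (walkPos n ω) (shift n ω) ∂P =
      ∑' x, P {ω | walkPos n ω = x} * ∫⁻ ω, f x ω ∂P := by
  have := hP.1
  have hf' : Measurable fun q : G × (ℕ → G) ↦ f q.1 q.2 := measurable_from_prod_countable_right hf
  rw [← lintegral_walkPos P n fun x ↦ ∫⁻ ω, f x ω ∂P,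
    ← lintegral_map (f := fun x ↦ ∫⁻ ω, f x ω ∂P) Measurable.of_discrete (measurable_walkPos n),
    ← lintegral_prod _ hf'.aemeasurable, ← hP.map_walkPos_shift,
    lintegral_map hf' ((measurable_walkPos n).prodMk (measurable_shift n))]

lemma measure_shift_mem (hP : IsWalkMeasure μ P) (n : ℕ) {E : G → Set (ℕ → G)}
    (hE : ∀ x, MeasurableSet (E x)) :
    P {ω | shift n ω ∈ E (walkPos n ω)} = ∑' x, P {ω | walkPos n ω = x} * P (E x) := by
  have h := hP.lintegral_walkPos_shift n (f := fun x ↦ (E x).indicator 1)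
    fun x ↦ measurable_one.indicator (hE x)
  simp only [lintegral_indicator_one (hE _)] at h
  rw [← h, ← lintegral_indicator_one (measurableSet_shift_mem n hE)]
  rfl

lemma measure_walkPos_eq_inter (hP : IsWalkMeasure μ P) (n : ℕ) (x : G) {E : Set (ℕ → G)}
    (hE : MeasurableSet E) :
    P ({ω | walkPos n ω = x} ∩ shift n ⁻¹' E) = P {ω | walkPos n ω = x} * P E := by
  have := hP.1
  have h := congrArg (· ({x} ×ˢ E)) (hP.map_walkPos_shift n)
  simp only [Measure.prod_prod] at h
  rwa [Measure.map_apply ((measurable_walkPos n).prodMk (measurable_shift n))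
    ((measurableSet_singleton x).prod hE),
    Measure.map_apply (measurable_walkPos n) (measurableSet_singleton x), mk_preimage_prod] at h

lemma measure_walkPos_add_eq (hP : IsWalkMeasure μ P) (n m : ℕ) (x : G) :
    P {ω | walkPos (n + m) ω = x} =
      ∑' y, P {ω | walkPos n ω = y} * P {ω | walkPos m ω = y⁻¹ * x} := by
  rw [← hP.measure_shift_mem n (E := fun y ↦ {ω | walkPos m ω = y⁻¹ * x})
    fun y ↦ measurableSet_walkPos m (· = _)]
  simp [walkPos_add, eq_inv_mul_iff_mul_eq]

lemma convPow_eq_toReal (hP : IsWalkMeasure μ P) (hμ : ∀ x, 0 ≤ μ x) (n : ℕ) (x : G) :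
    convPow μ n x = (P {ω | walkPos n ω = x}).toReal := by
  have := hP.1
  induction n generalizing x with
  | zero =>
    by_cases hx : x = 1
    · simp [convPow, hx, walkPos_zero]
    · simp [convPow, hx, walkPos_zero, Ne.symm hx]
  | succ n ih =>
    rw [hP.measure_walkPos_add_eq n 1, ENNReal.tsum_toReal_eq fun y ↦
      ENNReal.mul_ne_top (measure_ne_top _ _) (measure_ne_top _ _)]
    refine tsum_congr fun y ↦ ?_
    rw [ih, hP.measure_walkPos_one_eq, ENNReal.toReal_mul, ENNReal.toReal_ofReal (hμ _)]

end IsWalkMeasure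

lemma IsWalkMeasure.hitProb_eq_toReal {μ : G → ℝ} {P : Measure (ℕ → G)} (hP : IsWalkMeasure μ P)
    (hμ : ∀ x, 0 ≤ μ x) (x y : G) :
    hitProb μ x y = (P {ω | ∃ n, x * walkPos n ω = y}).toReal := by
  have := hP.1
  rw [setOf_exists_walkPos_eq_iUnion, measure_iUnion
    (pairwise_disjoint_incrementCylinder_isFirstHitPath x y)
    fun l ↦ measurableSet_incrementCylinder _ _, ENNReal.tsum_toReal_eq fun _ ↦ measure_ne_top _ _]
  refine tsum_congr fun l ↦ ?_
  rw [hP.measure_incrementCylinder, ENNReal.toReal_prod, ← List.prod_ofFn]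
  simp only [ENNReal.toReal_ofReal (hμ _), List.get_eq_getElem]
  rw [List.ofFn_getElem_eq_map]

/-- The Green function `∑ₙ μⁿ(x)`, with values in `[0, ∞]`. -/
def walkGreen (P : Measure (ℕ → G)) (x : G) : ℝ≥0∞ := ∑' n, P {ω | walkPos n ω = x}

/-- The last exit decomposition: an event which can happen at most once along each trajectory
happens with the probability given by its expected number of occurrences. -/
lemma IsWalkMeasure.tsum_walkGreen_mul {μ : G → ℝ} {P : Measure (ℕ → G)} (hP : IsWalkMeasure μ P)
    (x : G) {E : G → Set (ℕ → G)} (hE : ∀ x, MeasurableSet (E x))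
    (honce : ∀ ω z k, 1 ≤ k → ω ∈ E z → shift k ω ∉ E (z * walkPos k ω)) :
    ∑' z, walkGreen P (x⁻¹ * z) * P (E z) = P {ω | ∃ n, shift n ω ∈ E (x * walkPos n ω)} := by
  have hlt : ∀ n m, n < m → ∀ ω, shift n ω ∈ E (x * walkPos n ω) →
      shift m ω ∉ E (x * walkPos m ω) := by
    intro n m hnm ω h
    have := honce (shift n ω) _ (m - n) (by omega) h
    rwa [shift_shift, mul_assoc, ← walkPos_add, Nat.add_sub_cancel' hnm.le] at this
  have hterm : ∀ n, P {ω | shift n ω ∈ E (x * walkPos n ω)} =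
      ∑' z, P {ω | walkPos n ω = x⁻¹ * z} * P (E z) := by
    intro n
    rw [hP.measure_shift_mem n (E := fun y ↦ E (x * y)) fun y ↦ hE _,
      ← (Equiv.mulLeft x⁻¹).tsum_eq]
    simp
  rw [ofPred_exists, measure_iUnion]
  · simp_rw [hterm]
    rw [ENNReal.tsum_comm]
    simp_rw [walkGreen, ENNReal.tsum_mul_right]
  · intro n m hnm
    refine disjoint_left.2 fun ω hn hm ↦ ?_
    rcases lt_or_gt_of_ne hnm with h | h
    · exact hlt n m h ω hn hm
    · exact hlt m n h ω hm hn
  · exact fun n ↦ measurableSet_shift_mem n (E := fun y ↦ E (x * y)) fun y ↦ hE _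

end Walk

/-! ### The Green metric -/

section ExpNeg

variable {α : Type*} {g : α → α → ℝ}

/-- The exponential `exp (-g x y)`, in the values of measures. -/
def expNeg (g : α → α → ℝ) (x y : α) : ℝ≥0∞ := ENNReal.ofReal (Real.exp (-(g x y)))

lemma expNeg_pos (g : α → α → ℝ) (x y : α) : 0 < expNeg g x y :=
  ENNReal.ofReal_pos.2 (Real.exp_pos _)

lemma expNeg_ne_top (g : α → α → ℝ) (x y : α) : expNeg g x y ≠ ∞ := ENNReal.ofReal_ne_top

lemma IsMetricFun.expNeg_lt_one (hm : IsMetricFun g) {x y : α} (hxy : x ≠ y) :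
    expNeg g x y < 1 := by
  rw [expNeg, ENNReal.ofReal_lt_one, Real.exp_lt_one_iff, neg_lt_zero]
  exact hm.pos x y hxy

lemma expNeg_le_mul {x y z : α} {c : ℝ} (h : g x y + g y z - c ≤ g x z) :
    expNeg g x z ≤ ENNReal.ofReal (Real.exp c) * expNeg g x y * expNeg g y z := by
  simp only [expNeg]
  rw [← ENNReal.ofReal_mul (Real.exp_pos _).le, ← ENNReal.ofReal_mul (by positivity),
    ← Real.exp_add, ← Real.exp_add]
  exact ENNReal.ofReal_le_ofReal (Real.exp_le_exp.2 (by linarith))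

end ExpNeg

section GreenMetric

/-- The event that the walk never returns to its starting point. -/
def noReturn : Set (ℕ → G) := {ω | ∀ k, 1 ≤ k → walkPos k ω ≠ 1}

/-- The event that the walk started at `z ∈ A` leaves `A` at time `1` and never comes back. -/
def lastExit (A : Set G) (z : G) : Set (ℕ → G) :=
  {ω | z ∈ A ∧ ∀ k, 1 ≤ k → z * walkPos k ω ∉ A}

/-- A transient random walk with symmetric increments, together with its Green metric `g`: a
left-invariant metric such that `exp (-g x y)` is the probability that the walk started at `x`
hits `y`. -/
structure IsGreenWalk [MeasurableSpace G] (μ : G → ℝ) (P : Measure (ℕ → G)) (g : G → G → ℝ) :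
    Prop where
  isWalkMeasure : IsWalkMeasure μ P
  nonneg : ∀ x, 0 ≤ μ x
  symm : IsSymmetric μ
  isMetricFun : IsMetricFun g
  leftInvariant : LeftInvariant g
  measure_hit_eq : ∀ x y, P {ω | ∃ n, x * walkPos n ω = y} = expNeg g x y
  noReturn_pos : 0 < P noReturn

lemma IsGreenWalk.expNeg_le_walkGreen [MeasurableSpace G] {μ : G → ℝ} {P : Measure (ℕ → G)}
    {g : G → G → ℝ} (hG : IsGreenWalk μ P g) (x y : G) :
    expNeg g x y ≤ walkGreen P (x⁻¹ * y) := by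
  rw [← hG.measure_hit_eq, ofPred_exists]
  refine (measure_iUnion_le _).trans_eq (tsum_congr fun n ↦ ?_)
  simp only [eq_inv_mul_iff_mul_eq]

variable [Countable G] [MeasurableSpace G] [MeasurableSingletonClass G]

lemma measurableSet_lastExit (A : Set G) (z : G) : MeasurableSet (lastExit A z) :=
  (MeasurableSet.const _).inter (measurableSet_forall_walkPos fun k y ↦ 1 ≤ k → z * y ∉ A)

namespace IsWalkMeasure

variable {μ : G → ℝ} {P : Measure (ℕ → G)}

lemma measure_hit_eq_expNeg (hP : IsWalkMeasure μ P) (hμ : ∀ x, 0 ≤ μ x)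
    (hm : IsMetricFun (greenDist μ)) (x y : G) :
    P {ω | ∃ n, x * walkPos n ω = y} = expNeg (greenDist μ) x y := by
  have := hP.1
  have hhit := hP.hitProb_eq_toReal hμ x y
  have hpos : 0 < hitProb μ x y := by
    by_cases hxy : x = y
    · have huniv : {ω : ℕ → G | ∃ n, x * walkPos n ω = y} = univ :=
        eq_univ_of_forall fun ω ↦ ⟨0, by simp [walkPos_zero, hxy]⟩
      simp [hhit, huniv]
    · have hne := (hm.pos x y hxy).ne'
      refine lt_of_le_of_ne (hhit ▸ ENNReal.toReal_nonneg) fun h ↦ hne ?_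
      simp [greenDist, ← h]
  rw [expNeg, greenDist, neg_neg, Real.exp_log hpos, hhit,
    ENNReal.ofReal_toReal (measure_ne_top _ _)]

lemma measure_walkPos_eq_zero (hP : IsWalkMeasure μ P) (hμ : ∀ x ≠ 1, μ x = 0) (n : ℕ) {x : G}
    (hx : x ≠ 1) : P {ω | walkPos n ω = x} = 0 := by
  induction n generalizing x with
  | zero => simp [walkPos_zero, hx.symm]
  | succ n ih =>
    rw [hP.measure_walkPos_add_eq, ENNReal.tsum_eq_zero]
    intro y
    by_cases hy : y = 1
    · simp [hP.measure_walkPos_one_eq, hy, hμ x hx]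
    · rw [ih hy, zero_mul]

lemma mul_measure_not_hit_le_measure_noReturn (hP : IsWalkMeasure μ P) (x : G) :
    ENNReal.ofReal (μ x) * P {ω | ∃ n, x * walkPos n ω = 1}ᶜ ≤ P noReturn := by
  have hmeas : MeasurableSet {ω : ℕ → G | ∃ n, x * walkPos n ω = 1} :=
    measurableSet_exists_walkPos fun _ y ↦ x * y = 1
  rw [← hP.measure_walkPos_one_eq, ← hP.measure_walkPos_eq_inter 1 x hmeas.compl]
  refine measure_mono fun ω ⟨hx, hhit⟩ k hk hk1 ↦ hhit ⟨k - 1, ?_⟩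
  rw [← show walkPos 1 ω = x from hx, ← walkPos_add, Nat.add_sub_cancel' hk, hk1]

lemma isGreenWalk_greenDist [Nontrivial G] (hP : IsWalkMeasure μ P) (hμ : ∀ x, 0 ≤ μ x)
    (hsymm : IsSymmetric μ) (hm : IsMetricFun (greenDist μ))
    (hli : LeftInvariant (greenDist μ)) : IsGreenWalk μ P (greenDist μ) := by
  have := hP.1
  have hhit := hP.measure_hit_eq_expNeg hμ hm
  refine ⟨hP, hμ, hsymm, hm, hli, hhit, ?_⟩
  obtain ⟨x, hx, hμx⟩ : ∃ x ≠ 1, μ x ≠ 0 := by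
    by_contra! hzero
    obtain ⟨y, hy⟩ := exists_ne (1 : G)
    have hnull : P {ω | ∃ n, 1 * walkPos n ω = y} = 0 := by
      rw [ofPred_exists, measure_iUnion_null_iff]
      simpa only [one_mul] using fun n ↦ hP.measure_walkPos_eq_zero hzero n hy
    exact (expNeg_pos (greenDist μ) 1 y).ne' (hhit 1 y ▸ hnull)
  refine lt_of_lt_of_le ?_ (hP.mul_measure_not_hit_le_measure_noReturn x)
  refine ENNReal.mul_pos (by simpa using lt_of_le_of_ne (hμ x) hμx.symm) (ne_of_gt ?_)
  rw [measure_compl (measurableSet_exists_walkPos fun _ y ↦ x * y = 1) (measure_ne_top _ _),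
    measure_univ, hhit]
  exact tsub_pos_of_lt (hm.expNeg_lt_one hx)

end IsWalkMeasure

namespace IsGreenWalk

variable {μ : G → ℝ} {P : Measure (ℕ → G)} {g : G → G → ℝ}

lemma tsum_walkGreen_mul_lastExit (hG : IsGreenWalk μ P g) (A : Set G) (x : G) :
    ∑' z, walkGreen P (x⁻¹ * z) * P (lastExit A z) =
      P {ω | ∃ n, shift n ω ∈ lastExit A (x * walkPos n ω)} :=
  hG.isWalkMeasure.tsum_walkGreen_mul x (measurableSet_lastExit A)
    fun _ _ k hk h h' ↦ h.2 k hk h'.1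

lemma walkGreen_mul_noReturn_le (hG : IsGreenWalk μ P g) (x y : G) :
    walkGreen P (x⁻¹ * y) * P noReturn ≤ expNeg g x y := by
  have hsum := hG.tsum_walkGreen_mul_lastExit {y} x
  rw [tsum_eq_single y fun z hz ↦ by simp [lastExit, hz],
    show lastExit {y} y = noReturn by simp [lastExit, noReturn]] at hsum
  rw [hsum, ← hG.measure_hit_eq]
  exact measure_mono fun ω ⟨n, hn⟩ ↦ ⟨n, hn.1⟩

lemma walkGreen_le (hG : IsGreenWalk μ P g) (x y : G) :
    walkGreen P (x⁻¹ * y) ≤ (P noReturn)⁻¹ * expNeg g x y := by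
  have := hG.isWalkMeasure.1
  rw [← ENNReal.div_eq_inv_mul,
    ENNReal.le_div_iff_mul_le (.inl hG.noReturn_pos.ne') (.inl (measure_ne_top _ _))]
  exact hG.walkGreen_mul_noReturn_le x y

lemma walkGreen_ne_top (hG : IsGreenWalk μ P g) (y : G) : walkGreen P y ≠ ∞ := by
  have hle := hG.walkGreen_le 1 y
  rw [inv_one, one_mul] at hle
  exact ne_top_of_le_ne_top
    (ENNReal.mul_ne_top (ENNReal.inv_ne_top.2 hG.noReturn_pos.ne') (expNeg_ne_top g 1 y)) hle

lemma ae_eventually_notMem_of_finite (hG : IsGreenWalk μ P g) (x : G) {A : Set G}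
    (hA : A.Finite) : ∀ᵐ ω ∂P, ∀ᶠ n in atTop, x * walkPos n ω ∉ A := by
  refine ae_eventually_notMem (s := fun n ↦ {ω | x * walkPos n ω ∈ A}) ?_
  have hle : ∀ n, P {ω | x * walkPos n ω ∈ A} ≤
      ∑ z ∈ hA.toFinset, P {ω | walkPos n ω = x⁻¹ * z} := by
    refine fun n ↦ (measure_mono fun ω hω ↦ ?_).trans (measure_biUnion_finset_le _ _)
    exact mem_iUnion₂.2 ⟨x * walkPos n ω, hA.mem_toFinset.2 hω, by simp⟩
  refine ne_top_of_le_ne_top ?_ (ENNReal.tsum_le_tsum hle)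
  rw [Summable.tsum_finsetSum fun _ _ ↦ ENNReal.summable]
  exact (ENNReal.sum_lt_top.2 fun z _ ↦ (hG.walkGreen_ne_top _).lt_top).ne

lemma measure_exists_mem_le_tsum_of_finite (hG : IsGreenWalk μ P g) {A : Set G} (hA : A.Finite)
    (x : G) :
    P {ω | ∃ n, x * walkPos n ω ∈ A} ≤ ∑' z, walkGreen P (x⁻¹ * z) * P (lastExit A z) := by
  rw [hG.tsum_walkGreen_mul_lastExit]
  refine measure_mono_ae ?_
  filter_upwards [hG.ae_eventually_notMem_of_finite x hA] with ω hω hne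
  have hfin : {n | x * walkPos n ω ∈ A}.Finite := by
    simpa [← Nat.cofinite_eq_atTop, eventually_cofinite] using hω
  obtain ⟨N, hN, hmax⟩ := exists_max_image _ id hfin hne
  refine ⟨N, hN, fun k hk hmem ↦ ?_⟩
  rw [mul_assoc, ← walkPos_add] at hmem
  have := hmax _ hmem
  simp only [id_eq] at this
  lia

lemma measure_exists_mem_le_of_finite (hG : IsGreenWalk μ P g) {A : Set G} (hfin : A.Finite)
    (x y : G) (c : ℝ) (hA : ∀ z ∈ A, g x y + g y z - c ≤ g x z) :
    P {ω | ∃ n, x * walkPos n ω ∈ A} ≤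
      (P noReturn)⁻¹ * ENNReal.ofReal (Real.exp c) * expNeg g x y := by
  have := hG.isWalkMeasure.1
  calc
    _ ≤ ∑' z, walkGreen P (x⁻¹ * z) * P (lastExit A z) :=
      hG.measure_exists_mem_le_tsum_of_finite hfin x
    _ ≤ ∑' z, (P noReturn)⁻¹ * ENNReal.ofReal (Real.exp c) * expNeg g x y *
        (walkGreen P (y⁻¹ * z) * P (lastExit A z)) := by
      refine ENNReal.tsum_le_tsum fun z ↦ ?_
      by_cases hz : z ∈ A
      · rw [← mul_assoc]
        gcongr
        calc
          walkGreen P (x⁻¹ * z) ≤ (P noReturn)⁻¹ * expNeg g x z := hG.walkGreen_le x z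
          _ ≤ (P noReturn)⁻¹ * (ENNReal.ofReal (Real.exp c) * expNeg g x y * expNeg g y z) := by
            gcongr
            exact expNeg_le_mul (hA z hz)
          _ ≤ (P noReturn)⁻¹ * ENNReal.ofReal (Real.exp c) * expNeg g x y *
              walkGreen P (y⁻¹ * z) := by
            simp only [mul_assoc]
            gcongr
            exact hG.expNeg_le_walkGreen y z
      · simp [lastExit, hz]
    _ ≤ _ := by
      rw [ENNReal.tsum_mul_left, hG.tsum_walkGreen_mul_lastExit]
      exact mul_le_of_le_one_right' prob_le_one

/-- If `y` lies, up to the error `c`, on a `g`-geodesic from `x` to every point of `A`, then the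
walk started at `x` hits `A` with probability at most a constant times that of hitting `y`. -/
lemma measure_exists_mem_le (hG : IsGreenWalk μ P g) (A : Set G) (x y : G) (c : ℝ)
    (hA : ∀ z ∈ A, g x y + g y z - c ≤ g x z) :
    P {ω | ∃ n, x * walkPos n ω ∈ A} ≤
      (P noReturn)⁻¹ * ENNReal.ofReal (Real.exp c) * expNeg g x y := by
  have hunion : {ω : ℕ → G | ∃ n, x * walkPos n ω ∈ A} =
      ⋃ s : Finset G, {ω | ∃ n, x * walkPos n ω ∈ A ∩ s} := by
    ext ω
    refine ⟨fun ⟨n, hn⟩ ↦ mem_iUnion.2 ⟨{x * walkPos n ω}, n, hn, by simp⟩, fun h ↦ ?_⟩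
    obtain ⟨s, n, hn, -⟩ := mem_iUnion.1 h
    exact ⟨n, hn⟩
  rw [hunion, Directed.measure_iUnion]
  · exact iSup_le fun s ↦ hG.measure_exists_mem_le_of_finite
      (s.finite_toSet.inter_of_right _) x y c fun z hz ↦ hA z hz.1
  · exact Monotone.directed_le fun s t hst ω ⟨n, hA, hs⟩ ↦ ⟨n, hA, Finset.coe_subset.2 hst hs⟩

end IsGreenWalk

end GreenMetric

section Proper

lemma tsum_measure_walkPos_half_ne_top [MeasurableSpace G] {P : Measure (ℕ → G)}
    (h1 : walkGreen P 1 ≠ ∞) :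
    ∑' n, 2 * P {ω | walkPos (n / 2 + n / 2) ω = 1} ≠ ∞ := by
  have heven : ∑' n, 2 * P {ω | walkPos (n + n) ω = 1} ≠ ∞ := by
    rw [ENNReal.tsum_mul_left]
    refine ENNReal.mul_ne_top ENNReal.ofNat_ne_top (ne_top_of_le_ne_top h1 ?_)
    exact ENNReal.tsum_comp_le_tsum_of_injective (f := fun n : ℕ ↦ n + n)
      (fun _ _ h ↦ by simp at h; lia) fun n ↦ P {ω | walkPos n ω = 1}
  rw [← tsum_even_add_odd ENNReal.summable ENNReal.summable]
  simp only [show ∀ k, 2 * k / 2 = k by lia, show ∀ k, (2 * k + 1) / 2 = k by lia]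
  exact ENNReal.add_ne_top.2 ⟨heven, heven⟩

variable [Countable G] [MeasurableSpace G] [MeasurableSingletonClass G]
variable {μ : G → ℝ} {P : Measure (ℕ → G)}

namespace IsWalkMeasure

lemma measure_walkPos_inv_eq (hP : IsWalkMeasure μ P) (hsymm : IsSymmetric μ) (n : ℕ) (x : G) :
    P {ω | walkPos n ω = x⁻¹} = P {ω | walkPos n ω = x} := by
  induction n generalizing x with
  | zero => simp [walkPos_zero, eq_comm (a := (1 : G))]
  | succ n ih =>
    rw [hP.measure_walkPos_add_eq n 1, add_comm n 1, hP.measure_walkPos_add_eq 1 n,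
      ← (Equiv.mulLeft x⁻¹).tsum_eq]
    refine tsum_congr fun z ↦ ?_
    simp only [Equiv.coe_mulLeft]
    rw [hP.measure_walkPos_one_eq, hP.measure_walkPos_one_eq, mul_comm,
      show (x⁻¹ * z)⁻¹ * x⁻¹ = z⁻¹ by group, hsymm, ← ih,
      show (x⁻¹ * z)⁻¹ = z⁻¹ * x by group]

/-- The transition probability in `n + n` steps is a convolution square, so it is controlled by
its value at `1` through `2 a b ≤ a ^ 2 + b ^ 2`. -/
lemma measure_walkPos_add_self_le (hP : IsWalkMeasure μ P) (hsymm : IsSymmetric μ) (n : ℕ)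
    (x : G) :
    P {ω | walkPos (n + n) ω = x} ≤ 2 * P {ω | walkPos (n + n) ω = 1} := by
  have hone : P {ω | walkPos (n + n) ω = 1} =
      ∑' y, P {ω | walkPos n ω = y} * P {ω | walkPos n ω = y} := by
    rw [hP.measure_walkPos_add_eq]
    refine tsum_congr fun y ↦ ?_
    rw [mul_one, hP.measure_walkPos_inv_eq hsymm]
  have hone' : P {ω | walkPos (n + n) ω = 1} =
      ∑' y, P {ω | walkPos n ω = y⁻¹ * x} * P {ω | walkPos n ω = y⁻¹ * x} := by
    rw [hone, ← (Equiv.mulLeft x⁻¹).tsum_eq]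
    refine tsum_congr fun y ↦ ?_
    simp only [Equiv.coe_mulLeft]
    rw [← hP.measure_walkPos_inv_eq hsymm n (x⁻¹ * y), show (x⁻¹ * y)⁻¹ = y⁻¹ * x by group]
  rw [two_mul]
  nth_rw 2 [hone]
  rw [hone', ← ENNReal.tsum_add, hP.measure_walkPos_add_eq]
  refine ENNReal.tsum_le_tsum fun y ↦ ?_
  rcases le_total (P {ω | walkPos n ω = y}) (P {ω | walkPos n ω = y⁻¹ * x}) with h | h
  · exact (mul_le_mul_left h _).trans le_self_add
  · exact (mul_le_mul_right h _).trans le_add_self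

lemma measure_walkPos_le (hP : IsWalkMeasure μ P) (hsymm : IsSymmetric μ) (n : ℕ) (x : G) :
    P {ω | walkPos n ω = x} ≤ 2 * P {ω | walkPos (n / 2 + n / 2) ω = 1} := by
  have := hP.1
  rcases Nat.even_or_odd' n with ⟨k, rfl | rfl⟩
  · rw [show 2 * k / 2 = k by lia, two_mul k]
    exact hP.measure_walkPos_add_self_le hsymm k x
  · rw [show (2 * k + 1) / 2 = k by lia, show 2 * k + 1 = 1 + (k + k) by lia,
      hP.measure_walkPos_add_eq]
    calc ∑' y, P {ω | walkPos 1 ω = y} * P {ω | walkPos (k + k) ω = y⁻¹ * x}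
      _ ≤ ∑' y, P {ω | walkPos 1 ω = y} * (2 * P {ω | walkPos (k + k) ω = 1}) :=
        ENNReal.tsum_le_tsum fun y ↦
          mul_le_mul_right (hP.measure_walkPos_add_self_le hsymm k _) _
      _ = _ := by rw [ENNReal.tsum_mul_right, tsum_measure_walkPos_eq, one_mul]

lemma finite_le_walkGreen (hP : IsWalkMeasure μ P) (hsymm : IsSymmetric μ)
    (h1 : walkGreen P 1 ≠ ∞) {c : ℝ≥0∞} (hc : c ≠ 0) : {x | c ≤ walkGreen P x}.Finite := by
  have := hP.1
  have hhalf : 0 < c / 2 := ENNReal.half_pos hc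
  obtain ⟨i, hi⟩ := ((ENNReal.tendsto_sum_nat_add _
    (tsum_measure_walkPos_half_ne_top h1)).eventually (gt_mem_nhds hhalf)).exists
  have hfin : {x | c / 2 ≤ ∑ n ∈ Finset.range i, P {ω | walkPos n ω = x}}.Finite := by
    refine ENNReal.finite_const_le_of_tsum_ne_top ?_ hhalf.ne'
    rw [Summable.tsum_finsetSum fun _ _ ↦ ENNReal.summable]
    simp [tsum_measure_walkPos_eq]
  refine hfin.subset fun x hx ↦ ?_
  rw [Set.mem_ofPred_eq] at hx ⊢
  contrapose! hx
  have htail : ∑' k, P {ω | walkPos (k + i) ω = x} ≤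
      ∑' k, 2 * P {ω | walkPos ((k + i) / 2 + (k + i) / 2) ω = 1} :=
    ENNReal.tsum_le_tsum fun k ↦ hP.measure_walkPos_le hsymm _ x
  rw [walkGreen, ← ENNReal.summable.sum_add_tsum_nat_add' (k := i), ← ENNReal.add_halves c]
  exact ENNReal.add_lt_add hx (htail.trans_lt hi)

end IsWalkMeasure

theorem IsGreenWalk.finite_setOf_le {g : G → G → ℝ} (hG : IsGreenWalk μ P g) (R : ℝ) :
    {x | g 1 x ≤ R}.Finite := by
  refine (hG.isWalkMeasure.finite_le_walkGreen hG.symm (hG.walkGreen_ne_top 1)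
    (ENNReal.ofReal_pos.2 (Real.exp_pos (-R))).ne').subset fun x (hx : g 1 x ≤ R) ↦ ?_
  have hle := hG.expNeg_le_walkGreen 1 x
  rw [inv_one, one_mul] at hle
  exact (ENNReal.ofReal_le_ofReal (Real.exp_le_exp.2 (neg_le_neg hx))).trans hle

end Proper

section GromovTail

variable [Countable G] [MeasurableSpace G] [MeasurableSingletonClass G]
variable {μ : G → ℝ} {P : Measure (ℕ → G)} {g : G → G → ℝ} {S : Finset G} {δ A : ℝ}

lemma IsGreenWalk.measure_gromov_le_of_dist_le (hG : IsGreenWalk μ P g)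
    (hyp : IsHyperbolicWith g δ) {y z : G} {r τ : ℝ} (hle : r ≤ g 1 z) (hlt : g 1 z ≤ r + A)
    (hτ : gromov g z 1 y ≤ τ) :
    P {ω | ∃ m, r ≤ gromov g 1 (walkPos m ω) y} ≤
      (P noReturn)⁻¹ * ENNReal.ofReal (Real.exp (2 * (A + τ + δ))) * expNeg g 1 z := by
  have hm := hG.isMetricFun
  have hmem : ∀ w ∈ {w | r ≤ gromov g 1 w y}, g 1 z + g z w - 2 * (A + τ + δ) ≤ g 1 w := by
    intro w (hw : r ≤ gromov g 1 w y)
    have hy := hm.gromov_add_gromov 1 z y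
    have hw' := hm.gromov_add_gromov 1 z w
    have hmin : r - τ ≤ min (gromov g 1 y z) (gromov g 1 y w) := by
      rw [hm.gromov_comm 1 y z, hm.gromov_comm 1 y w]
      exact le_min (by linarith) (by linarith [hm.gromov_nonneg z 1 y])
    have hgromov : gromov g z 1 w ≤ A + τ + δ := by linarith [hyp 1 y z w]
    have := hm.symm z w
    unfold gromov at hgromov
    linarith
  simpa only [one_mul, Set.mem_ofPred_eq] using hG.measure_exists_mem_le _ 1 z _ hmem

/-- The set of points `w` with `r ≤ gromov g 1 w y` is seen from `1` through the point at distance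
`r` on a geodesic from `1` to `y`. -/
theorem IsGreenWalk.exists_measure_gromov_le (hG : IsGreenWalk μ P g)
    (hS : WordComparable S g δ A) :
    ∃ C : ℝ, 0 ≤ C ∧ ∀ y r, 0 ≤ r →
      P {ω | ∃ m, r ≤ gromov g 1 (walkPos m ω) y} ≤ ENNReal.ofReal (C * Real.exp (-r)) := by
  have := hG.isWalkMeasure.1
  obtain ⟨τ, -, hbetween⟩ := hS.exists_between
  set K := (P noReturn)⁻¹ * ENNReal.ofReal (Real.exp (2 * (A + τ + δ)))
  have hK : K ≠ ∞ :=
    ENNReal.mul_ne_top (ENNReal.inv_ne_top.2 hG.noReturn_pos.ne') ENNReal.ofReal_ne_top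
  refine ⟨K.toReal, ENNReal.toReal_nonneg, fun y r hr ↦ ?_⟩
  rcases lt_or_ge (g 1 y) r with hy | hy
  · have hempty : {ω : ℕ → G | ∃ m, r ≤ gromov g 1 (walkPos m ω) y} = ∅ :=
      eq_empty_of_forall_notMem fun ω ⟨m, hm⟩ ↦
        absurd (hm.trans (hG.isMetricFun.gromov_le_right 1 (walkPos m ω) y)) hy.not_ge
    simp [hempty]
  · obtain ⟨z, hle, hlt, hτ⟩ := hbetween 1 y r hr hy
    refine (hG.measure_gromov_le_of_dist_le hS.isHyperbolicWith hle hlt hτ).trans ?_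
    rw [ENNReal.ofReal_mul ENNReal.toReal_nonneg, ENNReal.ofReal_toReal hK]
    change K * _ ≤ _
    gcongr
    exact ENNReal.ofReal_le_ofReal (Real.exp_le_exp.2 (neg_le_neg hle))

end GromovTail

section Moments

lemma lintegral_ofReal_le_of_measure_le_exp {Ω : Type*} [MeasurableSpace Ω] {P : Measure Ω}
    {f : Ω → ℝ} {C : ℝ} (hf : Measurable f) (hC : 0 ≤ C)
    (h : ∀ r, 0 ≤ r → P {ω | r ≤ f ω} ≤ ENNReal.ofReal (C * Real.exp (-r))) :
    ∫⁻ ω, ENNReal.ofReal (f ω) ∂P ≤ ENNReal.ofReal C := by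
  have hmax : ∀ ω, ENNReal.ofReal (f ω) = ENNReal.ofReal (max (f ω) 0) := fun ω ↦ by simp
  simp only [hmax]
  rw [lintegral_eq_lintegral_meas_le (f := fun ω ↦ max (f ω) 0) P
    (.of_forall fun _ ↦ le_max_right _ _) (hf.max measurable_const).aemeasurable]
  calc
    _ ≤ ∫⁻ r in Ioi (0 : ℝ), ENNReal.ofReal (C * Real.exp (-r)) := by
      refine setLIntegral_mono' measurableSet_Ioi fun r (hr : 0 < r) ↦ ?_
      simpa only [le_max_iff, hr.not_ge, or_false] using h r hr.le
    _ = ENNReal.ofReal C := by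
      rw [← ofReal_integral_eq_lintegral_ofReal ((integrableOn_exp_neg_Ioi 0).const_mul C)
        (.of_forall fun r ↦ mul_nonneg hC (Real.exp_pos _).le), integral_const_mul,
        integral_exp_neg_Ioi_zero, mul_one]

end Moments

section Poincare

lemma LeftInvariant.card_le_card_toFinset {d : G → G → ℝ} (hli : LeftInvariant d) {D : ℝ}
    (hfin : {x | d 1 x ≤ D}.Finite) {s : Finset G} (hs : ∀ x ∈ s, ∀ y ∈ s, d x y ≤ D) :
    s.card ≤ hfin.toFinset.card := by
  rcases s.eq_empty_or_nonempty with rfl | ⟨y, hy⟩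
  · simp
  · refine Finset.card_le_card_of_injOn (y⁻¹ * ·) (fun x hx ↦ ?_) fun _ _ _ _ h ↦ by simpa using h
    simpa [← hli.eq_one_inv_mul] using hs y hy x hx

lemma sum_measure_le_of_card_filter_le {α Ω : Type*} [MeasurableSpace Ω] {P : Measure Ω}
    [IsProbabilityMeasure P] {E : α → Set Ω} (hE : ∀ x, MeasurableSet (E x)) (s : Finset α) {N : ℕ}
    (hN : ∀ ω, ∀ t ⊆ s, (∀ x ∈ t, ω ∈ E x) → t.card ≤ N) : ∑ x ∈ s, P (E x) ≤ N := by
  classical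
  calc
    ∑ x ∈ s, P (E x) = ∫⁻ ω, ∑ x ∈ s, (E x).indicator 1 ω ∂P := by
      rw [lintegral_finsetSum _ fun x _ ↦ measurable_one.indicator (hE x)]
      exact Finset.sum_congr rfl fun x _ ↦ (lintegral_indicator_one (hE x)).symm
    _ ≤ ∫⁻ _, N ∂P := by
      refine lintegral_mono fun ω ↦ ?_
      simp only [indicator_apply, Pi.one_apply, Finset.sum_boole]
      exact_mod_cast hN ω _ (s.filter_subset _) fun x hx ↦ (Finset.mem_filter.1 hx).2
    _ = N := by simp

/-- The event that the walk makes no deep excursion towards `x⁻¹`: followed after a visit of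
`x`, such a trajectory does not backtrack towards `1`. -/
def noBacktrack (g : G → G → ℝ) (r : ℝ) (x : G) : Set (ℕ → G) :=
  {ω | ∀ m, gromov g 1 (walkPos m ω) x⁻¹ < r}

variable {g : G → G → ℝ}

lemma IsMetricFun.add_dist_sub_le_of_mem_noBacktrack (hm : IsMetricFun g) (hli : LeftInvariant g)
    {r : ℝ} {x : G} {ω : ℕ → G} (hω : ω ∈ noBacktrack g r x) (m : ℕ) :
    g 1 x + g x (x * walkPos m ω) - 2 * r ≤ g 1 (x * walkPos m ω) := by
  have hlt := hω m
  rw [← hli.gromov_mul x, mul_one, mul_inv_cancel] at hlt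
  unfold gromov at hlt
  linarith [hm.symm x (x * walkPos m ω), hm.symm 1 (x * walkPos m ω)]

lemma IsMetricFun.dist_le_of_shift_mem_noBacktrack (hm : IsMetricFun g) (hli : LeftInvariant g)
    {r R : ℝ} {ω : ℕ → G} {n m : ℕ} (hnm : n ≤ m) (hn : R ≤ g 1 (walkPos n ω))
    (hR : g 1 (walkPos m ω) ≤ R + 1) (hω : shift n ω ∈ noBacktrack g r (walkPos n ω)) :
    g (walkPos n ω) (walkPos m ω) ≤ 1 + 2 * r := by
  obtain ⟨k, rfl⟩ := Nat.exists_eq_add_of_le hnm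
  have := hm.add_dist_sub_le_of_mem_noBacktrack hli hω k
  rw [walkPos_add] at hR ⊢
  linarith

variable [Countable G] [MeasurableSpace G] [MeasurableSingletonClass G]
variable {μ : G → ℝ} {P : Measure (ℕ → G)} {S : Finset G} {δ A : ℝ}

lemma measurableSet_noReturn : MeasurableSet (noReturn (G := G)) :=
  measurableSet_forall_walkPos fun k x ↦ 1 ≤ k → x ≠ 1

lemma measurableSet_noBacktrack (g : G → G → ℝ) (r : ℝ) (x : G) :
    MeasurableSet (noBacktrack g r x) :=
  measurableSet_forall_walkPos fun _ y ↦ gromov g 1 y x⁻¹ < r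

lemma IsWalkMeasure.walkGreen_mul_eq_of_subset_noReturn (hP : IsWalkMeasure μ P)
    {E : Set (ℕ → G)} (hE : MeasurableSet E) (hsub : E ⊆ noReturn) (x : G) :
    walkGreen P x * P E = P {ω | ∃ n, walkPos n ω = x ∧ shift n ω ∈ E} := by
  have hsum := hP.tsum_walkGreen_mul (E := fun z ↦ {ω | z = x ∧ ω ∈ E}) 1
    (fun z ↦ (MeasurableSet.const _).inter hE) ?_
  · rw [tsum_eq_single x fun z hz ↦ by simp [hz]] at hsum
    simpa using hsum
  · rintro ω z k hk ⟨rfl, hω⟩ ⟨hz, -⟩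
    exact hsub hω k hk (by simpa using hz)

namespace IsGreenWalk

lemma exists_measure_noBacktrack_compl_le (hG : IsGreenWalk μ P g) (hS : WordComparable S g δ A)
    {e : ℝ≥0∞} (he : e ≠ 0) : ∃ r, 0 ≤ r ∧ ∀ x, P (noBacktrack g r x)ᶜ ≤ e := by
  obtain ⟨C, -, htail⟩ := hG.exists_measure_gromov_le hS
  have hlim : Tendsto (fun r : ℝ ↦ ENNReal.ofReal (C * Real.exp (-r))) atTop (𝓝 0) := by
    simpa using ENNReal.tendsto_ofReal (Real.tendsto_exp_neg_atTop_nhds_zero.const_mul C)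
  obtain ⟨r, hr, hr0⟩ :=
    ((hlim.eventually (ge_mem_nhds he.bot_lt)).and (eventually_ge_atTop 0)).exists
  refine ⟨r, hr0, fun x ↦ (measure_mono fun ω hω ↦ ?_).trans ((htail x⁻¹ r hr0).trans hr)⟩
  simpa [noBacktrack] using hω

lemma exists_measure_noReturn_inter_noBacktrack_ge (hG : IsGreenWalk μ P g)
    (hS : WordComparable S g δ A) :
    ∃ r, ∀ x, P noReturn / 2 ≤ P (noReturn ∩ noBacktrack g r x) := by
  have := hG.isWalkMeasure.1
  obtain ⟨r, -, hcompl⟩ :=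
    hG.exists_measure_noBacktrack_compl_le hS (ENNReal.half_pos hG.noReturn_pos.ne').ne'
  refine ⟨r, fun x ↦ ?_⟩
  calc P noReturn / 2
    _ = P noReturn - P noReturn / 2 := (ENNReal.sub_half (measure_ne_top _ _)).symm
    _ ≤ P (noReturn ∩ noBacktrack g r x) := by
      refine tsub_le_iff_right.2 ((measure_le_inter_add_sdiff P _ (noBacktrack g r x)).trans ?_)
      gcongr
      exact (measure_mono fun ω hω ↦ hω.2).trans (hcompl x)

/-- Along a trajectory, the points of an annulus which are visited without backtracking
afterwards are at bounded distance from each other, hence in bounded number. -/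
lemma exists_sum_measure_visit_le (hG : IsGreenWalk μ P g) (r : ℝ) :
    ∃ N : ℕ, ∀ (R : ℝ) (s : Finset G), (∀ x ∈ s, g 1 x ∈ Icc R (R + 1)) →
      ∑ x ∈ s, P {ω | ∃ n, walkPos n ω = x ∧ shift n ω ∈ noReturn ∩ noBacktrack g r x} ≤ N := by
  have := hG.isWalkMeasure.1
  have hm := hG.isMetricFun
  have hfin := hG.finite_setOf_le (1 + 2 * r)
  refine ⟨hfin.toFinset.card, fun R s hs ↦ ?_⟩
  refine sum_measure_le_of_card_filter_le (fun x ↦ ?_) s fun ω t hts ht ↦ ?_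
  · rw [ofPred_exists]
    exact .iUnion fun n ↦ (measurableSet_walkPos n (· = x)).inter
      (measurable_shift n (measurableSet_noReturn.inter (measurableSet_noBacktrack g r x)))
  · refine hG.leftInvariant.card_le_card_toFinset hfin fun x hx y hy ↦ ?_
    obtain ⟨n, rfl, -, hn⟩ := ht x hx
    obtain ⟨m, rfl, -, hm'⟩ := ht y hy
    have hxs := hs _ (hts hx)
    have hys := hs _ (hts hy)
    rcases le_total n m with h | h
    · exact hm.dist_le_of_shift_mem_noBacktrack hG.leftInvariant h hxs.1 hys.2 hn
    · rw [hm.symm]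
      exact hm.dist_le_of_shift_mem_noBacktrack hG.leftInvariant h hys.1 hxs.2 hm'

lemma exists_tsum_annulus_expNeg_le (hG : IsGreenWalk μ P g) (hS : WordComparable S g δ A) :
    ∃ C : ℝ≥0∞, C ≠ ∞ ∧ ∀ R : ℝ, ∑' x, (g 1 ⁻¹' Icc R (R + 1)).indicator (expNeg g 1) x ≤ C := by
  classical
  have := hG.isWalkMeasure.1
  obtain ⟨r, hr⟩ := hG.exists_measure_noReturn_inter_noBacktrack_ge hS
  obtain ⟨N, hN⟩ := hG.exists_sum_measure_visit_le r
  have hpos : P noReturn / 2 ≠ 0 := (ENNReal.half_pos hG.noReturn_pos.ne').ne'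
  have htop : P noReturn / 2 ≠ ∞ := ENNReal.div_ne_top (measure_ne_top _ _) two_ne_zero
  have hvisit : ∀ x, expNeg g 1 x * (P noReturn / 2) ≤
      P {ω | ∃ n, walkPos n ω = x ∧ shift n ω ∈ noReturn ∩ noBacktrack g r x} := by
    intro x
    rw [← hG.isWalkMeasure.walkGreen_mul_eq_of_subset_noReturn
      (measurableSet_noReturn.inter (measurableSet_noBacktrack g r x)) inter_subset_left]
    gcongr
    · simpa using hG.expNeg_le_walkGreen 1 x
    · exact hr x
  refine ⟨N / (P noReturn / 2), ENNReal.div_ne_top (ENNReal.natCast_ne_top N) hpos, fun R ↦ ?_⟩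
  rw [ENNReal.tsum_eq_iSup_sum]
  refine iSup_le fun s ↦ ?_
  rw [ENNReal.le_div_iff_mul_le (.inl hpos) (.inl htop), Finset.sum_indicator_eq_sum_filter,
    Finset.sum_mul]
  exact (Finset.sum_le_sum fun x _ ↦ hvisit x).trans
    (hN R _ fun x hx ↦ (Finset.mem_filter.1 hx).2)

theorem summable_exp_neg_mul (hG : IsGreenWalk μ P g) (hS : WordComparable S g δ A) {s : ℝ}
    (hs : 1 < s) : Summable fun x ↦ Real.exp (-(s * g 1 x)) := by
  obtain ⟨C, hC, hann⟩ := hG.exists_tsum_annulus_expNeg_le hS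
  have hgeom : Summable fun k : ℕ ↦ Real.exp (-((s - 1) * k)) :=
    (Real.summable_exp_nat_mul_iff.2 (neg_lt_zero.2 (sub_pos.2 hs))).congr fun k ↦ by ring_nf
  have hle : ∑' x, ENNReal.ofReal (Real.exp (-(s * g 1 x))) ≤
      C * ENNReal.ofReal (∑' k : ℕ, Real.exp (-((s - 1) * k))) := by
    calc
      _ ≤ ∑' x, ∑' k : ℕ, (g 1 ⁻¹' Icc (k : ℝ) (k + 1)).indicator (expNeg g 1) x *
          ENNReal.ofReal (Real.exp (-((s - 1) * k))) := by
        refine ENNReal.tsum_le_tsum fun x ↦ le_trans ?_ (ENNReal.le_tsum ⌊g 1 x⌋₊)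
        have hfloor := Nat.floor_le (hG.isMetricFun.nonneg 1 x)
        have hmem : x ∈ g 1 ⁻¹' Icc (⌊g 1 x⌋₊ : ℝ) (⌊g 1 x⌋₊ + 1) :=
          ⟨hfloor, (Nat.lt_floor_add_one _).le⟩
        rw [indicator_of_mem hmem, expNeg, ← ENNReal.ofReal_mul (Real.exp_pos _).le,
          ← Real.exp_add]
        refine ENNReal.ofReal_le_ofReal (Real.exp_le_exp.2 ?_)
        nlinarith
      _ = ∑' k : ℕ, (∑' x, (g 1 ⁻¹' Icc (k : ℝ) (k + 1)).indicator (expNeg g 1) x) *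
          ENNReal.ofReal (Real.exp (-((s - 1) * k))) := by
        rw [ENNReal.tsum_comm]
        exact tsum_congr fun k ↦ ENNReal.tsum_mul_right
      _ ≤ ∑' k : ℕ, C * ENNReal.ofReal (Real.exp (-((s - 1) * k))) :=
        ENNReal.tsum_le_tsum fun k ↦ mul_le_mul_left (hann k) _
      _ = _ := by
        rw [ENNReal.tsum_mul_left,
          ENNReal.ofReal_tsum_of_nonneg (fun k ↦ (Real.exp_pos _).le) hgeom]
  exact (ENNReal.summable_toReal (ne_top_of_le_ne_top
    (ENNReal.mul_ne_top hC ENNReal.ofReal_ne_top) hle)).congr fun x ↦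
      ENNReal.toReal_ofReal (Real.exp_pos _).le

end IsGreenWalk

end Poincare

/-! ### Moments, drift and entropy -/

section GreenMoment

/-- The event that the walk started at `y` crosses the neighbourhood of `1` during its first step,
its second position `z` being such that `1` lies up to `τ` on a geodesic from `y` to `z`, and
afterwards remains on the side of `z`, at Gromov products with `z` larger than `c`. -/
def lastCrossing (g : G → G → ℝ) (τ c : ℝ) (y : G) : Set (ℕ → G) :=
  {ω | gromov g 1 y (y * walkPos 1 ω) ≤ τ ∧
    ∀ m, c < gromov g 1 (y * walkPos 1 ω) (y * walkPos 1 ω * walkPos m (shift 1 ω))}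

lemma IsMetricFun.mem_noBacktrack_iff {g : G → G → ℝ} (hm : IsMetricFun g) (hli : LeftInvariant g)
    {c : ℝ} {x : G} {ω : ℕ → G} :
    ω ∈ noBacktrack g (g 1 x - c) x ↔ ∀ m, c < gromov g 1 x (x * walkPos m ω) := by
  refine forall_congr' fun m ↦ ?_
  have hadd := hm.gromov_add_gromov 1 x (x * walkPos m ω)
  have hshift := hli.gromov_mul x 1 (walkPos m ω) x⁻¹
  rw [mul_one, mul_inv_cancel, hm.gromov_comm] at hshift
  constructor <;> intro h <;> linarith

lemma noBacktrack_mono (g : G → G → ℝ) {r r' : ℝ} (hr : r ≤ r') (x : G) :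
    noBacktrack g r x ⊆ noBacktrack g r' x :=
  fun _ hω m ↦ (hω m).trans_le hr

/-- The points of a geodesic from `1` to `u`, inverted, are among the `y` counted on the right. -/
lemma WordComparable.exists_wordDist_le_tsum {g : G → G → ℝ} {S : Finset G} {δ A : ℝ}
    (hS : WordComparable S g δ A) :
    ∃ τ : ℝ, ∀ u, ENNReal.ofReal (wordDist S 1 u) ≤
      ∑' y, {y | gromov g 1 y (y * u) ≤ τ}.indicator 1 y := by
  classical
  obtain ⟨τ, -, hgromov⟩ := hS.exists_gromov_le_of_isWordGeodesic
  refine ⟨τ, fun u ↦ ?_⟩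
  obtain ⟨n, p, hp, h0, hn⟩ := exists_isWordGeodesic hS.generates 1 u
  have hdist : wordDist S 1 u = n := by simpa [h0, hn] using hp 0 n n.zero_le le_rfl
  have hinj : InjOn (fun k ↦ (p k)⁻¹) (Finset.range n) := by
    intro i hi j hj hij
    simp only [Finset.coe_range, mem_Iio] at hi hj
    have hzero := hp i j hi.le hj.le
    rw [inv_injective hij, wordDist_self, eq_comm, abs_eq_zero, sub_eq_zero] at hzero
    exact_mod_cast hzero
  have hmem : ∀ k ∈ Finset.range n, (p k)⁻¹ ∈ {y | gromov g 1 y (y * u) ≤ τ} := by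
    intro k hk
    have hle := hgromov n p hp k (Finset.mem_range.1 hk).le
    rw [← hS.leftInvariant.gromov_mul (p k)⁻¹, h0, hn] at hle
    simpa using hle
  calc
    _ = ∑ y ∈ (Finset.range n).image fun k ↦ (p k)⁻¹,
        {y | gromov g 1 y (y * u) ≤ τ}.indicator 1 y := by
      rw [hdist, Finset.sum_image hinj, Finset.sum_congr rfl fun k hk ↦
        indicator_of_mem (hmem k hk) 1]
      simp
    _ ≤ _ := ENNReal.sum_le_tsum _

variable [Countable G] [MeasurableSpace G] [MeasurableSingletonClass G]
variable {μ : G → ℝ} {P : Measure (ℕ → G)} {g : G → G → ℝ} {S : Finset G} {δ A : ℝ}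

lemma measurableSet_lastCrossing (g : G → G → ℝ) (τ c : ℝ) (y : G) :
    MeasurableSet (lastCrossing g τ c y) :=
  (measurableSet_walkPos 1 fun x ↦ gromov g 1 y (y * x) ≤ τ).inter <|
    measurableSet_shift_mem 1 (E := fun x ↦ {ω | ∀ m, c < gromov g 1 (y * x)
      (y * x * walkPos m ω)}) fun x ↦ measurableSet_forall_walkPos fun _ z ↦
        c < gromov g 1 (y * x) (y * x * z)

namespace IsGreenWalk

lemma walkGreen_inv (hG : IsGreenWalk μ P g) (x : G) : walkGreen P x⁻¹ = walkGreen P x :=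
  tsum_congr fun n ↦ hG.isWalkMeasure.measure_walkPos_inv_eq hG.symm n x

/-- The domination principle: integrating the hypothesis against the equilibrium measure of a
finite set, whose potential is `1` on this set, bounds the sum over this set. -/
lemma tsum_le_of_tsum_walkGreen_mul_le (hG : IsGreenWalk μ P g) {q : G → ℝ≥0∞} {K : ℝ≥0∞}
    (hq : ∀ x, ∑' y, walkGreen P (x⁻¹ * y) * q y ≤ K * walkGreen P x) : ∑' y, q y ≤ K := by
  have := hG.isWalkMeasure.1
  rw [ENNReal.tsum_eq_iSup_sum]
  refine iSup_le fun s ↦ ?_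
  have hpotential : ∀ y ∈ s, 1 ≤ ∑' x, walkGreen P (y⁻¹ * x) * P (lastExit s x) := by
    intro y hy
    have huniv : {ω : ℕ → G | ∃ n, y * walkPos n ω ∈ (s : Set G)} = univ :=
      eq_univ_of_forall fun ω ↦ ⟨0, by simpa [walkPos_zero] using hy⟩
    simpa only [huniv, measure_univ] using
      hG.measure_exists_mem_le_tsum_of_finite s.finite_toSet y
  calc
    ∑ y ∈ s, q y ≤ ∑ y ∈ s, q y * ∑' x, walkGreen P (y⁻¹ * x) * P (lastExit s x) :=
      Finset.sum_le_sum fun y hy ↦ le_mul_of_one_le_right' (hpotential y hy)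
    _ ≤ ∑' y, q y * ∑' x, walkGreen P (y⁻¹ * x) * P (lastExit s x) := ENNReal.sum_le_tsum s
    _ = ∑' x, P (lastExit s x) * ∑' y, walkGreen P (x⁻¹ * y) * q y := by
      simp_rw [← ENNReal.tsum_mul_left]
      rw [ENNReal.tsum_comm]
      refine tsum_congr fun x ↦ tsum_congr fun y ↦ ?_
      rw [← hG.walkGreen_inv (y⁻¹ * x), show (y⁻¹ * x)⁻¹ = x⁻¹ * y by group]
      ring
    _ ≤ ∑' x, P (lastExit s x) * (K * walkGreen P x) := by
      gcongr with x
      exact hq x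
    _ = K * ∑' x, walkGreen P (1⁻¹ * x) * P (lastExit s x) := by
      rw [← ENNReal.tsum_mul_left]
      exact tsum_congr fun x ↦ by rw [inv_one, one_mul]; ring
    _ ≤ K := by
      rw [hG.tsum_walkGreen_mul_lastExit]
      exact mul_le_of_le_one_right' prob_le_one

lemma tsum_walkGreen_mul_lastCrossing_le (hG : IsGreenWalk μ P g) (hyp : IsHyperbolicWith g δ)
    (τ : ℝ) (x : G) :
    ∑' y, walkGreen P (x⁻¹ * y) * P (lastCrossing g τ (τ + δ) y) ≤
      (P noReturn)⁻¹ * ENNReal.ofReal (Real.exp (2 * (τ + δ))) * walkGreen P x := by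
  have hm := hG.isMetricFun
  have hbetween : ∀ z ∈ {z | gromov g 1 x z ≤ τ + δ},
      g x 1 + g 1 z - 2 * (τ + δ) ≤ g x z := by
    intro z (hz : gromov g 1 x z ≤ τ + δ)
    unfold gromov at hz
    linarith [hm.symm z 1]
  have hle : expNeg g x 1 ≤ walkGreen P x := by
    simpa [hG.walkGreen_inv] using hG.expNeg_le_walkGreen x 1
  rw [hG.isWalkMeasure.tsum_walkGreen_mul x (measurableSet_lastCrossing g τ (τ + δ))]
  · refine (measure_mono ?_).trans ((hG.measure_exists_mem_le _ x 1 _ hbetween).trans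
      (mul_le_mul_right hle _))
    rintro ω ⟨n, hn, -⟩
    have hmin := hyp 1 x (x * walkPos n ω) (x * walkPos n ω * walkPos 1 (shift n ω))
    rcases min_le_iff.1 (show _ ≤ τ + δ by linarith) with h | h
    · exact ⟨n, h⟩
    · exact ⟨n + 1, by rwa [walkPos_add, ← mul_assoc]⟩
  · rintro ω y k hk ⟨-, hfar⟩ ⟨hcross, -⟩
    have hfar' : ∀ k, 1 ≤ k → τ + δ < gromov g 1 (y * walkPos 1 ω) (y * walkPos k ω) := by
      intro k hk
      obtain ⟨m, rfl⟩ := Nat.exists_eq_add_of_le hk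
      simpa only [walkPos_add, mul_assoc] using hfar m
    rw [mul_assoc, ← walkPos_add] at hcross
    linarith [hyp 1 (y * walkPos 1 ω) (y * walkPos k ω) (y * walkPos (k + 1) ω),
      lt_min (hfar' k hk) (hfar' (k + 1) (by lia))]

lemma tsum_measure_lastCrossing_ne_top (hG : IsGreenWalk μ P g) (hyp : IsHyperbolicWith g δ)
    (τ : ℝ) : ∑' y, P (lastCrossing g τ (τ + δ) y) ≠ ∞ :=
  ne_top_of_le_ne_top (ENNReal.mul_ne_top (ENNReal.inv_ne_top.2 hG.noReturn_pos.ne')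
    ENNReal.ofReal_ne_top)
    (hG.tsum_le_of_tsum_walkGreen_mul_le (hG.tsum_walkGreen_mul_lastCrossing_le hyp τ))

lemma measure_lastCrossing_eq (hG : IsGreenWalk μ P g) (τ c : ℝ) (y : G) :
    P (lastCrossing g τ c y) = ∑' u, P {ω | walkPos 1 ω = u} *
      {u | gromov g 1 y (y * u) ≤ τ}.indicator
        (fun u ↦ P (noBacktrack g (g 1 (y * u) - c) (y * u))) u := by
  have hsum := hG.isWalkMeasure.measure_shift_mem 1
    (E := fun u ↦ {ω | gromov g 1 y (y * u) ≤ τ ∧ ω ∈ noBacktrack g (g 1 (y * u) - c) (y * u)})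
    fun u ↦ (MeasurableSet.const _).inter (measurableSet_noBacktrack g _ _)
  simp only [Set.mem_ofPred_eq,
    hG.isMetricFun.mem_noBacktrack_iff hG.leftInvariant] at hsum
  rw [lastCrossing, hsum]
  refine tsum_congr fun u ↦ ?_
  by_cases hu : gromov g 1 y (y * u) ≤ τ
  · rw [indicator_of_mem (s := {u | gromov g 1 y (y * u) ≤ τ}) hu]
    simp only [hu, true_and, ← hG.isMetricFun.mem_noBacktrack_iff hG.leftInvariant]
    rfl
  · simp [hu]

/-- The steps that cross `1` without ending close to `1` have probability at least `1 / 2` of being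
the last ones to do so. -/
lemma exists_indicator_le (hG : IsGreenWalk μ P g) (hS : WordComparable S g δ A) (τ c : ℝ) :
    ∃ R, ∀ y u, {y | gromov g 1 y (y * u) ≤ τ}.indicator (1 : G → ℝ≥0∞) y ≤
      2 * {u | gromov g 1 y (y * u) ≤ τ}.indicator
        (fun u ↦ P (noBacktrack g (g 1 (y * u) - c) (y * u))) u +
      {z | g 1 z ≤ R}.indicator 1 (y * u) := by
  have := hG.isWalkMeasure.1
  obtain ⟨r, -, hr⟩ := hG.exists_measure_noBacktrack_compl_le hS (e := 1 / 2) (by simp)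
  refine ⟨r + c, fun y u ↦ ?_⟩
  by_cases hcross : gromov g 1 y (y * u) ≤ τ
  swap
  · simp [hcross]
  by_cases hnear : g 1 (y * u) ≤ r + c
  · simp [hcross, hnear]
  have hhalf : 1 / 2 ≤ P (noBacktrack g (g 1 (y * u) - c) (y * u)) := by
    have hcompl := (measure_mono (compl_subset_compl.2
      (noBacktrack_mono g (r' := g 1 (y * u) - c) (by linarith [not_le.1 hnear]) (y * u)))).trans
        (hr (y * u))
    rw [prob_compl_eq_one_sub (measurableSet_noBacktrack g _ _)] at hcompl
    calc (1 / 2 : ℝ≥0∞)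
      _ = 1 - 1 / 2 := by simp
      _ ≤ _ := tsub_le_iff_tsub_le.1 hcompl
  simp only [indicator, Set.mem_ofPred_eq, hcross, hnear, if_true, if_false, Pi.one_apply, add_zero]
  calc (1 : ℝ≥0∞)
    _ = 2 * (1 / 2) := by rw [one_div, ENNReal.mul_inv_cancel two_ne_zero ENNReal.ofNat_ne_top]
    _ ≤ _ := by gcongr

lemma tsum_walkPos_mul_tsum_ball_ne_top (hG : IsGreenWalk μ P g) (R : ℝ) :
    ∑' y, ∑' u, P {ω | walkPos 1 ω = u} * {z | g 1 z ≤ R}.indicator 1 (y * u) ≠ ∞ := by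
  have := hG.isWalkMeasure.1
  have hball : ∑' y, {z | g 1 z ≤ R}.indicator (1 : G → ℝ≥0∞) y ≠ ∞ := by
    rw [tsum_eq_sum (s := (hG.finite_setOf_le R).toFinset) fun y hy ↦ by simpa using hy]
    exact ENNReal.sum_ne_top.2 fun y _ ↦ by by_cases hy : g 1 y ≤ R <;> simp [hy]
  have hshift : ∀ u, ∑' y, {z | g 1 z ≤ R}.indicator (1 : G → ℝ≥0∞) (y * u) =
      ∑' y, {z | g 1 z ≤ R}.indicator 1 y := fun u ↦ (Equiv.mulRight u).tsum_eq _
  rw [ENNReal.tsum_comm]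
  simp_rw [ENNReal.tsum_mul_left, hshift]
  rwa [ENNReal.tsum_mul_right, IsWalkMeasure.tsum_measure_walkPos_eq, one_mul]

/-- The mean word length of a step is at most the mean number of `y` from which this step crosses
`1`, and such crossings are seldom because the walk crosses `1` for the last time at most once. -/
lemma tsum_walkPos_mul_wordDist_ne_top (hG : IsGreenWalk μ P g) (hS : WordComparable S g δ A) :
    ∑' u, P {ω | walkPos 1 ω = u} * ENNReal.ofReal (wordDist S 1 u) ≠ ∞ := by
  obtain ⟨τ, hcount⟩ := hS.exists_wordDist_le_tsum
  obtain ⟨R, hR⟩ := hG.exists_indicator_le hS τ (τ + δ)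
  refine ne_top_of_le_ne_top (ENNReal.add_ne_top.2 ⟨ENNReal.mul_ne_top (a := 2) (by simp)
    (hG.tsum_measure_lastCrossing_ne_top hS.isHyperbolicWith τ),
    hG.tsum_walkPos_mul_tsum_ball_ne_top R⟩) ?_
  calc
    _ ≤ ∑' u, ∑' y, P {ω | walkPos 1 ω = u} *
        {y | gromov g 1 y (y * u) ≤ τ}.indicator 1 y := by
      simp_rw [ENNReal.tsum_mul_left]
      gcongr with u
      exact hcount u
    _ ≤ _ := by
      rw [ENNReal.tsum_comm, ← ENNReal.tsum_mul_left, ← ENNReal.tsum_add]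
      refine ENNReal.tsum_le_tsum fun y ↦ ?_
      rw [hG.measure_lastCrossing_eq, ← ENNReal.tsum_mul_left, ← ENNReal.tsum_add]
      refine ENNReal.tsum_le_tsum fun u ↦ ?_
      rw [mul_left_comm, ← mul_add]
      exact mul_le_mul_right (hR y u) _

theorem finiteFirstMoment (hG : IsGreenWalk μ P g) (hSg : WordComparable S g δ A)
    {d : G → G → ℝ} {δ' A' : ℝ} (hSd : WordComparable S d δ' A') : FiniteFirstMoment d μ := by
  have hword := ENNReal.summable_toReal (hG.tsum_walkPos_mul_wordDist_ne_top hSg)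
  refine .of_nonneg_of_le (fun u ↦ mul_nonneg (hSd.isMetricFun.nonneg 1 u) (hG.nonneg u))
    (fun u ↦ ?_) (hword.mul_left A')
  rw [hG.isWalkMeasure.measure_walkPos_one_eq, ENNReal.toReal_mul,
    ENNReal.toReal_ofReal (hG.nonneg u), ENNReal.toReal_ofReal (wordDist_nonneg 1 u)]
  linarith [mul_le_mul_of_nonneg_right (hSd.dist_le 1 u) (hG.nonneg u)]

end IsGreenWalk

end GreenMoment

section Integrals

lemma unifIntegrable_of_norm_le {Ω ι β γ : Type*} [MeasurableSpace Ω] {P : Measure Ω}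
    [NormedAddCommGroup β] [NormedAddCommGroup γ] {p : ℝ≥0∞} {f : ι → Ω → β} {F : ι → Ω → γ}
    (hF : UnifIntegrable F p P) (hle : ∀ i ω, ‖f i ω‖ ≤ ‖F i ω‖) : UnifIntegrable f p P := by
  intro ε hε
  obtain ⟨δ, hδ, h⟩ := hF hε
  refine ⟨δ, hδ, fun i s hs hsδ ↦ (eLpNorm_mono fun ω ↦ ?_).trans (h i s hs hsδ)⟩
  simp only [norm_indicator_eq_indicator_norm]
  exact indicator_le_indicator (hle i ω)

lemma mul_le_of_subadditive_of_tendsto {u : ℕ → ℝ} {L : ℝ} (hu : Subadditive u) (h0 : 0 ≤ u 0)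
    (hL : Tendsto (fun n ↦ u n / n) atTop (𝓝 L)) (n : ℕ) : n * L ≤ u n := by
  rcases n.eq_zero_or_pos with rfl | hn
  · simpa using h0
  · rw [← tendsto_nhds_unique (hu.tendsto_lim hL.bddBelow_range) hL,
      ← le_div_iff₀' (Nat.cast_pos.2 hn)]
    exact hu.lim_le_div hL.bddBelow_range hn.ne'

lemma neg_mul_log_le {p : ℝ} (hp : 0 ≤ p) (a : ℝ) :
    -(p * Real.log p) ≤ p * a + Real.exp (-a) := by
  rcases hp.eq_or_lt with rfl | hp
  · simpa using (Real.exp_pos (-a)).le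
  · have hlog := Real.log_le_sub_one_of_pos (div_pos (Real.exp_pos (-a)) hp)
    rw [Real.log_div (Real.exp_pos _).ne' hp.ne', Real.log_exp] at hlog
    have hmul := mul_le_mul_of_nonneg_left hlog hp.le
    rw [mul_sub p (_ / p), mul_div_cancel₀ _ hp.ne'] at hmul
    linarith

lemma mul_le_neg_mul_log {p a : ℝ} (hp : 0 ≤ p) (hle : p ≤ Real.exp (-a)) :
    p * a ≤ -(p * Real.log p) := by
  rcases hp.eq_or_lt with rfl | hp
  · simp
  · have hlog := (Real.log_le_iff_le_exp hp).2 hle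
    linarith [mul_le_mul_of_nonneg_left hlog hp.le]

end Integrals

section MeanDist

variable {μ : G → ℝ} {f g : G → G → ℝ}

lemma IsMetricFun.dist_one_walkPos_le (hm : IsMetricFun f) (hli : LeftInvariant f) (n : ℕ)
    (ω : ℕ → G) : f 1 (walkPos n ω) ≤ ∑ i ∈ Finset.range n, f 1 (ω i) := by
  refine (hm.dist_one_prod_le hli _).trans_eq ?_
  rw [List.map_map, Finset.sum_eq_multiset_sum, Finset.range_val, Multiset.range,
    Multiset.map_coe, Multiset.sum_coe]
  rfl

variable [MeasurableSpace G] {P : Measure (ℕ → G)}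

/-- The mean displacement of the walk after `n` steps with respect to `f`. -/
def meanDist (P : Measure (ℕ → G)) (f : G → G → ℝ) (n : ℕ) : ℝ := ∫ ω, f 1 (walkPos n ω) ∂P

lemma meanDist_nonneg (hm : IsMetricFun f) (n : ℕ) : 0 ≤ meanDist P f n :=
  integral_nonneg fun _ ↦ hm.nonneg _ _

variable [Countable G] [MeasurableSingletonClass G]

lemma measurable_comp_walkPos {β : Type*} [MeasurableSpace β] (F : G → β) (n : ℕ) :
    Measurable fun ω : ℕ → G ↦ F (walkPos n ω) :=
  (Measurable.of_discrete (f := F)).comp (measurable_walkPos n)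

namespace IsWalkMeasure

lemma measurePreserving_shift (hP : IsWalkMeasure μ P) (n : ℕ) :
    MeasurePreserving (shift n) P P := by
  have := hP.1
  refine ⟨measurable_shift n, Measure.ext fun E hE ↦ ?_⟩
  have h := hP.measure_shift_mem n (E := fun _ ↦ E) fun _ ↦ hE
  rw [ENNReal.tsum_mul_right, tsum_measure_walkPos_eq, one_mul] at h
  rw [Measure.map_apply (measurable_shift n) hE]
  exact h

lemma identDistrib_increment (hP : IsWalkMeasure μ P) (F : G → ℝ) (n : ℕ) :
    ProbabilityTheory.IdentDistrib (fun ω ↦ F (ω n)) (fun ω ↦ F (ω 0)) P P := by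
  have hF : ∀ k, Measurable fun ω : ℕ → G ↦ F (ω k) := fun k ↦
    (Measurable.of_discrete (f := F)).comp (measurable_pi_apply k)
  refine ⟨(hF n).aemeasurable, (hF 0).aemeasurable, ?_⟩
  nth_rw 2 [← (hP.measurePreserving_shift n).map_eq]
  rw [Measure.map_map (hF 0) (measurable_shift n)]
  rfl

lemma integrable_increment (hP : IsWalkMeasure μ P) (hm : IsMetricFun f)
    (hmom : FiniteFirstMoment f μ) : Integrable (fun ω ↦ f 1 (ω 0)) P := by
  simp only [← walkPos_one]
  refine ⟨(measurable_comp_walkPos (f 1) 1).aestronglyMeasurable, ?_⟩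
  rw [hasFiniteIntegral_iff_ofReal (.of_forall fun _ ↦ hm.nonneg _ _),
    lintegral_walkPos P 1 fun x ↦ ENNReal.ofReal (f 1 x)]
  simp only [hP.measure_walkPos_one_eq, mul_comm (ENNReal.ofReal (μ _)),
    ← ENNReal.ofReal_mul (hm.nonneg 1 _)]
  exact hmom.tsum_ofReal_ne_top.lt_top

lemma integrable_dist_walkPos (hP : IsWalkMeasure μ P) (hm : IsMetricFun f)
    (hli : LeftInvariant f) (hmom : FiniteFirstMoment f μ) (n : ℕ) :
    Integrable (fun ω ↦ f 1 (walkPos n ω)) P := by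
  have hsum : Integrable (fun ω ↦ ∑ i ∈ Finset.range n, f 1 (ω i)) P :=
    integrable_finsetSum _ fun i _ ↦
      (hP.identDistrib_increment (f 1) i).integrable_iff.2 (hP.integrable_increment hm hmom)
  refine hsum.mono' (measurable_comp_walkPos (f 1) n).aestronglyMeasurable (.of_forall fun ω ↦ ?_)
  rw [Real.norm_of_nonneg (hm.nonneg _ _)]
  exact hm.dist_one_walkPos_le hli n ω

lemma integral_gromov_shift (hP : IsWalkMeasure μ P) (hm : IsMetricFun f) (hli : LeftInvariant f)
    (hmom : FiniteFirstMoment f μ) (n m : ℕ) :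
    Integrable (fun ω ↦ gromov f 1 (walkPos m (shift n ω)) (walkPos n ω)⁻¹) P ∧
      ∫ ω, gromov f 1 (walkPos m (shift n ω)) (walkPos n ω)⁻¹ ∂P =
        (meanDist P f n + meanDist P f m - meanDist P f (n + m)) / 2 := by
  have hshift := hP.measurePreserving_shift n
  have hint := hP.integrable_dist_walkPos hm hli hmom
  have hint' : Integrable (fun ω ↦ f 1 (walkPos m (shift n ω))) P :=
    hshift.integrable_comp_of_integrable (hint m)
  have hmean : ∫ ω, f 1 (walkPos m (shift n ω)) ∂P = meanDist P f m := by
    rw [meanDist, ← hshift.map_eq, integral_map hshift.measurable.aemeasurable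
      (measurable_comp_walkPos (f 1) m).aestronglyMeasurable, hshift.map_eq]
  have hgromov : ∀ ω, gromov f 1 (walkPos m (shift n ω)) (walkPos n ω)⁻¹ =
      (f 1 (walkPos n ω) + f 1 (walkPos m (shift n ω)) - f 1 (walkPos (n + m) ω)) / 2 := by
    intro ω
    rw [← hli.gromov_mul (walkPos n ω), ← walkPos_add, mul_inv_cancel, mul_one, gromov,
      hm.symm (walkPos (n + m) ω) 1, hli.eq_one_inv_mul _ (walkPos n ω), walkPos_add, mul_inv_rev,
      inv_mul_cancel_right, hm.symm, hli.eq_one_inv_mul _ 1, inv_inv, mul_one]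
    ring
  have hadd : Integrable (fun ω ↦ f 1 (walkPos n ω) + f 1 (walkPos m (shift n ω))) P :=
    (hint n).add hint'
  simp only [hgromov]
  refine ⟨(hadd.sub (hint (n + m))).div_const 2, ?_⟩
  rw [integral_div, integral_sub hadd (hint (n + m)), integral_add (hint n) hint', hmean]
  rfl

lemma subadditive_meanDist (hP : IsWalkMeasure μ P) (hm : IsMetricFun f) (hli : LeftInvariant f)
    (hmom : FiniteFirstMoment f μ) : Subadditive (meanDist P f) := by
  intro n m
  have hnonneg : 0 ≤ ∫ ω, gromov f 1 (walkPos m (shift n ω)) (walkPos n ω)⁻¹ ∂P :=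
    integral_nonneg fun ω ↦ hm.gromov_nonneg _ _ _
  rw [(hP.integral_gromov_shift hm hli hmom n m).2] at hnonneg
  linarith

lemma meanDist_add_le (hP : IsWalkMeasure μ P) (hm : IsMetricFun f) (hli : LeftInvariant f)
    (hmom : FiniteFirstMoment f μ) {K : ℝ} (hK : 0 ≤ K)
    (hle : ∀ y n, ∫⁻ ω, ENNReal.ofReal (gromov f 1 (walkPos n ω) y) ∂P ≤ ENNReal.ofReal K)
    (n m : ℕ) : meanDist P f n + meanDist P f m - 2 * K ≤ meanDist P f (n + m) := by
  have := hP.1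
  obtain ⟨hint, hmean⟩ := hP.integral_gromov_shift hm hli hmom n m
  have hbound : ∫ ω, gromov f 1 (walkPos m (shift n ω)) (walkPos n ω)⁻¹ ∂P ≤ K := by
    refine (ENNReal.ofReal_le_ofReal_iff hK).1 ?_
    rw [ofReal_integral_eq_lintegral_ofReal hint (.of_forall fun _ ↦ hm.gromov_nonneg _ _ _),
      hP.lintegral_walkPos_shift n (f := fun x ω ↦ ENNReal.ofReal (gromov f 1 (walkPos m ω) x⁻¹))
        fun x ↦ (measurable_comp_walkPos (fun y ↦ gromov f 1 y x⁻¹) m).ennreal_ofReal]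
    calc
      _ ≤ ∑' x, P {ω | walkPos n ω = x} * ENNReal.ofReal K :=
        ENNReal.tsum_le_tsum fun x ↦ by gcongr; exact hle _ _
      _ = ENNReal.ofReal K := by rw [ENNReal.tsum_mul_right, tsum_measure_walkPos_eq, one_mul]
  linarith

/-- The displacement is dominated by the sum of the lengths of the increments, whose averages are
uniformly integrable, so the almost sure drift is also the drift in mean. -/
theorem tendsto_meanDist_div (hP : IsWalkMeasure μ P) (hm : IsMetricFun f) (hli : LeftInvariant f)
    (hmom : FiniteFirstMoment f μ) {l : ℝ}
    (hl : ∀ᵐ ω ∂P, Tendsto (fun n : ℕ ↦ f 1 (walkPos n ω) / n) atTop (𝓝 l)) :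
    Tendsto (fun n : ℕ ↦ meanDist P f n / n) atTop (𝓝 l) := by
  have := hP.1
  have hmeas : ∀ n, AEStronglyMeasurable (fun ω : ℕ → G ↦ f 1 (walkPos n ω) / n) P := fun n ↦
    (measurable_comp_walkPos (fun x ↦ f 1 x / n) n).aestronglyMeasurable
  have hincr : UniformIntegrable (fun n (ω : ℕ → G) ↦ f 1 (ω n)) 1 P :=
    ProbabilityTheory.MemLp.uniformIntegrable_of_identDistrib (j := 0) le_rfl ENNReal.one_ne_top
      (memLp_one_iff_integrable.2 (hP.integrable_increment hm hmom))
      (hP.identDistrib_increment (f 1))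
  have hunif : UnifIntegrable (fun n (ω : ℕ → G) ↦ f 1 (walkPos n ω) / n) 1 P := by
    refine unifIntegrable_of_norm_le (uniformIntegrable_average_real le_rfl hincr).2.1
      fun n ω ↦ ?_
    simp only [Pi.div_apply, Finset.sum_apply, Pi.natCast_apply, norm_div]
    refine div_le_div_of_nonneg_right ?_ (norm_nonneg _)
    rw [Real.norm_of_nonneg (hm.nonneg _ _)]
    exact (hm.dist_one_walkPos_le hli n ω).trans (Real.le_norm_self _)
  have hL1 := tendsto_Lp_finite_of_tendsto_ae le_rfl ENNReal.one_ne_top hmeas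
    (memLp_const l) hunif hl
  have hlim := tendsto_integral_of_L1' (fun _ : ℕ → G ↦ l) (integrable_const l).aestronglyMeasurable
    (.of_forall fun n ↦ (hP.integrable_dist_walkPos hm hli hmom n).div_const n) hL1
  simpa [meanDist, integral_div] using hlim

end IsWalkMeasure
end MeanDist

section Entropy

variable [Countable G] [MeasurableSpace G] [MeasurableSingletonClass G]
variable {μ : G → ℝ} {P : Measure (ℕ → G)} {f g : G → G → ℝ} {S : Finset G} {δ A : ℝ}

lemma IsWalkMeasure.hasSum_convPow_mul (hP : IsWalkMeasure μ P) (hμ : ∀ x, 0 ≤ μ x)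
    (hm : IsMetricFun f) (hli : LeftInvariant f) (hmom : FiniteFirstMoment f μ) (n : ℕ) :
    HasSum (fun x ↦ convPow μ n x * f 1 x) (meanDist P f n) := by
  have htsum : ∑' x, P {ω | walkPos n ω = x} * ENNReal.ofReal (f 1 x) =
      ENNReal.ofReal (meanDist P f n) := by
    rw [← lintegral_walkPos P n fun x ↦ ENNReal.ofReal (f 1 x), meanDist,
      ofReal_integral_eq_lintegral_ofReal (hP.integrable_dist_walkPos hm hli hmom n)
        (.of_forall fun _ ↦ hm.nonneg _ _)]
  have hne := htsum ▸ ENNReal.ofReal_ne_top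
  have hsum := ENNReal.hasSum_toReal hne
  rw [← ENNReal.tsum_toReal_eq (ENNReal.ne_top_of_tsum_ne_top hne), htsum,
    ENNReal.toReal_ofReal (meanDist_nonneg hm n)] at hsum
  simpa only [hP.convPow_eq_toReal hμ, ENNReal.toReal_mul,
    ENNReal.toReal_ofReal (hm.nonneg 1 _)] using hsum

namespace IsGreenWalk

lemma exists_lintegral_gromov_le (hG : IsGreenWalk μ P g) (hS : WordComparable S g δ A) {K : ℝ}
    (hK : 0 ≤ K) (hf : ∀ x y z, gromov f z x y ≤ K * gromov g z x y + K) :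
    ∃ K', 0 ≤ K' ∧ ∀ y n,
      ∫⁻ ω, ENNReal.ofReal (gromov f 1 (walkPos n ω) y) ∂P ≤ ENNReal.ofReal K' := by
  have := hG.isWalkMeasure.1
  obtain ⟨C, hC, hgromov⟩ := hG.exists_measure_gromov_le hS
  refine ⟨K * C + K, by positivity, fun y n ↦ ?_⟩
  have hmean := lintegral_ofReal_le_of_measure_le_exp
    (measurable_comp_walkPos (fun x ↦ gromov g 1 x y) n) hC fun r hr ↦
      (measure_mono (fun ω hω ↦ ⟨n, hω⟩ : _ ⊆ {ω | ∃ m, r ≤ gromov g 1 (walkPos m ω) y})).trans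
        (hgromov y r hr)
  calc
    _ ≤ ∫⁻ ω, (ENNReal.ofReal K * ENNReal.ofReal (gromov g 1 (walkPos n ω) y) +
        ENNReal.ofReal K) ∂P := by
      refine lintegral_mono fun ω ↦ ?_
      beta_reduce
      rw [← ENNReal.ofReal_mul hK,
        ← ENNReal.ofReal_add (mul_nonneg hK (hG.isMetricFun.gromov_nonneg _ _ _)) hK]
      exact ENNReal.ofReal_le_ofReal (hf _ _ _)
    _ = ENNReal.ofReal K * ∫⁻ ω, ENNReal.ofReal (gromov g 1 (walkPos n ω) y) ∂P +
        ENNReal.ofReal K := by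
      rw [lintegral_add_right _ measurable_const, lintegral_const, measure_univ, mul_one,
        lintegral_const_mul _ (measurable_comp_walkPos (fun x ↦ gromov g 1 x y) n).ennreal_ofReal]
    _ ≤ ENNReal.ofReal (K * C + K) := by
      rw [ENNReal.ofReal_add (by positivity) hK, ENNReal.ofReal_mul hK]
      gcongr

/-- Bounded mean Gromov products make the mean displacement almost additive. -/
theorem exists_meanDist_le (hG : IsGreenWalk μ P g) (hS : WordComparable S g δ A)
    (hm : IsMetricFun f) (hli : LeftInvariant f) (hmom : FiniteFirstMoment f μ) {K : ℝ}
    (hK : 0 ≤ K) (hf : ∀ x y z, gromov f z x y ≤ K * gromov g z x y + K) {L : ℝ}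
    (hL : Tendsto (fun n : ℕ ↦ meanDist P f n / n) atTop (𝓝 L)) :
    ∃ K', ∀ n : ℕ, meanDist P f n ≤ n * L + K' := by
  obtain ⟨K', hK', hmean⟩ := hG.exists_lintegral_gromov_le hS hK hf
  have hadd := hG.isWalkMeasure.meanDist_add_le hm hli hmom hK' hmean
  have hsub : Subadditive fun n ↦ 2 * K' - meanDist P f n := fun n m ↦ by linarith [hadd n m]
  have hlim : Tendsto (fun n : ℕ ↦ (2 * K' - meanDist P f n) / n) atTop (𝓝 (-L)) := by
    simpa only [sub_div, zero_sub] using (tendsto_const_div_atTop_nhds_zero_nat (2 * K')).sub hL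
  have hzero : 0 ≤ 2 * K' - meanDist P f 0 := by linarith [hadd 0 0]
  exact ⟨2 * K', fun n ↦ by linarith [mul_le_of_subadditive_of_tendsto hsub hzero hlim n]⟩

lemma convPow_nonneg (hG : IsGreenWalk μ P g) (n : ℕ) (x : G) : 0 ≤ convPow μ n x := by
  rw [hG.isWalkMeasure.convPow_eq_toReal hG.nonneg]
  exact ENNReal.toReal_nonneg

lemma convPow_le_exp (hG : IsGreenWalk μ P g) (n : ℕ) (x : G) :
    convPow μ n x ≤ Real.exp (-(g 1 x)) := by
  rw [hG.isWalkMeasure.convPow_eq_toReal hG.nonneg]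
  refine ENNReal.toReal_le_of_le_ofReal (Real.exp_pos _).le ?_
  rw [← expNeg, ← hG.measure_hit_eq]
  exact measure_mono fun ω hω ↦ ⟨n, (one_mul _).trans hω⟩

lemma hasSum_convPow_mul_dist (hG : IsGreenWalk μ P g) (hS : WordComparable S g δ A) (n : ℕ) :
    HasSum (fun x ↦ convPow μ n x * g 1 x) (meanDist P g n) :=
  hG.isWalkMeasure.hasSum_convPow_mul hG.nonneg hG.isMetricFun hG.leftInvariant
    (hG.finiteFirstMoment hS hS) n

lemma summable_neg_convPow_mul_log (hG : IsGreenWalk μ P g) (hS : WordComparable S g δ A)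
    (n : ℕ) :
    Summable fun x ↦ -(convPow μ n x * Real.log (convPow μ n x)) := by
  have hsum := hG.hasSum_convPow_mul_dist hS n
  have hsum₂ : Summable fun x ↦ convPow μ n x * (2 * g 1 x) := by
    simpa only [mul_left_comm] using hsum.summable.mul_left 2
  refine .of_nonneg_of_le (fun x ↦ ?_) (fun x ↦ neg_mul_log_le (hG.convPow_nonneg n x) _)
    (hsum₂.add (hG.summable_exp_neg_mul hS one_lt_two))
  exact (mul_nonneg (hG.convPow_nonneg n x) (hG.isMetricFun.nonneg _ _)).trans
    (mul_le_neg_mul_log (hG.convPow_nonneg n x) (hG.convPow_le_exp n x))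

lemma meanDist_le_entropyAt (hG : IsGreenWalk μ P g) (hS : WordComparable S g δ A)
    (n : ℕ) : meanDist P g n ≤ entropyAt μ n := by
  have hsum := hG.hasSum_convPow_mul_dist hS n
  rw [entropyAt, ← tsum_neg, ← hsum.tsum_eq]
  exact hsum.summable.tsum_le_tsum
    (fun x ↦ mul_le_neg_mul_log (hG.convPow_nonneg n x) (hG.convPow_le_exp n x))
    (hG.summable_neg_convPow_mul_log hS n)

lemma entropyAt_le (hG : IsGreenWalk μ P g) (hS : WordComparable S g δ A) (n : ℕ) {s : ℝ}
    (hs : 1 < s) :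
    entropyAt μ n ≤ s * meanDist P g n + ∑' x, Real.exp (-(s * g 1 x)) := by
  have hsum : HasSum (fun x ↦ convPow μ n x * (s * g 1 x)) (s * meanDist P g n) := by
    simpa only [mul_left_comm] using (hG.hasSum_convPow_mul_dist hS n).mul_left s
  have hexp := hG.summable_exp_neg_mul hS hs
  rw [entropyAt, ← tsum_neg, ← hsum.tsum_eq, ← hsum.summable.tsum_add hexp]
  exact (hG.summable_neg_convPow_mul_log hS n).tsum_le_tsum
    (fun x ↦ neg_mul_log_le (hG.convPow_nonneg n x) _) (hsum.summable.add hexp)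

theorem tendsto_meanDist_div_of_hasEntropy (hG : IsGreenWalk μ P g) (hS : WordComparable S g δ A)
    {h : ℝ} (hent : HasEntropy μ h) :
    Tendsto (fun n : ℕ ↦ meanDist P g n / n) atTop (𝓝 h) := by
  have hsub := hG.isWalkMeasure.subadditive_meanDist hG.isMetricFun hG.leftInvariant
    (hG.finiteFirstMoment hS hS)
  have hL := hsub.tendsto_lim ⟨0, forall_mem_range.2 fun n ↦
    div_nonneg (meanDist_nonneg hG.isMetricFun n) n.cast_nonneg⟩
  have hle : hsub.lim ≤ h := le_of_tendsto_of_tendsto' hL hent fun n ↦ by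
    gcongr
    exact hG.meanDist_le_entropyAt hS n
  have hge : ∀ s, 1 < s → h ≤ s * hsub.lim := by
    intro s hs
    have hlim := (hL.const_mul s).add
      (tendsto_const_div_atTop_nhds_zero_nat (∑' x, Real.exp (-(s * g 1 x))))
    rw [add_zero] at hlim
    refine le_of_tendsto_of_tendsto' hent hlim fun n ↦ ?_
    rw [← mul_div_assoc, ← add_div]
    gcongr
    exact hG.entropyAt_le hS n hs
  have hlim : Tendsto (fun s : ℝ ↦ s * hsub.lim) (𝓝[>] 1) (𝓝 hsub.lim) := by
    simpa using ((continuous_mul_const hsub.lim).tendsto 1).mono_left nhdsWithin_le_nhds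
  have hge' : h ≤ hsub.lim := ge_of_tendsto hlim (eventually_mem_nhdsWithin.mono hge)
  rwa [hle.antisymm hge'] at hL

lemma not_forall_meanDist_le (hG : IsGreenWalk μ P g) (hmom : FiniteFirstMoment g μ) (K : ℝ) :
    ¬ ∀ n, meanDist P g n ≤ K := by
  intro hle
  have := hG.isWalkMeasure.1
  have hliminf : ∀ᵐ ω ∂P, ENNReal.ofReal (K + 1) ≤
      liminf (fun n ↦ ENNReal.ofReal (g 1 (walkPos n ω))) atTop := by
    filter_upwards [hG.ae_eventually_notMem_of_finite 1 (hG.finite_setOf_le (K + 1))] with ω hω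
    refine le_liminf_of_le (by isBoundedDefault) (hω.mono fun n hn ↦ ?_)
    rw [one_mul, not_le] at hn
    exact ENNReal.ofReal_le_ofReal hn.le
  have hfatou : ENNReal.ofReal (K + 1) ≤ ENNReal.ofReal K := calc
    _ = ∫⁻ _, ENNReal.ofReal (K + 1) ∂P := by simp
    _ ≤ ∫⁻ ω, liminf (fun n ↦ ENNReal.ofReal (g 1 (walkPos n ω))) atTop ∂P :=
      lintegral_mono_ae hliminf
    _ ≤ liminf (fun n ↦ ∫⁻ ω, ENNReal.ofReal (g 1 (walkPos n ω)) ∂P) atTop :=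
      lintegral_liminf_le fun n ↦ (measurable_comp_walkPos (g 1) n).ennreal_ofReal
    _ ≤ ENNReal.ofReal K := by
      refine liminf_le_of_le (by isBoundedDefault) fun b hb ↦ ?_
      obtain ⟨n, hn⟩ := hb.exists
      rw [← ofReal_integral_eq_lintegral_ofReal
        (hG.isWalkMeasure.integrable_dist_walkPos hG.isMetricFun hG.leftInvariant hmom n)
        (.of_forall fun _ ↦ hG.isMetricFun.nonneg _ _)] at hn
      exact hn.trans (ENNReal.ofReal_le_ofReal (hle n))
  have hK : 0 ≤ K := (meanDist_nonneg hG.isMetricFun 0).trans (hle 0)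
  linarith [(ENNReal.ofReal_le_ofReal_iff hK).1 hfatou]

theorem entropy_pos (hG : IsGreenWalk μ P g) (hS : WordComparable S g δ A) {h : ℝ}
    (hent : HasEntropy μ h) : 0 < h := by
  have hmom := hG.finiteFirstMoment hS hS
  obtain ⟨K, hK⟩ := hG.exists_meanDist_le hS hG.isMetricFun hG.leftInvariant hmom zero_le_one
    (fun x y z ↦ by linarith) (hG.tendsto_meanDist_div_of_hasEntropy hS hent)
  by_contra! hneg
  refine hG.not_forall_meanDist_le hmom K fun n ↦ (hK n).trans ?_
  linarith [mul_nonpos_of_nonneg_of_nonpos n.cast_nonneg hneg]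

end IsGreenWalk

end Entropy

/-! ### Gromov products and shadows on the boundary -/

section Boundary

variable {d : G → G → ℝ} {B : Type*}

namespace BoundaryData

lemma exists_forall_le_gromov {δ : ℝ} (hm : IsMetricFun d) (hyp : IsHyperbolicWith d δ)
    (bd : BoundaryData G d B) {u w : ℕ → G} {b : B} (hu : bd.conv u b) (hw : bd.conv w b) (R : ℝ) :
    ∃ n₀, ∀ n ≥ n₀, ∀ m ≥ n₀, R ≤ gromov d 1 (u n) (w m) := by
  obtain ⟨n₁, h₁⟩ := eventually_atTop.1 (tendsto_atTop.1 ((bd.conv_iff u w b hu).1 hw) (R + δ))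
  obtain ⟨p, h₂⟩ :=
    eventually_atTop.1 (tendsto_atTop.1 (bd.conv_tendstoInfinity w b hw) (R + δ))
  refine ⟨max n₁ (max p.1 p.2), fun n hn m hm' ↦ ?_⟩
  have huw : R + δ ≤ gromov d 1 (w n) (u n) := by
    rw [hm.gromov_comm]
    exact h₁ n (by omega)
  have hww : R + δ ≤ gromov d 1 (w n) (w m) := h₂ (n, m) ⟨by simp; omega, by simp; omega⟩
  linarith [hyp 1 (w n) (u n) (w m), le_min huw hww]

lemma nontrivial (bd : BoundaryData G d B) (b : B) : Nontrivial G := by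
  by_contra hG
  rw [not_nontrivial_iff_subsingleton] at hG
  obtain ⟨u, hu⟩ := bd.conv_surj b
  obtain ⟨p, hp⟩ := ((bd.conv_tendstoInfinity u b hu).eventually_gt_atTop (gromov d 1 1 1)).exists
  simp [Subsingleton.elim _ (1 : G)] at hp

variable (bd : BoundaryData G d B)

lemma tendsto_dist_of_conv (hm : IsMetricFun d) {u : ℕ → G} {b : B} (hu : bd.conv u b) :
    Tendsto (fun n ↦ d 1 (u n)) atTop atTop :=
  tendsto_atTop_mono (fun _ ↦ hm.gromov_le_right 1 _ _)
    ((bd.conv_tendstoInfinity u b hu).comp tendsto_atTop_diagonal)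

lemma conv_comp_add {u : ℕ → G} {b : B} (hu : bd.conv u b) (n : ℕ) :
    bd.conv (fun m ↦ u (n + m)) b := by
  have hshift : Tendsto (fun m ↦ (m, n + m)) atTop atTop := by
    rw [← prod_atTop_atTop_eq]
    exact tendsto_id.prodMk (tendsto_atTop_mono (fun m ↦ m.le_add_left n) tendsto_id)
  exact (bd.conv_iff _ _ _ hu).2 ((bd.conv_tendstoInfinity u b hu).comp hshift)

lemma one_smul (b : B) : bd.smul 1 b = b := by
  obtain ⟨u, hu⟩ := bd.conv_surj b
  have h := bd.smul_conv 1 u b hu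
  simp only [one_mul] at h
  exact bd.conv_unique _ _ _ h hu

lemma mul_smul (x y : G) (b : B) : bd.smul (x * y) b = bd.smul x (bd.smul y b) := by
  obtain ⟨u, hu⟩ := bd.conv_surj b
  have h := bd.smul_conv (x * y) u b hu
  simp only [mul_assoc] at h
  exact bd.conv_unique _ _ _ h (bd.smul_conv x _ _ (bd.smul_conv y u b hu))

lemma smul_inv_smul (x : G) (b : B) : bd.smul x (bd.smul x⁻¹ b) = b := by
  rw [← bd.mul_smul, mul_inv_cancel, bd.one_smul]

lemma inv_smul_smul (x : G) (b : B) : bd.smul x⁻¹ (bd.smul x b) = b := by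
  rw [← bd.mul_smul, inv_mul_cancel, bd.one_smul]

end BoundaryData

/-- `gp` extends the Gromov product `(· | y)₁` of the `δ`-hyperbolic metric `d` to boundary points:
`gp b y` agrees up to `δ` with `(u n | y)₁` for large `n` along every sequence `u` converging
to `b`. -/
structure IsBoundaryGromov (bd : BoundaryData G d B) (δ : ℝ) (gp : B → G → ℝ) : Prop where
  isMetricFun : IsMetricFun d
  isHyperbolicWith : IsHyperbolicWith d δ
  eventually_abs_sub_le : ∀ u b y, bd.conv u b → ∀ᶠ n in atTop, |gromov d 1 (u n) y - gp b y| ≤ δ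

variable {bd : BoundaryData G d B} {gp : B → G → ℝ} {S : Finset G} {δ A : ℝ}

lemma exists_isBoundaryGromov (hm : IsMetricFun d) (hyp : IsHyperbolicWith d δ) (hδ : 0 ≤ δ)
    (bd : BoundaryData G d B) : ∃ gp, IsBoundaryGromov bd δ gp := by
  have hlim (b : B) (y : G) :
      ∃ t : ℝ, ∀ u, bd.conv u b → ∀ᶠ n in atTop, |gromov d 1 (u n) y - t| ≤ δ := by
    obtain ⟨w, hw⟩ := bd.conv_surj b
    obtain ⟨k, hk⟩ := bd.exists_forall_le_gromov hm hyp hw hw (d 1 y + 2 * δ)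
    refine ⟨gromov d 1 (w k) y, fun u hu ↦ ?_⟩
    obtain ⟨m, hum⟩ := bd.exists_forall_le_gromov hm hyp hw hu (d 1 y + 2 * δ)
    filter_upwards [eventually_ge_atTop m] with n hn
    have hwu := hum (max k m) (le_max_right ..) n hn
    have hww := hk (max k m) (le_max_left ..) k le_rfl
    have huw : d 1 y + δ ≤ gromov d 1 (u n) (w k) := by
      linarith [hyp 1 (w (max k m)) (u n) (w k), le_min hwu hww]
    have h₁ := hyp 1 (u n) (w k) y
    have h₂ := hyp 1 (w k) (u n) y
    rw [hm.gromov_comm 1 (w k) (u n)] at h₂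
    rw [min_eq_right (by linarith [hm.gromov_le_right 1 (u n) y])] at h₁
    rw [min_eq_right (by linarith [hm.gromov_le_right 1 (w k) y])] at h₂
    exact abs_le.2 ⟨by linarith, by linarith⟩
  choose gp hgp using hlim
  exact ⟨gp, hm, hyp, fun u b y hu ↦ hgp b y u hu⟩

namespace IsBoundaryGromov

lemma delta_nonneg (hgp : IsBoundaryGromov bd δ gp) : 0 ≤ δ := by
  simpa [gromov, hgp.isMetricFun.refl] using hgp.isHyperbolicWith 1 1 1 1

lemma exists_abs_sub_le (hgp : IsBoundaryGromov bd δ gp) (b : B) (x y : G) :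
    ∃ z : G, |gromov d 1 z x - gp b x| ≤ δ ∧ |gromov d 1 z y - gp b y| ≤ δ := by
  obtain ⟨u, hu⟩ := bd.conv_surj b
  obtain ⟨n, hn⟩ := ((hgp.eventually_abs_sub_le u b x hu).and
    (hgp.eventually_abs_sub_le u b y hu)).exists
  exact ⟨u n, hn⟩

lemma le_dist_add (hgp : IsBoundaryGromov bd δ gp) (b : B) (y : G) : gp b y ≤ d 1 y + δ := by
  obtain ⟨z, hz, -⟩ := hgp.exists_abs_sub_le b y y
  linarith [hgp.isMetricFun.gromov_le_right 1 z y, abs_le.1 hz]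

lemma neg_le (hgp : IsBoundaryGromov bd δ gp) (b : B) (y : G) : -δ ≤ gp b y := by
  obtain ⟨z, hz, -⟩ := hgp.exists_abs_sub_le b y y
  linarith [hgp.isMetricFun.gromov_nonneg 1 z y, abs_le.1 hz]

lemma sub_le_gromov (hgp : IsBoundaryGromov bd δ gp) {b : B} {x y : G} {r : ℝ} (hx : r ≤ gp b x)
    (hy : r ≤ gp b y) : r - 2 * δ ≤ gromov d 1 x y := by
  obtain ⟨z, hzx, hzy⟩ := hgp.exists_abs_sub_le b x y
  rw [abs_le] at hzx hzy
  have hmin : r - δ ≤ min (gromov d 1 z x) (gromov d 1 z y) :=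
    le_min (by linarith) (by linarith)
  linarith [hgp.isHyperbolicWith 1 z x y]

lemma sub_le_of_le_gromov (hgp : IsBoundaryGromov bd δ gp) {b : B} {x y : G} {r : ℝ}
    (hy : r ≤ gp b y) (hxy : r ≤ gromov d 1 y x) : r - 3 * δ ≤ gp b x := by
  obtain ⟨z, hzx, hzy⟩ := hgp.exists_abs_sub_le b x y
  rw [abs_le, hgp.isMetricFun.gromov_comm] at hzx hzy
  have hmin : r - δ ≤ min (gromov d 1 y z) (gromov d 1 y x) :=
    le_min (by linarith) (by linarith [hgp.delta_nonneg])
  linarith [hgp.isHyperbolicWith 1 y z x, hgp.isMetricFun.gromov_comm 1 x z]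

/-- The point `z` is taken on a geodesic from `1` to `y`, at distance about `r` of `1`. -/
lemma exists_forall_sub_le (hgp : IsBoundaryGromov bd δ gp) (hS : WordComparable S d δ A) :
    ∃ r₀, ∀ b₀ y r, r ≤ gp b₀ y →
      ∃ z, r - r₀ ≤ d 1 z ∧ ∀ b, r ≤ gp b y → d 1 z - r₀ ≤ gp b z := by
  have hm := hgp.isMetricFun
  have hδ := hgp.delta_nonneg
  obtain ⟨τ, hτ, hbetween⟩ := hS.exists_between
  refine ⟨A + τ + 4 * δ, fun b₀ y r hr ↦ ?_⟩
  rcases le_total r δ with hrδ | hδr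
  · exact ⟨1, by linarith [hm.refl 1, hS.one_le], fun b _ ↦ by
      linarith [hm.refl 1, hS.one_le, hgp.neg_le b 1]⟩
  · obtain ⟨z, hz, hzA, hzy⟩ :=
      hbetween 1 y (r - δ) (by linarith) (by linarith [hgp.le_dist_add b₀ y])
    refine ⟨z, by linarith [hS.one_le], fun b hb ↦ ?_⟩
    have hyz : r - δ - τ ≤ gromov d 1 y z := by
      linarith [hm.gromov_add_gromov 1 z y, hm.gromov_comm 1 z y]
    linarith [hgp.sub_le_of_le_gromov (by linarith) hyz]

lemma exists_forall_exists_sub_le (hgp : IsBoundaryGromov bd δ gp) (hS : WordComparable S d δ A) :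
    ∃ r₀, ∀ b s, ∃ x, s ≤ d 1 x ∧ d 1 x - r₀ ≤ gp b x := by
  obtain ⟨r₀, h⟩ := hgp.exists_forall_sub_le hS
  refine ⟨r₀, fun b s ↦ ?_⟩
  obtain ⟨u, hu⟩ := bd.conv_surj b
  obtain ⟨n, hn⟩ := bd.exists_forall_le_gromov hgp.isMetricFun hgp.isHyperbolicWith hu hu
    (s + r₀ + δ)
  obtain ⟨m, hm, hnm⟩ := ((hgp.eventually_abs_sub_le u b (u n) hu).and
    (eventually_ge_atTop n)).exists
  have hgpn : s + r₀ ≤ gp b (u n) := by linarith [hn m hnm n le_rfl, abs_le.1 hm]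
  obtain ⟨z, hz, hzb⟩ := h b (u n) _ hgpn
  exact ⟨z, by linarith, hzb b hgpn⟩

lemma sub_le_of_forall_gromov_le (hgp : IsBoundaryGromov bd δ gp) {u : ℕ → G} {b : B}
    (hu : bd.conv u b) {n : ℕ} {t : ℝ} (h : ∀ m, gromov d (u n) (u (n + m)) 1 ≤ t) :
    d 1 (u n) - (t + δ) ≤ gp b (u n) := by
  have hm := hgp.isMetricFun
  obtain ⟨m, hgpm, hnm⟩ := ((hgp.eventually_abs_sub_le u b (u n) hu).and
    (eventually_ge_atTop n)).exists
  obtain ⟨k, rfl⟩ := Nat.exists_eq_add_of_le hnm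
  have hsum := hm.gromov_add_gromov 1 (u n) (u (n + k))
  rw [hm.gromov_comm 1, hm.gromov_comm (u n)] at hsum
  linarith [abs_le.1 hgpm, h k]

lemma abs_smul_add_sub_le (hgp : IsBoundaryGromov bd δ gp) (hli : LeftInvariant d) (b : B)
    (x : G) : |gp (bd.smul x b) x + gp b x⁻¹ - d 1 x| ≤ 2 * δ := by
  have hm := hgp.isMetricFun
  obtain ⟨u, hu⟩ := bd.conv_surj b
  obtain ⟨n, hx, hx'⟩ := ((hgp.eventually_abs_sub_le _ _ x (bd.smul_conv x u b hu)).and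
    (hgp.eventually_abs_sub_le u b x⁻¹ hu)).exists
  have hsum := hm.gromov_add_gromov 1 x (x * u n)
  have hinv := hli.gromov_mul x 1 x⁻¹ (u n)
  rw [mul_one, mul_inv_cancel] at hinv
  rw [hm.gromov_comm 1 x (x * u n), hinv, hm.gromov_comm 1 x⁻¹ (u n)] at hsum
  rw [abs_le] at *
  constructor <;> linarith

lemma limsup_mem_Icc (hgp : IsBoundaryGromov bd δ gp) {u : ℕ → G} {b : B} (hu : bd.conv u b)
    (y : G) : limsup (fun n ↦ d 1 (u n) - d y (u n)) atTop ∈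
      Icc (2 * gp b y - d 1 y - 2 * δ) (2 * gp b y - d 1 y + 2 * δ) := by
  have hm := hgp.isMetricFun
  have hmem : ∀ᶠ n in atTop, d 1 (u n) - d y (u n) ∈
      Icc (2 * gp b y - d 1 y - 2 * δ) (2 * gp b y - d 1 y + 2 * δ) := by
    filter_upwards [hgp.eventually_abs_sub_le u b y hu] with n hn
    rw [abs_le, gromov] at hn
    constructor <;> linarith [hm.symm (u n) 1, hm.symm (u n) y, hm.symm y 1]
  have hlow := hmem.mono fun _ h ↦ h.1
  have hup := hmem.mono fun _ h ↦ h.2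
  exact ⟨le_limsup_of_frequently_le hlow.frequently (isBoundedUnder_of_eventually_le hup),
    limsup_le_of_le (isBoundedUnder_of_eventually_ge hlow).isCoboundedUnder_le hup⟩

lemma abs_busemann_sub_le (hgp : IsBoundaryGromov bd δ gp) (b : B) (y : G) :
    |busemann d bd 1 y b - (2 * gp b y - d 1 y)| ≤ 2 * δ := by
  have hsub : {t | ∃ u, bd.conv u b ∧ t = limsup (fun n ↦ d 1 (u n) - d y (u n)) atTop} ⊆
      Icc (2 * gp b y - d 1 y - 2 * δ) (2 * gp b y - d 1 y + 2 * δ) := by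
    rintro t ⟨u, hu, rfl⟩
    exact hgp.limsup_mem_Icc hu y
  obtain ⟨u, hu⟩ := bd.conv_surj b
  rw [abs_sub_comm, mem_Icc_iff_abs_le]
  exact closure_minimal hsub isClosed_Icc
    (csSup_mem_closure ⟨_, u, hu, rfl⟩ (bddAbove_Icc.mono hsub))

lemma busemann_inv_le (hgp : IsBoundaryGromov bd δ gp) (hli : LeftInvariant d) (b : B) (x : G) :
    busemann d bd 1 x⁻¹ b ≤ d 1 x - 2 * gp (bd.smul x b) x + 6 * δ := by
  linarith [abs_le.1 (hgp.abs_busemann_sub_le b x⁻¹), abs_le.1 (hgp.abs_smul_add_sub_le hli b x),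
    hli.one_inv_eq hgp.isMetricFun x]

lemma neg_dist_le_busemann_inv (hgp : IsBoundaryGromov bd δ gp) (hli : LeftInvariant d) (b : B)
    (x : G) : -d 1 x - 4 * δ ≤ busemann d bd 1 x⁻¹ b := by
  linarith [abs_le.1 (hgp.abs_busemann_sub_le b x⁻¹), hgp.neg_le b x⁻¹,
    hli.one_inv_eq hgp.isMetricFun x]

end IsBoundaryGromov

end Boundary

section Visual

variable {d : G → G → ℝ} {δ : ℝ} {B : Type*} [MetricSpace B] {bd : BoundaryData G d B}
  {gp : B → G → ℝ} {ε C : ℝ}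

/-- The shadow of `x` on the boundary seen from `1`, with parameter `r`: the points `b` such that
`(b|x)₁ ≥ d(1,x) - r`. It is thickened, by an amount which is harmless for a visual metric, in
order to make it open. -/
def shadow (d : G → G → ℝ) (gp : B → G → ℝ) (ε C r : ℝ) (x : G) : Set B :=
  thickening (Real.exp (-ε * (d 1 x - r)) / C) {b | d 1 x - r ≤ gp b x}

lemma isOpen_shadow (r : ℝ) (x : G) : IsOpen (shadow d gp ε C r x) := isOpen_thickening

lemma mem_shadow_of_le (hvis : IsVisualMetric d bd ε C) {r : ℝ} {x : G} {b : B}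
    (h : d 1 x - r ≤ gp b x) : b ∈ shadow d gp ε C r x :=
  self_subset_thickening (div_pos (Real.exp_pos _) hvis.2.1) _ h

namespace IsBoundaryGromov

lemma sub_le_of_dist_lt (hgp : IsBoundaryGromov bd δ gp) (hvis : IsVisualMetric d bd ε C)
    {b b' : B} {y : G} {r : ℝ} (h : r ≤ gp b y) (hd : dist b b' < Real.exp (-ε * r) / C) :
    r - 3 * δ ≤ gp b' y := by
  have hm := hgp.isMetricFun
  obtain rfl | hne := eq_or_ne b b'
  · linarith [hgp.delta_nonneg]
  obtain ⟨hε, hC, hv⟩ := hvis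
  obtain ⟨u, hu⟩ := bd.conv_surj b
  obtain ⟨w, hw⟩ := bd.conv_surj b'
  have hlt : r < seqGromov d u w := by
    rw [lt_div_iff₀' hC] at hd
    have := Real.exp_lt_exp.1 ((hv u w b b' hu hw hne).2.trans_lt hd)
    nlinarith
  have hev := eventually_lt_of_lt_liminf hlt
    (isBoundedUnder_of_eventually_ge (.of_forall fun n ↦ hm.gromov_nonneg 1 (u n) (w n)))
  obtain ⟨n, ⟨huw, huy⟩, hwy⟩ := ((hev.and (hgp.eventually_abs_sub_le u b y hu)).and
    (hgp.eventually_abs_sub_le w b' y hw)).exists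
  rw [abs_le] at huy hwy
  have hmin : r - δ ≤ min (gromov d 1 (u n) (w n)) (gromov d 1 (u n) y) :=
    le_min (by linarith [hgp.delta_nonneg]) (by linarith)
  linarith [hgp.isHyperbolicWith 1 (u n) (w n) y]

lemma dist_le_of_le (hgp : IsBoundaryGromov bd δ gp) (hvis : IsVisualMetric d bd ε C) {b b' : B}
    {y : G} {r : ℝ} (h : r ≤ gp b y) (h' : r ≤ gp b' y) :
    dist b b' ≤ C * Real.exp (-ε * (r - 2 * δ)) := by
  have hm := hgp.isMetricFun
  obtain ⟨hε, hC, hv⟩ := hvis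
  obtain rfl | hne := eq_or_ne b b'
  · rw [dist_self]
    positivity
  obtain ⟨u, hu⟩ := bd.conv_surj b
  obtain ⟨w, hw⟩ := bd.conv_surj b'
  have hnot : ¬ Tendsto (fun n ↦ gromov d 1 (u n) (w n)) atTop atTop := fun hlim ↦
    hne (bd.conv_unique w b b' ((bd.conv_iff u w b hu).2 hlim) hw)
  rw [Filter.tendsto_atTop] at hnot
  push Not at hnot
  obtain ⟨K, hK⟩ := hnot
  have hle : r - 2 * δ ≤ seqGromov d u w := by
    refine le_liminf_of_le (IsCobounded.of_frequently_le (l := K) ?_) ?_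
    · exact frequently_map.2 (hK.mono fun n hn ↦ hn.le)
    · filter_upwards [hgp.eventually_abs_sub_le u b y hu, hgp.eventually_abs_sub_le w b' y hw]
        with n huy hwy
      rw [abs_le, hm.gromov_comm] at huy hwy
      have hmin : r - δ ≤ min (gromov d 1 y (u n)) (gromov d 1 y (w n)) :=
        le_min (by linarith) (by linarith)
      linarith [hgp.isHyperbolicWith 1 y (u n) (w n)]
  refine (hv u w b b' hu hw hne).1.trans ?_
  gcongr ?_ * Real.exp ?_
  exact mul_le_mul_of_nonpos_left hle (neg_nonpos.2 hε.le)

lemma sub_le_of_mem_shadow (hgp : IsBoundaryGromov bd δ gp) (hvis : IsVisualMetric d bd ε C)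
    {r : ℝ} {x : G} {b : B} (h : b ∈ shadow d gp ε C r x) : d 1 x - r - 3 * δ ≤ gp b x := by
  obtain ⟨z, hz, hd⟩ := mem_thickening_iff.1 h
  rw [dist_comm] at hd
  exact hgp.sub_le_of_dist_lt hvis hz hd

lemma exists_shadow_subset_of_isOpen (hgp : IsBoundaryGromov bd δ gp)
    (hvis : IsVisualMetric d bd ε C) {U : Set B} (hU : IsOpen U) {b : B} (hb : b ∈ U) (r : ℝ) :
    ∃ R, ∀ x, R ≤ d 1 x → d 1 x - r ≤ gp b x → shadow d gp ε C r x ⊆ U := by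
  obtain ⟨s, hs, hball⟩ := Metric.isOpen_iff.1 hU b hb
  have hlim : Tendsto (fun t ↦ C * Real.exp (-ε * (t - r - 3 * δ - 2 * δ))) atTop (𝓝 0) := by
    rw [← mul_zero C]
    refine (Real.tendsto_exp_atBot.comp ?_).const_mul C
    refine Tendsto.const_mul_atTop_of_neg (neg_neg_of_pos hvis.1) ?_
    simp only [sub_eq_add_neg]
    exact tendsto_atTop_add_const_right _ _ (tendsto_atTop_add_const_right _ _
      (tendsto_atTop_add_const_right _ _ tendsto_id))
  obtain ⟨R, hR⟩ := eventually_atTop.1 (hlim.eventually_lt_const hs)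
  refine ⟨R, fun x hx hbx b' hb' ↦ hball ?_⟩
  exact (hgp.dist_le_of_le hvis (hgp.sub_le_of_mem_shadow hvis hb')
    (by linarith [hgp.delta_nonneg])).trans_lt (hR _ hx)

lemma exists_pairwiseDisjoint_shadow (hgp : IsBoundaryGromov bd δ gp)
    (hvis : IsVisualMetric d bd ε C) {r : ℝ} (A₀ : Set G)
    (hne : ∀ x ∈ A₀, (shadow d gp ε C r x).Nonempty) :
    ∃ A' ⊆ A₀, A'.PairwiseDisjoint (shadow d gp ε C r) ∧ ∀ x ∈ A₀, ∃ x' ∈ A',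
      d 1 x' ≤ d 1 x + 1 ∧ d 1 x' - (r + 1 + 5 * δ) ≤ gromov d 1 x x' := by
  obtain ⟨A', hA', hdisj, hcover⟩ := Vitali.exists_disjoint_subfamily_covering_enlargement
    (shadow d gp ε C r) A₀ (fun x ↦ Real.exp (-d 1 x)) (Real.exp 1) (by simp)
    (fun x _ ↦ (Real.exp_pos _).le) 1
    (fun x _ ↦ Real.exp_le_one_iff.2 (neg_nonpos.2 (hgp.isMetricFun.nonneg 1 x))) hne
  refine ⟨A', hA', hdisj, fun x hx ↦ ?_⟩
  obtain ⟨x', hx', ⟨b, hbx, hbx'⟩, hle⟩ := hcover x hx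
  rw [← Real.exp_add, Real.exp_le_exp] at hle
  have hgx := hgp.sub_le_of_mem_shadow hvis hbx
  have hgx' := hgp.sub_le_of_mem_shadow hvis hbx'
  refine ⟨x', hx', by linarith, ?_⟩
  linarith [hgp.sub_le_gromov (r := d 1 x' - 1 - r - 3 * δ) (b := b) (x := x) (y := x')
    (by linarith) (by linarith)]

end IsBoundaryGromov

end Visual

/-! ### Quasiconformal measures -/

lemma eq_zero_of_forall_le_mul {a K : ℝ≥0∞} (hK : K ≠ ⊤) (h : ∀ e ≠ 0, a ≤ K * e) : a = 0 := by
  have hlim : Tendsto (fun e ↦ K * e) (𝓝[>] 0) (𝓝 (K * 0)) :=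
    ((ENNReal.continuous_const_mul hK).tendsto 0).mono_left nhdsWithin_le_nhds
  rw [mul_zero] at hlim
  refine nonpos_iff_eq_zero.1 (ge_of_tendsto hlim ?_)
  filter_upwards [self_mem_nhdsWithin] with e he using h e he.ne'

section Quasiconformal

variable {S : Finset G} {d : G → G → ℝ} {δ A : ℝ} {B : Type*} [MeasurableSpace B]
  {bd : BoundaryData G d B} {gp : B → G → ℝ} {ε C v : ℝ} {ρ : Measure B}

namespace IsQuasiconformalMeasure

lemma measure_eq_setLIntegral [SigmaFinite ρ] (hsmul : ∀ γ, Measurable (bd.smul γ))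
    (hqc : IsQuasiconformalMeasure bd ρ v) (x : G) {E : Set B} (hE : MeasurableSet E) :
    ρ E = ∫⁻ b in bd.smul x ⁻¹' E, (actPush bd x ρ).rnDeriv ρ b ∂ρ := by
  obtain ⟨_, _, hdens⟩ := hqc
  have : SFinite (actPush bd x ρ) := inferInstanceAs (SFinite (ρ.map _))
  rw [Measure.setLIntegral_rnDeriv' (hdens x).1 (hsmul x hE), actPush,
    Measure.map_apply (hsmul _) (hsmul x hE), ← preimage_comp]
  simp [Function.comp_def, bd.smul_inv_smul]

lemma exists_measure_le [SigmaFinite ρ] (hsmul : ∀ γ, Measurable (bd.smul γ))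
    (hqc : IsQuasiconformalMeasure bd ρ v) :
    ∃ c, 0 < c ∧ ∀ x E t, MeasurableSet E →
      (∀ b ∈ bd.smul x ⁻¹' E, v * busemann d bd 1 x⁻¹ b ≤ t) →
      ρ E ≤ ENNReal.ofReal (c * Real.exp t) * ρ (bd.smul x ⁻¹' E) := by
  obtain ⟨c, hc, hdens⟩ := id hqc
  refine ⟨c, hc, fun x E t hE ht ↦ ?_⟩
  rw [hqc.measure_eq_setLIntegral hsmul x hE, ← setLIntegral_const]
  refine setLIntegral_mono_ae' (hsmul x hE) ?_
  filter_upwards [(hdens x).2.2] with b hb hbE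
  refine hb.1.trans (ENNReal.ofReal_le_ofReal ?_)
  gcongr
  exact ht b hbE

lemma exists_le_measure [SigmaFinite ρ] (hsmul : ∀ γ, Measurable (bd.smul γ))
    (hqc : IsQuasiconformalMeasure bd ρ v) :
    ∃ c, 0 < c ∧ ∀ x E t, MeasurableSet E →
      (∀ b ∈ bd.smul x ⁻¹' E, t ≤ v * busemann d bd 1 x⁻¹ b) →
      ENNReal.ofReal (c⁻¹ * Real.exp t) * ρ (bd.smul x ⁻¹' E) ≤ ρ E := by
  obtain ⟨c, hc, hdens⟩ := id hqc
  refine ⟨c, hc, fun x E t hE ht ↦ ?_⟩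
  rw [hqc.measure_eq_setLIntegral hsmul x hE, ← setLIntegral_const]
  refine setLIntegral_mono_ae' (hsmul x hE) ?_
  filter_upwards [(hdens x).2.2] with b hb hbE
  refine (ENNReal.ofReal_le_ofReal ?_).trans hb.2
  gcongr
  exact ht b hbE

variable [MetricSpace B] [BorelSpace B] [IsFiniteMeasure ρ]

lemma exists_measure_shadow_le (hsmul : ∀ γ, Measurable (bd.smul γ))
    (hqc : IsQuasiconformalMeasure bd ρ v) (hv : 0 ≤ v) (hli : LeftInvariant d)
    (hgp : IsBoundaryGromov bd δ gp) (hvis : IsVisualMetric d bd ε C) (r : ℝ) :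
    ∃ K ≠ ⊤, ∀ x, ρ (shadow d gp ε C r x) ≤ K * ENNReal.ofReal (Real.exp (-(v * d 1 x))) := by
  obtain ⟨c, hc, hle⟩ := hqc.exists_measure_le hsmul
  refine ⟨ρ univ * ENNReal.ofReal (c * Real.exp (v * (2 * r + 12 * δ))),
    ENNReal.mul_ne_top (measure_ne_top _ _) ENNReal.ofReal_ne_top, fun x ↦ ?_⟩
  have hbus (b : B) (hb : b ∈ bd.smul x ⁻¹' shadow d gp ε C r x) :
      v * busemann d bd 1 x⁻¹ b ≤ v * (2 * r + 12 * δ) + -(v * d 1 x) := by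
    have : busemann d bd 1 x⁻¹ b ≤ 2 * r + 12 * δ - d 1 x := by
      linarith [hgp.busemann_inv_le hli b x, hgp.sub_le_of_mem_shadow hvis hb]
    linarith [mul_le_mul_of_nonneg_left this hv]
  calc ρ (shadow d gp ε C r x)
      ≤ ENNReal.ofReal (c * Real.exp (v * (2 * r + 12 * δ) + -(v * d 1 x))) *
          ρ (bd.smul x ⁻¹' shadow d gp ε C r x) :=
        hle x _ _ (isOpen_shadow r x).measurableSet hbus
    _ ≤ ENNReal.ofReal (c * Real.exp (v * (2 * r + 12 * δ) + -(v * d 1 x))) * ρ univ := by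
        gcongr
        exact subset_univ _
    _ = _ := by
        rw [Real.exp_add, ← mul_assoc, ENNReal.ofReal_mul (by positivity)]
        ring

lemma exists_measure_setOf_le_le (hsmul : ∀ γ, Measurable (bd.smul γ))
    (hqc : IsQuasiconformalMeasure bd ρ v) (hv : 0 ≤ v) (hS : WordComparable S d δ A)
    (hgp : IsBoundaryGromov bd δ gp) (hvis : IsVisualMetric d bd ε C) :
    ∃ K ≠ ⊤, ∀ y r, ρ {b | r ≤ gp b y} ≤ K * ENNReal.ofReal (Real.exp (-(v * r))) := by
  obtain ⟨r₀, hr₀⟩ := hgp.exists_forall_sub_le hS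
  obtain ⟨K, hK, hshadow⟩ := hqc.exists_measure_shadow_le hsmul hv hS.leftInvariant hgp hvis r₀
  refine ⟨K * ENNReal.ofReal (Real.exp (v * r₀)), ENNReal.mul_ne_top hK ENNReal.ofReal_ne_top,
    fun y r ↦ ?_⟩
  obtain hempty | ⟨b₀, hb₀⟩ := eq_empty_or_nonempty {b | r ≤ gp b y}
  · simp [hempty]
  obtain ⟨z, hz, hzb⟩ := hr₀ b₀ y r hb₀
  calc ρ {b | r ≤ gp b y} ≤ ρ (shadow d gp ε C r₀ z) :=
        measure_mono fun b hb ↦ mem_shadow_of_le hvis (hzb b hb)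
    _ ≤ K * ENNReal.ofReal (Real.exp (-(v * d 1 z))) := hshadow z
    _ ≤ K * ENNReal.ofReal (Real.exp (v * r₀) * Real.exp (-(v * r))) := by
        rw [← Real.exp_add]
        gcongr
        linarith [mul_le_mul_of_nonneg_left hz hv]
    _ = _ := by rw [ENNReal.ofReal_mul (Real.exp_pos _).le, mul_assoc]

lemma exists_half_le_measure_preimage_shadow (hsmul : ∀ γ, Measurable (bd.smul γ))
    (hqc : IsQuasiconformalMeasure bd ρ v) (hv : 0 < v) (hS : WordComparable S d δ A)
    (hgp : IsBoundaryGromov bd δ gp) (hvis : IsVisualMetric d bd ε C) {E : Set B}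
    (hinv : ∀ x, ∀ b ∈ E, bd.smul x b ∈ E) (hE : ρ E ≠ 0) :
    ∃ r₀, ∀ r ≥ r₀, ∀ x, ρ E / 2 ≤ ρ (bd.smul x ⁻¹' (shadow d gp ε C r x ∩ E)) := by
  obtain ⟨K, hK, hle⟩ := hqc.exists_measure_setOf_le_le hsmul hv.le hS hgp hvis
  have hlim : Tendsto (fun r ↦ K * ENNReal.ofReal (Real.exp (-(v * r)))) atTop (𝓝 0) := by
    have hexp : Tendsto (fun r ↦ Real.exp (-(v * r))) atTop (𝓝 0) :=
      Real.tendsto_exp_neg_atTop_nhds_zero.comp (tendsto_id.const_mul_atTop hv)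
    simpa using ENNReal.Tendsto.const_mul (ENNReal.tendsto_ofReal hexp) (.inr hK)
  obtain ⟨r₀, hr₀⟩ := eventually_atTop.1 (hlim.eventually_lt_const (ENNReal.half_pos hE))
  refine ⟨r₀ + 2 * δ, fun r hr x ↦ ?_⟩
  have hsub : E ⊆ bd.smul x ⁻¹' (shadow d gp ε C r x ∩ E) ∪ {b | r - 2 * δ ≤ gp b x⁻¹} := by
    intro b hb
    by_cases hx : d 1 x - r ≤ gp (bd.smul x b) x
    · exact .inl ⟨mem_shadow_of_le hvis hx, hinv x b hb⟩
    · exact .inr (by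
        simp only [mem_ofPred_eq]
        linarith [abs_le.1 (hgp.abs_smul_add_sub_le hS.leftInvariant b x)])
  have hsmall : ρ {b | r - 2 * δ ≤ gp b x⁻¹} ≤ ρ E / 2 :=
    (hle _ _).trans (hr₀ _ (by linarith)).le
  refine (ENNReal.add_le_add_iff_right
    (ENNReal.div_ne_top (measure_ne_top ρ E) two_ne_zero)).1 ?_
  calc ρ E / 2 + ρ E / 2 = ρ E := ENNReal.add_halves _
    _ ≤ ρ (bd.smul x ⁻¹' (shadow d gp ε C r x ∩ E)) + ρ {b | r - 2 * δ ≤ gp b x⁻¹} :=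
        (measure_mono hsub).trans (measure_union_le _ _)
    _ ≤ _ := by gcongr

lemma exists_exp_le_measure_shadow (hsmul : ∀ γ, Measurable (bd.smul γ))
    (hqc : IsQuasiconformalMeasure bd ρ v) (hv : 0 < v) (hS : WordComparable S d δ A)
    (hgp : IsBoundaryGromov bd δ gp) (hvis : IsVisualMetric d bd ε C) {E : Set B}
    (hEm : MeasurableSet E) (hinv : ∀ x, ∀ b ∈ E, bd.smul x b ∈ E) (hE : ρ E ≠ 0) :
    ∃ K ≠ ⊤, ∃ r₀, ∀ r ≥ r₀, ∀ x,
      ENNReal.ofReal (Real.exp (-(v * d 1 x))) ≤ K * ρ (shadow d gp ε C r x ∩ E) := by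
  obtain ⟨c, hc, hle⟩ := hqc.exists_le_measure hsmul
  obtain ⟨r₀, hr₀⟩ := hqc.exists_half_le_measure_preimage_shadow hsmul hv hS hgp hvis hinv hE
  have hE2 : ρ E / 2 ≠ ⊤ := ENNReal.div_ne_top (measure_ne_top ρ E) two_ne_zero
  refine ⟨(ρ E / 2)⁻¹ * ENNReal.ofReal (c * Real.exp (4 * v * δ)),
    ENNReal.mul_ne_top (ENNReal.inv_ne_top.2 (ENNReal.half_pos hE).ne') ENNReal.ofReal_ne_top, r₀,
    fun r hr x ↦ ?_⟩
  set D := bd.smul x ⁻¹' (shadow d gp ε C r x ∩ E)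
  have hbus (b : B) (_ : b ∈ D) : -(4 * v * δ) + -(v * d 1 x) ≤ v * busemann d bd 1 x⁻¹ b := by
    linarith [mul_le_mul_of_nonneg_left (hgp.neg_dist_le_busemann_inv hS.leftInvariant b x) hv.le]
  have hshadow := hle x _ _ ((isOpen_shadow r x).measurableSet.inter hEm) hbus
  calc ENNReal.ofReal (Real.exp (-(v * d 1 x)))
      = (ρ E / 2)⁻¹ * (ρ E / 2) * ENNReal.ofReal (c * Real.exp (4 * v * δ) *
          (c⁻¹ * Real.exp (-(4 * v * δ) + -(v * d 1 x)))) := by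
        rw [ENNReal.inv_mul_cancel (ENNReal.half_pos hE).ne' hE2, one_mul, Real.exp_add,
          Real.exp_neg (4 * v * δ)]
        congr 1
        field_simp
    _ = (ρ E / 2)⁻¹ * ENNReal.ofReal (c * Real.exp (4 * v * δ)) *
          (ENNReal.ofReal (c⁻¹ * Real.exp (-(4 * v * δ) + -(v * d 1 x))) * (ρ E / 2)) := by
        rw [ENNReal.ofReal_mul (by positivity)]
        ring
    _ ≤ _ := by
        gcongr
        exact (mul_le_mul_right (hr₀ r hr x) _).trans hshadow

end IsQuasiconformalMeasure

variable [MetricSpace B] [BorelSpace B] [Countable G] {E : Set B} {r : ℝ} {K : ℝ≥0∞}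

lemma exists_tsum_exp_le_measure (hgp : IsBoundaryGromov bd δ gp) (hvis : IsVisualMetric d bd ε C)
    (hEm : MeasurableSet E)
    (hE : ∀ x, ENNReal.ofReal (Real.exp (-(v * d 1 x))) ≤ K * ρ (shadow d gp ε C r x ∩ E))
    {A₀ : Set G} {U : Set B} (hU : ∀ x ∈ A₀, shadow d gp ε C r x ⊆ U) :
    ∃ A' ⊆ A₀, ∑' x : A', ENNReal.ofReal (Real.exp (-(v * d 1 (x : G)))) ≤ K * ρ (U ∩ E) ∧
      ∀ x ∈ A₀, ∃ x' ∈ A', d 1 x' ≤ d 1 x + 1 ∧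
        d 1 x' - (r + 1 + 5 * δ) ≤ gromov d 1 x x' := by
  have hne (x : G) : (shadow d gp ε C r x).Nonempty := by
    by_contra hempty
    have := hE x
    simp [not_nonempty_iff_eq_empty.1 hempty, (Real.exp_pos _).not_ge] at this
  obtain ⟨A', hA', hdisj, hcover⟩ :=
    hgp.exists_pairwiseDisjoint_shadow hvis A₀ fun x _ ↦ hne x
  refine ⟨A', hA', ?_, hcover⟩
  calc ∑' x : A', ENNReal.ofReal (Real.exp (-(v * d 1 (x : G))))
      ≤ ∑' x : A', K * ρ (shadow d gp ε C r x ∩ E) := ENNReal.tsum_le_tsum fun x ↦ hE x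
    _ = K * ρ (⋃ x ∈ A', shadow d gp ε C r x ∩ E) := by
        rw [ENNReal.tsum_mul_left, measure_biUnion (to_countable _)
          (hdisj.mono fun x ↦ inter_subset_left)
          fun x _ ↦ (isOpen_shadow r x).measurableSet.inter hEm]
    _ ≤ K * ρ (U ∩ E) := by
        gcongr
        exact iUnion₂_subset fun x hx ↦ inter_subset_inter_left E (hU x (hA' hx))

lemma IsQuasiconformalMeasure.exists_measure_le_mul_of_shadow_subset [IsFiniteMeasure ρ]
    (hsmul : ∀ γ, Measurable (bd.smul γ)) (hqc : IsQuasiconformalMeasure bd ρ v) (hv : 0 ≤ v)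
    (hS : WordComparable S d δ A) (hgp : IsBoundaryGromov bd δ gp)
    (hvis : IsVisualMetric d bd ε C) (hEm : MeasurableSet E) (hK : K ≠ ⊤)
    (hE : ∀ x, ENNReal.ofReal (Real.exp (-(v * d 1 x))) ≤ K * ρ (shadow d gp ε C r x ∩ E)) :
    ∃ K' ≠ ⊤, ∀ D U : Set B,
      (∀ b ∈ D, ∃ x, b ∈ shadow d gp ε C r x ∧ shadow d gp ε C r x ⊆ U) →
      ρ D ≤ K' * ρ (U ∩ E) := by
  obtain ⟨c, hc, hle⟩ := hqc.exists_measure_setOf_le_le hsmul hv hS hgp hvis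
  set s := r + 1 + 8 * δ
  refine ⟨c * ENNReal.ofReal (Real.exp (v * s)) * K,
    ENNReal.mul_ne_top (ENNReal.mul_ne_top hc ENNReal.ofReal_ne_top) hK, fun D U hD ↦ ?_⟩
  obtain ⟨A', -, hsum, hcover⟩ := exists_tsum_exp_le_measure hgp hvis hEm hE
    (A₀ := {x | shadow d gp ε C r x ⊆ U}) fun x hx ↦ hx
  have hsub : D ⊆ ⋃ x ∈ A', {b | d 1 x - s ≤ gp b x} := by
    intro b hb
    obtain ⟨x, hbx, hxU⟩ := hD b hb
    obtain ⟨x', hx', hdist, hgrom⟩ := hcover x hxU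
    have hgx := hgp.sub_le_of_mem_shadow hvis hbx
    refine mem_iUnion₂.2 ⟨x', hx', ?_⟩
    have := hgp.sub_le_of_le_gromov (b := b) (x := x') (y := x) (r := d 1 x' - (r + 1 + 5 * δ))
      (by linarith [hgp.delta_nonneg]) hgrom
    simp only [mem_ofPred_eq]
    linarith
  calc ρ D ≤ ∑' x : A', ρ {b | d 1 (x : G) - s ≤ gp b x} :=
        (measure_mono hsub).trans (measure_biUnion_le _ (to_countable _) _)
    _ ≤ ∑' x : A', c * ENNReal.ofReal (Real.exp (v * s)) *
          ENNReal.ofReal (Real.exp (-(v * d 1 (x : G)))) := by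
        refine ENNReal.tsum_le_tsum fun x ↦ (hle _ _).trans_eq ?_
        rw [mul_assoc, ← ENNReal.ofReal_mul (Real.exp_pos _).le, ← Real.exp_add]
        ring_nf
    _ ≤ c * ENNReal.ofReal (Real.exp (v * s)) * (K * ρ (U ∩ E)) := by
        rw [ENNReal.tsum_mul_left]
        gcongr
    _ = _ := by ring

lemma IsQuasiconformalMeasure.measure_compl_eq_zero_of_invariant [IsFiniteMeasure ρ]
    (hsmul : ∀ γ, Measurable (bd.smul γ)) (hqc : IsQuasiconformalMeasure bd ρ v) (hv : 0 < v)
    (hS : WordComparable S d δ A) (hgp : IsBoundaryGromov bd δ gp)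
    (hvis : IsVisualMetric d bd ε C) (hEm : MeasurableSet E)
    (hinv : ∀ x, ∀ b ∈ E, bd.smul x b ∈ E) (hE : ρ E ≠ 0) : ρ Eᶜ = 0 := by
  obtain ⟨K, hK, r₁, hr₁⟩ := hqc.exists_exp_le_measure_shadow hsmul hv hS hgp hvis hEm hinv hE
  obtain ⟨r₂, hray⟩ := hgp.exists_forall_exists_sub_le hS
  obtain ⟨K', hK', hle⟩ := hqc.exists_measure_le_mul_of_shadow_subset hsmul hv.le hS hgp hvis hEm hK
    (hr₁ (max r₁ r₂) (le_max_left _ _))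
  refine eq_zero_of_forall_le_mul hK' fun η hη ↦ ?_
  obtain ⟨U, hEU, hU, -, hUη⟩ :=
    hEm.compl.exists_isOpen_sdiff_lt (μ := ρ) (measure_ne_top _ _) hη
  have hUE : U ∩ E = U \ Eᶜ := by rw [sdiff_compl]
  refine (hle Eᶜ U fun b hb ↦ ?_).trans (mul_le_mul_right (hUE ▸ hUη.le) _)
  obtain ⟨R, hR⟩ := hgp.exists_shadow_subset_of_isOpen hvis hU (hEU hb) (max r₁ r₂)
  obtain ⟨x, hRx, hx⟩ := hray b R
  have hxb : d 1 x - max r₁ r₂ ≤ gp b x := by linarith [le_max_right r₁ r₂]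
  exact ⟨x, mem_shadow_of_le hvis hxb, hR x hRx hxb⟩

end Quasiconformal

/-! ### Comparison of the harmonic measure with a quasiconformal measure -/

section Integrals

variable {Ω : Type*} [MeasurableSpace Ω] {P : Measure Ω}

lemma measure_lt_le_of_integral_le {f : Ω → ℝ} (hf : Integrable f P) {a b M : ℝ}
    (ha : ∫ ω, f ω ∂P ≤ a) (hb : 0 ≤ b)
    (hneg : ∫⁻ ω, ENNReal.ofReal (-f ω) ∂P ≤ ENNReal.ofReal b) (hM : 0 < M) :
    P {ω | M < f ω} ≤ ENNReal.ofReal ((a + b) / M) := by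
  have hpos : (∫⁻ ω, ENNReal.ofReal (f ω) ∂P).toReal ≤ a + b := by
    have hsplit := integral_eq_lintegral_pos_part_sub_lintegral_neg_part hf
    have := ENNReal.toReal_le_of_le_ofReal hb hneg
    linarith
  have hmarkov := meas_ge_le_lintegral_div hf.aemeasurable.ennreal_ofReal
    (ENNReal.ofReal_pos.2 hM).ne' ENNReal.ofReal_ne_top
  calc P {ω | M < f ω}
    _ ≤ P {ω | ENNReal.ofReal M ≤ ENNReal.ofReal (f ω)} :=
      measure_mono fun ω hω ↦ ENNReal.ofReal_le_ofReal (le_of_lt hω)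
    _ ≤ (∫⁻ ω, ENNReal.ofReal (f ω) ∂P) / ENNReal.ofReal M := hmarkov
    _ ≤ ENNReal.ofReal ((a + b) / M) := by
      rw [ENNReal.ofReal_div_of_pos hM]
      gcongr
      exact (ENNReal.le_ofReal_iff_toReal_le hf.lintegral_lt_top.ne
        (ENNReal.toReal_nonneg.trans hpos)).2 hpos

lemma exists_forall_measure_lt_le {ι : Type*} {f : ι → Ω → ℝ} (hf : ∀ i, Measurable (f i))
    (hint : ∀ i, Integrable (f i) P) {a : ℝ} (ha : ∀ i, ∫ ω, f i ω ∂P ≤ a) {c : ℝ≥0∞}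
    (hc : c ≠ ⊤) (hleft : ∀ i t, P {ω | f i ω ≤ t} ≤ c * ENNReal.ofReal (Real.exp t))
    {e : ℝ≥0∞} (he : e ≠ 0) : ∃ M, ∀ i, P {ω | M < f i ω} ≤ e := by
  have hneg : ∀ i, ∫⁻ ω, ENNReal.ofReal (-f i ω) ∂P ≤ ENNReal.ofReal c.toReal := fun i ↦
    lintegral_ofReal_le_of_measure_le_exp (hf i).neg ENNReal.toReal_nonneg fun r _ ↦ by
      rw [ENNReal.ofReal_mul ENNReal.toReal_nonneg, ENNReal.ofReal_toReal hc]
      simpa only [le_neg] using hleft i (-r)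
  have hlim : Tendsto (fun M ↦ ENNReal.ofReal ((a + c.toReal) / M)) atTop (𝓝 0) := by
    simpa using ENNReal.tendsto_ofReal (tendsto_const_nhds.div_atTop tendsto_id)
  obtain ⟨M, hMe, hM⟩ :=
    ((hlim.eventually (ge_mem_nhds he.bot_lt)).and (eventually_gt_atTop 0)).exists
  exact ⟨M, fun i ↦ (measure_lt_le_of_integral_le (hint i) (ha i) ENNReal.toReal_nonneg
    (hneg i) hM).trans hMe⟩

lemma measure_le_of_ae_eventually_mem {E : Set Ω} {F : ℕ → Set Ω} {a : ℝ≥0∞}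
    (h : ∀ᵐ ω ∂P, ω ∈ E → ∀ᶠ n in atTop, ω ∈ F n) (hF : ∀ n, P (F n) ≤ a) : P E ≤ a := by
  have hmono : Monotone fun k ↦ ⋂ n ≥ k, F n := fun k k' hk ↦
    biInter_subset_biInter_left fun n hn ↦ hk.trans hn
  calc P E
    _ ≤ P (⋃ k, ⋂ n ≥ k, F n) := measure_mono_ae <| by
      filter_upwards [h] with ω hω hE
      obtain ⟨k, hk⟩ := eventually_atTop.1 (hω hE)
      exact mem_iUnion.2 ⟨k, mem_iInter₂.2 hk⟩
    _ = ⨆ k, P (⋂ n ≥ k, F n) := hmono.measure_iUnion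
    _ ≤ a := iSup_le fun k ↦ (measure_mono (biInter_subset_of_mem le_rfl)).trans (hF k)

lemma exists_isOpen_superset_mul_measure_le {B : Type*} [MetricSpace B] [MeasurableSpace B]
    [BorelSpace B] {ρ : Measure B} [IsFiniteMeasure ρ] {N : Set B} (hN : ρ N = 0) {K e : ℝ≥0∞}
    (hK : K ≠ ⊤) (he : e ≠ 0) : ∃ U ⊇ N, IsOpen U ∧ K * ρ U ≤ e := by
  obtain ⟨U, hNU, hU, hρU⟩ := N.exists_isOpen_le_add ρ (ENNReal.div_ne_zero.2 ⟨he, hK⟩)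
  rw [hN, zero_add] at hρU
  exact ⟨U, hNU, hU, (mul_le_mul_right hρU K).trans ENNReal.mul_div_le⟩

end Integrals

section Limit

variable {d g : G → G → ℝ} {B : Type*}

lemma BoundaryData.eq_smul_of_conv_walkPos (bd : BoundaryData G d B) {ω : ℕ → G} {b b' : B} {n : ℕ}
    (hb : bd.conv (fun m ↦ walkPos m ω) b) (hb' : bd.conv (fun m ↦ walkPos m (shift n ω)) b') :
    b = bd.smul (walkPos n ω) b' := by
  have h := bd.smul_conv (walkPos n ω) _ _ hb'
  simp only [← walkPos_add] at h
  exact bd.conv_unique _ _ _ (bd.conv_comp_add hb n) h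

variable [MeasurableSpace G] {μ : G → ℝ} {P : Measure (ℕ → G)}

lemma IsGreenWalk.exists_measure_walkPos_ne_zero (hG : IsGreenWalk μ P g) (x : G) :
    ∃ n, P {ω | walkPos n ω = x} ≠ 0 := by
  by_contra! hzero
  refine (expNeg_pos g 1 x).ne' ?_
  rw [← hG.measure_hit_eq]
  simp only [one_mul, ofPred_exists]
  exact measure_iUnion_null hzero

variable [Countable G] [MeasurableSingletonClass G]

lemma IsGreenWalk.exists_forall_measure_dist_sub_lt_le (hG : IsGreenWalk μ P g)
    (hm : IsMetricFun d) (hli : LeftInvariant d)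
    (hmom : FiniteFirstMoment d μ) (hmomg : FiniteFirstMoment g μ) {v a : ℝ}
    (ha : ∀ n, v * meanDist P d n ≤ meanDist P g n + a) {c : ℝ≥0∞} (hc : c ≠ ⊤)
    (hit : ∀ (A₀ : Set G) (M : ℝ), (∀ x ∈ A₀, v * d 1 x - g 1 x ≤ M) →
      P {ω | ∃ n, walkPos n ω ∈ A₀} ≤ c * ENNReal.ofReal (Real.exp M)) {e : ℝ≥0∞} (he : e ≠ 0) :
    ∃ M, ∀ n, P {ω | M < v * d 1 (walkPos n ω) - g 1 (walkPos n ω)} ≤ e := by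
  have hP := hG.isWalkMeasure
  have hintd n := (hP.integrable_dist_walkPos hm hli hmom n).const_mul v
  have hintg := hP.integrable_dist_walkPos hG.isMetricFun hG.leftInvariant hmomg
  refine exists_forall_measure_lt_le (a := a)
    (measurable_comp_walkPos fun x ↦ v * d 1 x - g 1 x) (fun n ↦ (hintd n).sub (hintg n))
    (fun n ↦ ?_) hc (fun n t ↦ ?_) he
  · rw [integral_sub (hintd n) (hintg n), integral_const_mul]
    exact sub_le_iff_le_add'.2 (ha n)
  · refine (measure_mono fun ω hω ↦ ?_).trans (hit {x | v * d 1 x - g 1 x ≤ t} t fun x hx ↦ hx)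
    exact ⟨n, hω⟩

variable [MeasurableSpace B] {bd : BoundaryData G d B} {Zinf : (ℕ → G) → B}

lemma IsGreenWalk.measure_preimage_smul_eq_zero (hG : IsGreenWalk μ P g) (hZ : Measurable Zinf)
    (hsmul : ∀ γ, Measurable (bd.smul γ)) (hconv : ∀ᵐ ω ∂P, bd.conv (fun n ↦ walkPos n ω) (Zinf ω))
    {N : Set B} (hN : MeasurableSet N) (hN0 : P (Zinf ⁻¹' N) = 0) (x : G) :
    P (Zinf ⁻¹' (bd.smul x ⁻¹' N)) = 0 := by
  have hP := hG.isWalkMeasure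
  obtain ⟨n, hn⟩ := hG.exists_measure_walkPos_ne_zero x
  refine (mul_eq_zero.1 ?_).resolve_left hn
  rw [← hP.measure_walkPos_eq_inter n x (hZ (hsmul x hN))]
  refine measure_mono_null_ae ?_ hN0
  filter_upwards [hconv, (hP.measurePreserving_shift n).quasiMeasurePreserving.ae hconv]
    with ω hω hshift hmem
  change Zinf ω ∈ N
  rw [bd.eq_smul_of_conv_walkPos hω hshift, hmem.1]
  exact hmem.2

end Limit

section Harmonic

variable {d g : G → G → ℝ} {δ : ℝ} {B : Type*} [MetricSpace B] {bd : BoundaryData G d B}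
  {gp : B → G → ℝ} {ε C v K' r : ℝ}

lemma IsBoundaryGromov.eventually_shadow_subset (hgp : IsBoundaryGromov bd δ gp)
    (hvis : IsVisualMetric d bd ε C) (hli : LeftInvariant g) (hK' : 0 ≤ K')
    (hcmp : ∀ x y z, gromov d z x y ≤ K' * gromov g z x y + K') {t : ℝ}
    (hr : K' * t + K' + δ ≤ r) {ω : ℕ → G} {b : B} (hω : bd.conv (fun n ↦ walkPos n ω) b)
    {U : Set B} (hU : IsOpen U) (hb : b ∈ U) :
    ∀ᶠ n in atTop, shift n ω ∈ noBacktrack g t (walkPos n ω) →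
      shadow d gp ε C r (walkPos n ω) ⊆ U := by
  obtain ⟨R, hR⟩ := hgp.exists_shadow_subset_of_isOpen hvis hU hb r
  have hdist := bd.tendsto_dist_of_conv hgp.isMetricFun hω
  filter_upwards [hdist.eventually_ge_atTop R] with n hn hback
  refine hR _ hn ?_
  have hgrom : ∀ m, gromov d (walkPos n ω) (walkPos (n + m) ω) 1 ≤ K' * t + K' := fun m ↦ by
    have hlt := hback m
    rw [← hli.gromov_mul (walkPos n ω), mul_one, mul_inv_cancel, ← walkPos_add] at hlt
    linarith [hcmp (walkPos (n + m) ω) 1 (walkPos n ω), mul_le_mul_of_nonneg_left hlt.le hK']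
  linarith [hgp.sub_le_of_forall_gromov_le hω hgrom]

variable [Countable G] [MeasurableSpace G] [MeasurableSingletonClass G]
variable {μ : G → ℝ} {P : Measure (ℕ → G)}

lemma IsWalkMeasure.measure_shift_mem_le (hP : IsWalkMeasure μ P) (n : ℕ)
    {E : G → Set (ℕ → G)} (hE : ∀ x, MeasurableSet (E x)) {e : ℝ≥0∞} (h : ∀ x, P (E x) ≤ e) :
    P {ω | shift n ω ∈ E (walkPos n ω)} ≤ e := by
  have := hP.1
  rw [hP.measure_shift_mem n hE]
  calc ∑' x, P {ω | walkPos n ω = x} * P (E x)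
    _ ≤ ∑' x, P {ω | walkPos n ω = x} * e := ENNReal.tsum_le_tsum fun x ↦ by gcongr; exact h x
    _ = e := by rw [ENNReal.tsum_mul_right, tsum_measure_walkPos_eq, one_mul]

lemma IsGreenWalk.measure_exists_gromov_le (hG : IsGreenWalk μ P g) (x : G) (t : ℝ) :
    P {ω | ∃ n, gromov g x 1 (walkPos n ω) ≤ t} ≤
      (P noReturn)⁻¹ * ENNReal.ofReal (Real.exp (2 * t)) * expNeg g 1 x := by
  refine (measure_mono ?_).trans
    (hG.measure_exists_mem_le {z | g 1 x + g x z - 2 * t ≤ g 1 z} 1 x (2 * t) fun z hz ↦ hz)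
  rintro ω ⟨n, hn⟩
  rw [gromov, hG.isMetricFun.symm (walkPos n ω) x] at hn
  refine ⟨n, ?_⟩
  rw [one_mul, mem_ofPred_eq]
  linarith

variable [MeasurableSpace B] [BorelSpace B] {ρ : Measure B}

lemma IsGreenWalk.exists_measure_exists_mem_le (hG : IsGreenWalk μ P g)
    (hgp : IsBoundaryGromov bd δ gp) (hvis : IsVisualMetric d bd ε C) (hK' : 0 ≤ K')
    (hcmp : ∀ x y z, gromov g z x y ≤ K' * gromov d z x y + K') {K : ℝ≥0∞} (hK : K ≠ ⊤)
    (hlow : ∀ x, ENNReal.ofReal (Real.exp (-(v * d 1 x))) ≤ K * ρ (shadow d gp ε C r x)) :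
    ∃ c ≠ ⊤, ∀ (A₀ : Set G) (U : Set B) (M : ℝ), (∀ x ∈ A₀, shadow d gp ε C r x ⊆ U) →
      (∀ x ∈ A₀, v * d 1 x - g 1 x ≤ M) →
      P {ω | ∃ n, walkPos n ω ∈ A₀} ≤ c * ENNReal.ofReal (Real.exp M) * ρ U := by
  set t := K' * (r + 1 + 5 * δ) + K'
  refine ⟨(P noReturn)⁻¹ * ENNReal.ofReal (Real.exp (2 * t)) * K, ENNReal.mul_ne_top
    (ENNReal.mul_ne_top (ENNReal.inv_ne_top.2 hG.noReturn_pos.ne') ENNReal.ofReal_ne_top) hK,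
    fun A₀ U M hU hM ↦ ?_⟩
  obtain ⟨A', hA', hsum, hcover⟩ := exists_tsum_exp_le_measure (E := univ) hgp hvis .univ
    (by simpa only [inter_univ] using hlow) hU
  rw [inter_univ] at hsum
  have hsub : {ω : ℕ → G | ∃ n, walkPos n ω ∈ A₀} ⊆
      ⋃ x ∈ A', {ω | ∃ n, gromov g x 1 (walkPos n ω) ≤ t} := by
    rintro ω ⟨n, hn⟩
    obtain ⟨x, hx, -, hgrom⟩ := hcover _ hn
    have hadd := hgp.isMetricFun.gromov_add_gromov 1 x (walkPos n ω)
    rw [hgp.isMetricFun.gromov_comm 1 x] at hadd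
    exact mem_iUnion₂.2 ⟨x, hx, n, (hcmp 1 (walkPos n ω) x).trans (add_le_add_left
      (mul_le_mul_of_nonneg_left (by linarith) hK') K')⟩
  have hexp : ∀ x ∈ A', expNeg g 1 x ≤
      ENNReal.ofReal (Real.exp M) * ENNReal.ofReal (Real.exp (-(v * d 1 x))) := fun x hx ↦ by
    rw [← ENNReal.ofReal_mul (Real.exp_pos _).le, ← Real.exp_add]
    exact ENNReal.ofReal_le_ofReal (Real.exp_le_exp.2 (by linarith [hM x (hA' hx)]))
  calc P {ω | ∃ n, walkPos n ω ∈ A₀}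
    _ ≤ ∑' x : A', P {ω | ∃ n, gromov g x 1 (walkPos n ω) ≤ t} :=
      (measure_mono hsub).trans (measure_biUnion_le _ (to_countable _) _)
    _ ≤ ∑' x : A', (P noReturn)⁻¹ * ENNReal.ofReal (Real.exp (2 * t)) *
          (ENNReal.ofReal (Real.exp M) * ENNReal.ofReal (Real.exp (-(v * d 1 (x : G))))) :=
      ENNReal.tsum_le_tsum fun x ↦ (hG.measure_exists_gromov_le x t).trans
        (mul_le_mul_right (hexp x x.2) _)
    _ ≤ (P noReturn)⁻¹ * ENNReal.ofReal (Real.exp (2 * t)) *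
          (ENNReal.ofReal (Real.exp M) * (K * ρ U)) := by
      rw [ENNReal.tsum_mul_left, ENNReal.tsum_mul_left]
      gcongr
    _ = (P noReturn)⁻¹ * ENNReal.ofReal (Real.exp (2 * t)) * K *
          ENNReal.ofReal (Real.exp M) * ρ U := by
      ring

variable [IsFiniteMeasure ρ] {Zinf : (ℕ → G) → B}

/-- At time `n` the point `x = Zₙ` has, up to a small probability, `v d(1, x) - g(1, x)` bounded and
the limit of the walk in its shadow; a set of such `x` with shadows in `U` is hit with probability
at most a constant times `ρ U`. -/
theorem IsGreenWalk.map_absolutelyContinuous (hG : IsGreenWalk μ P g)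
    (hSd : WordComparable S d δ A) (hSg : WordComparable S g δ' A') (hgp : IsBoundaryGromov bd δ gp)
    (hvis : IsVisualMetric d bd ε C) (hsmul : ∀ γ, Measurable (bd.smul γ))
    (hqc : IsQuasiconformalMeasure bd ρ v) (hv : 0 < v) (hρ : ρ ≠ 0) {a : ℝ}
    (ha : ∀ n, v * meanDist P d n ≤ meanDist P g n + a) (hZ : Measurable Zinf)
    (hconv : ∀ᵐ ω ∂P, bd.conv (fun n ↦ walkPos n ω) (Zinf ω)) : P.map Zinf ≪ ρ := by
  obtain ⟨K₁, hK₁, hdg⟩ := hSd.exists_gromov_le_mul_gromov hSg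
  obtain ⟨K₂, hK₂, hgd⟩ := hSg.exists_gromov_le_mul_gromov hSd
  obtain ⟨K, hK, r₀, hlow⟩ := hqc.exists_exp_le_measure_shadow hsmul hv hSd hgp hvis .univ
    (fun _ _ _ ↦ mem_univ _) (by simpa using hρ)
  simp only [inter_univ] at hlow
  refine .mk fun N hN hN0 ↦ ?_
  rw [Measure.map_apply hZ hN]
  refine eq_zero_of_forall_le_mul (K := 3) (by simp) fun e he ↦ ?_
  obtain ⟨t, -, hback⟩ := hG.exists_measure_noBacktrack_compl_le hSg he
  set r := max r₀ (K₁ * t + K₁ + δ)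
  obtain ⟨c, hc, hit⟩ := hG.exists_measure_exists_mem_le hgp hvis (zero_le_one.trans hK₂) hgd hK
    (hlow r (le_max_left _ _))
  obtain ⟨M, hM⟩ := hG.exists_forall_measure_dist_sub_lt_le hSd.isMetricFun hSd.leftInvariant
    (hG.finiteFirstMoment hSg hSd) (hG.finiteFirstMoment hSg hSg) ha
    (ENNReal.mul_ne_top hc (measure_ne_top ρ univ))
    (fun A₀ M hA₀ ↦ (hit A₀ univ M (fun _ _ ↦ subset_univ _) hA₀).trans_eq
      (mul_right_comm _ _ _)) he
  obtain ⟨U, hNU, hU, hρU⟩ := exists_isOpen_superset_mul_measure_le hN0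
    (ENNReal.mul_ne_top hc (ENNReal.ofReal_ne_top (r := Real.exp M))) he
  set hits : Set (ℕ → G) :=
    {ω | ∃ n, walkPos n ω ∈ {x | shadow d gp ε C r x ⊆ U ∧ v * d 1 x - g 1 x ≤ M}}
  have hhits : P hits ≤ e := (hit _ U M (fun x hx ↦ hx.1) fun x hx ↦ hx.2).trans hρU
  refine measure_le_of_ae_eventually_mem (F := fun n ↦ hits ∪
    {ω | shift n ω ∈ (noBacktrack g t (walkPos n ω))ᶜ} ∪
    {ω | M < v * d 1 (walkPos n ω) - g 1 (walkPos n ω)}) ?_ fun n ↦ ?_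
  · filter_upwards [hconv] with ω hω hωN
    filter_upwards [hgp.eventually_shadow_subset hvis hSg.leftInvariant (zero_le_one.trans hK₁) hdg
      (le_max_right r₀ _) hω hU (hNU hωN)] with n hn
    by_cases hω' : shift n ω ∈ noBacktrack g t (walkPos n ω)
    · exact (le_or_gt _ M).imp (fun hle ↦ Or.inl ⟨n, hn hω', hle⟩) id
    · exact Or.inl (Or.inr hω')
  · have hshift := hG.isWalkMeasure.measure_shift_mem_le n
      (fun x ↦ (measurableSet_noBacktrack g t x).compl) hback
    calc _ ≤ e + e + e := (measure_union_le _ _).trans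
          (add_le_add ((measure_union_le _ _).trans (add_le_add hhits hshift)) (hM n))
      _ = 3 * e := by ring

theorem IsGreenWalk.absolutelyContinuous_map (hG : IsGreenWalk μ P g)
    (hSd : WordComparable S d δ A) (hgp : IsBoundaryGromov bd δ gp)
    (hvis : IsVisualMetric d bd ε C) (hsmul : ∀ γ, Measurable (bd.smul γ))
    (hqc : IsQuasiconformalMeasure bd ρ v) (hv : 0 < v) (hZ : Measurable Zinf)
    (hconv : ∀ᵐ ω ∂P, bd.conv (fun n ↦ walkPos n ω) (Zinf ω)) (hac : P.map Zinf ≪ ρ) :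
    ρ ≪ P.map Zinf := by
  have := hG.isWalkMeasure.1
  refine .mk fun N hN hN0 ↦ ?_
  rw [Measure.map_apply hZ hN] at hN0
  by_contra hne
  set E : Set B := ⋃ x, bd.smul x ⁻¹' N
  have hEm : MeasurableSet E := .iUnion fun x ↦ hsmul x hN
  have hinv : ∀ x, ∀ b ∈ E, bd.smul x b ∈ E := fun x b hb ↦ by
    obtain ⟨y, hy⟩ := mem_iUnion.1 hb
    refine mem_iUnion.2 ⟨y * x⁻¹, ?_⟩
    rwa [mem_preimage, bd.mul_smul, bd.inv_smul_smul]
  have hNE : N ⊆ E := fun b hb ↦ mem_iUnion.2 ⟨1, by rwa [mem_preimage, bd.one_smul]⟩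
  have hρE : ρ Eᶜ = 0 := hqc.measure_compl_eq_zero_of_invariant hsmul hv hSd hgp hvis hEm hinv
    fun h ↦ hne (measure_mono_null hNE h)
  have hPE : P (Zinf ⁻¹' E) = 0 := by
    rw [preimage_iUnion]
    exact measure_iUnion_null (hG.measure_preimage_smul_eq_zero hZ hsmul hconv hN hN0)
  have hPEc := hac hρE
  rw [Measure.map_apply hZ hEm.compl, preimage_compl, prob_compl_eq_zero_iff (hZ hEm), hPE] at hPEc
  exact zero_ne_one hPEc

end Harmonic

section MaximalDimension

lemma HasGrowth.nonneg {d : G → G → ℝ} {v : ℝ} (hv : HasGrowth d v) : 0 ≤ v := by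
  rw [← hv, limsup_eq]
  refine Real.sInf_nonneg fun a ha ↦ ?_
  obtain ⟨R, hle, hR⟩ := (ha.and (eventually_ge_atTop 0)).exists
  exact (div_nonneg (Real.log_natCast_nonneg _) hR).trans hle

/-- An infinite ball has `Nat.card` equal to zero, so that the growth is `0` if there is one. -/
lemma HasGrowth.finite_setOf_le {d : G → G → ℝ} {v : ℝ} (hv : HasGrowth d v) (h0 : v ≠ 0) (R : ℝ) :
    {x | d 1 x ≤ R}.Finite := by
  contrapose! h0
  have hzero : (fun r : ℝ ↦ Real.log (Nat.card {x : G // d 1 x ≤ r}) / r) =ᶠ[atTop] 0 := by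
    filter_upwards [eventually_ge_atTop R] with r hr
    have : Infinite {x // d 1 x ≤ r} := (h0.mono fun x hx ↦ le_trans hx hr).to_subtype
    simp
  rw [← hv, limsup_congr hzero]
  exact limsup_const 0

variable [Countable G] [MeasurableSpace G] [MeasurableSingletonClass G]
variable {μ : G → ℝ} {P : Measure (ℕ → G)} {d g : G → G → ℝ} {S : Finset G} {δ A δ' A' h l v : ℝ}

lemma IsGreenWalk.exists_mul_meanDist_le (hG : IsGreenWalk μ P g) (hSg : WordComparable S g δ' A')
    (hSd : WordComparable S d δ A) (hv : 0 ≤ v) (hent : HasEntropy μ h)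
    (hdrift : ∀ᵐ ω ∂P, Tendsto (fun n : ℕ ↦ d 1 (walkPos n ω) / n) atTop (𝓝 l))
    (heq : h = l * v) : ∃ a, ∀ n, v * meanDist P d n ≤ meanDist P g n + a := by
  obtain ⟨K, hK, hdg⟩ := hSd.exists_gromov_le_mul_gromov hSg
  have hmomd := hG.finiteFirstMoment hSg hSd
  obtain ⟨a, ha⟩ := hG.exists_meanDist_le hSg hSd.isMetricFun hSd.leftInvariant hmomd
    (zero_le_one.trans hK) hdg
    (hG.isWalkMeasure.tendsto_meanDist_div hSd.isMetricFun hSd.leftInvariant hmomd hdrift)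
  refine ⟨v * a, fun n ↦ ?_⟩
  have hge : n * h ≤ meanDist P g n := mul_le_of_subadditive_of_tendsto
    (hG.isWalkMeasure.subadditive_meanDist hG.isMetricFun hG.leftInvariant
      (hG.finiteFirstMoment hSg hSg)) (meanDist_nonneg hG.isMetricFun 0)
    (hG.tendsto_meanDist_div_of_hasEntropy hSg hent) n
  calc
    v * meanDist P d n ≤ v * (n * l + a) := mul_le_mul_of_nonneg_left (ha n) hv
    _ = n * h + v * a := by rw [heq]; ring
    _ ≤ meanDist P g n + v * a := by gcongr

theorem maximal_dimension_implies_equivalent_general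
    (hd : MemD d) (hprob : IsProbDensity μ) (hsymm : IsSymmetric μ) (hDG : MemD (greenDist μ))
    {B : Type*} [MetricSpace B] [MeasurableSpace B] [BorelSpace B]
    {bd : BoundaryData G d B} (hsmul : ∀ γ : G, Measurable (bd.smul γ))
    {ε C : ℝ} (hvis : IsVisualMetric d bd ε C)
    {ν : Measure B} (hharm : IsHarmonicMeasure d bd μ P ν)
    {ρ : Measure B} [IsFiniteMeasure ρ] (hρ : ρ ≠ 0)
    (hv : HasGrowth d v) (hqc : IsQuasiconformalMeasure bd ρ v) (hent : HasEntropy μ h)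
    (hdrift : ∀ᵐ ω ∂P, Tendsto (fun n : ℕ ↦ d 1 (walkPos n ω) / n) atTop (𝓝 l))
    (heq : h = l * v) :
    ν ≪ ρ ∧ ρ ≪ ν := by
  obtain ⟨hP, Zinf, hZ, hconv, rfl⟩ := hharm
  have : NeZero ρ := ⟨hρ⟩
  have := bd.nontrivial ρ.nonempty_of_neZero.some
  have hG := hP.isGreenWalk_greenDist hprob.1 hsymm hDG.1 hDG.2.1
  obtain ⟨S, hS, -⟩ := hDG.2.2.2
  obtain ⟨δ', A', hSg⟩ := hDG.exists_wordComparable hS hG.finite_setOf_le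
  have hv0 : v ≠ 0 := right_ne_zero_of_mul (heq ▸ (hG.entropy_pos hSg hent).ne')
  have hvpos : 0 < v := hv.nonneg.lt_of_ne' hv0
  obtain ⟨δ, A, hSd⟩ := hd.exists_wordComparable hS (hv.finite_setOf_le hv0)
  obtain ⟨gp, hgp⟩ := exists_isBoundaryGromov hSd.isMetricFun hSd.isHyperbolicWith
    hSd.delta_nonneg bd
  obtain ⟨a, ha⟩ := hG.exists_mul_meanDist_le hSg hSd hvpos.le hent hdrift heq
  have hac := hG.map_absolutelyContinuous hSd hSg hgp hvis hsmul hqc hvpos hρ ha hZ hconv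
  exact ⟨hac, hG.absolutelyContinuous_map hSd hgp hvis hsmul hqc hvpos hZ hconv hac⟩

end MaximalDimension

/-- **Proposition 5.1.**  If `h = ℓ v` (entropy = rate of escape × logarithmic volume
growth), then the harmonic measure `ν` and any quasiconformal measure `ρ` on `(∂X,d_ε)`
are equivalent. -/
theorem maximal_dimension_implies_equivalent
    {G : Type*} [Group G] [Countable G] [MeasurableSpace G] [MeasurableSingletonClass G]
    (hG : NonElemHyperbolic G)
    (d : G → G → ℝ) (hd : MemD d)
    (μ : G → ℝ) (hprob : IsProbDensity μ) (hsymm : IsSymmetric μ) (hgen : GeneratesSupp μ)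
    (hexp : HasExpMoment d μ)
    (hDG : MemD (greenDist μ))
    {B : Type*} [MetricSpace B] [MeasurableSpace B] [BorelSpace B]
    (bd : BoundaryData G d B) (hsmul : ∀ γ : G, Measurable (bd.smul γ))
    (ε C : ℝ) (hvis : IsVisualMetric d bd ε C)
    (P : Measure (ℕ → G)) (ν : Measure B) (hharm : IsHarmonicMeasure d bd μ P ν)
    (ρ : Measure B) [IsFiniteMeasure ρ] (hρ : ρ ≠ 0)
    (v : ℝ) (hv : HasGrowth d v) (hqc : IsQuasiconformalMeasure bd ρ v)
    (h l : ℝ) (hent : HasEntropy μ h)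
    (hdrift : ∀ᵐ ω ∂P, Tendsto (fun n : ℕ => d 1 (walkPos n ω) / n) atTop (𝓝 l))
    (heq : h = l * v) :
    ν ≪ ρ ∧ ρ ≪ ν :=
  maximal_dimension_implies_equivalent_general hd hprob hsymm hDG hsmul hvis hharm hρ hv hqc hent
    hdrift heq

end GHM
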